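/- Suppose λ < 0. Then for every θ ∈ ℝ and every E ∈ σ(H_{α,θ,b}): L(E) > 0 if and only if αE < −2(1−|λ|), and L(E) = 0 if and only if αE ≥ −2(1−|λ|). -/

import Mathlib

open scoped Real

/-- The quasi-periodic potential `v(x) = 2λcos(2πx)/(1 - αcos(2πx))`. -/
noncomputable def potV (α lam : ℝ) (x : ℝ) : ℝ :=
  2 * lam * Real.cos (2 * Real.pi * x) / (1 - α * Real.cos (2 * Real.pi * x))

/-- One-step transfer matrix `A(x,z) = [[z - V x, -1],[1,0]]`. -/
noncomputable def tMat (V : ℝ → ℝ) (x : ℝ) (z : ℂ) : Matrix (Fin 2) (Fin 2) ℂ :=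
  !![z - (V x : ℝ), -1; 1, 0]

/-- The `n`-step transfer matrix `A_n(x,z) = A(x+(n-1)b,z) ⋯ A(x+b,z) A(x,z)`. -/
noncomputable def tProd (V : ℝ → ℝ) (b : ℝ) (n : ℕ) (x : ℝ) (z : ℂ) :
    Matrix (Fin 2) (Fin 2) ℂ :=
  (((List.range n).reverse).map (fun j => tMat V (x + (j : ℝ) * b) z)).prod

/-- The operator norm of a 2×2 complex matrix, acting on the Euclidean space `ℂ²`. -/
noncomputable def opNorm2 (M : Matrix (Fin 2) (Fin 2) ℂ) : ℝ :=
  ‖Matrix.toEuclideanCLM (𝕜 := ℂ) M‖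

/-- The Lyapunov exponent `L(z) = lim_n (1/n)∫₀¹ log‖A_n(x,z)‖ dx`; the limit exists and
equals `inf_{n ≥ 1} (1/n)∫₀¹ log‖A_n(x,z)‖ dx` by subadditivity, so we take that as the
definition. -/
noncomputable def lyap (V : ℝ → ℝ) (b : ℝ) (z : ℂ) : ℝ :=
  ⨅ n : ℕ+, ((n : ℝ))⁻¹ * ∫ x in (0:ℝ)..(1:ℝ), Real.log (opNorm2 (tProd V b n x z))

/-- `IsSchrodingerOp V b θ H` says that `H` is the bounded operator on `ℓ²(ℤ)` given by
`(Hu)ₙ = u_{n+1} + u_{n-1} + V(nb+θ)uₙ`. -/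
def IsSchrodingerOp (V : ℝ → ℝ) (b θ : ℝ)
    (H : lp (fun _ : ℤ => ℂ) 2 →L[ℂ] lp (fun _ : ℤ => ℂ) 2) : Prop :=
  ∀ u : lp (fun _ : ℤ => ℂ) 2, ∀ n : ℤ,
    (H u : ∀ _ : ℤ, ℂ) n = (u : ∀ _ : ℤ, ℂ) (n + 1) + (u : ∀ _ : ℤ, ℂ) (n - 1)
      + (V ((n : ℝ) * b + θ) : ℂ) * (u : ∀ _ : ℤ, ℂ) n


namespace GAA
open scoped Matrix.Norms.L2Operator

/-- Two by two complex matrices. -/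
abbrev Mat := Matrix (Fin 2) (Fin 2) ℂ

/-- Euclidean two-space over the complex numbers. -/
abbrev Vec := EuclideanSpace ℂ (Fin 2)

/-- The action of a matrix on a vector. -/
noncomputable def act (M : Mat) (v : Vec) : Vec := Matrix.toEuclideanCLM (𝕜 := ℂ) M v

lemma act_apply (M : Mat) (v : Vec) (i : Fin 2) : act M v i = M i 0 * v 0 + M i 1 * v 1 := by
  simp [act, Matrix.mulVec, dotProduct, Fin.sum_univ_two]

lemma act_mul (M N : Mat) (v : Vec) : act (M * N) v = act M (act N v) := by
  simp [act, map_mul]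

lemma act_one (v : Vec) : act 1 v = v := by simp [act]

lemma act_add (M : Mat) (v w : Vec) : act M (v + w) = act M v + act M w := by simp [act]

lemma act_smul (M : Mat) (a : ℂ) (w : Vec) : act M (a • w) = a • act M w := by simp [act]

lemma norm_act_le (M : Mat) (v : Vec) : ‖act M v‖ ≤ ‖M‖ * ‖v‖ := by
  rw [Matrix.cstar_norm_def]
  exact ContinuousLinearMap.le_opNorm _ _

lemma norm_le_of_act (M : Mat) (C : ℝ) (hC : 0 ≤ C) (h : ∀ v, ‖act M v‖ ≤ C * ‖v‖) : ‖M‖ ≤ C := by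
  rw [Matrix.cstar_norm_def]
  exact ContinuousLinearMap.opNorm_le_bound _ hC h

lemma vec_norm_sq (v : Vec) : ‖v‖ ^ 2 = ‖v 0‖ ^ 2 + ‖v 1‖ ^ 2 := by
  rw [EuclideanSpace.norm_sq_eq, Fin.sum_univ_two]

lemma vec_coord_le (v : Vec) (i : Fin 2) : ‖v i‖ ≤ ‖v‖ := PiLp.norm_apply_le v i

lemma wedge_le (y v : Vec) : ‖y 0 * v 1 - y 1 * v 0‖ ≤ ‖y‖ * ‖v‖ := by
  have h1 : ‖y 0 * v 1 - y 1 * v 0‖ ≤ ‖y 0‖ * ‖v 1‖ + ‖y 1‖ * ‖v 0‖ := by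
    refine (norm_sub_le _ _).trans ?_
    simp
  refine h1.trans (abs_le_of_sq_le_sq' ?_ (by positivity)).2
  rw [mul_pow, vec_norm_sq, vec_norm_sq]
  nlinarith [sq_nonneg (‖y 0‖ * ‖v 0‖ - ‖y 1‖ * ‖v 1‖)]

lemma wedge_decomp (A : Mat) (w z : Vec) :
    ‖w‖ * ‖act A z‖ ≤ ‖z‖ * ‖act A w‖ + ‖A‖ * ‖w 0 * z 1 - w 1 * z 0‖ := by
  rcases eq_or_ne w 0 with rfl | hw
  · simp [act]
  have hw' : 0 < ‖w‖ := norm_pos_iff.mpr hw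
  let wp : Vec := !₂[-(starRingEnd ℂ) (w 1), (starRingEnd ℂ) (w 0)]
  have hwp : ‖wp‖ = ‖w‖ := by
    have : ‖wp‖ ^ 2 = ‖w‖ ^ 2 := by
      rw [vec_norm_sq, vec_norm_sq]; simp [wp]; ring
    exact (sq_eq_sq₀ (norm_nonneg _) (norm_nonneg _)).mp this
  set ip : ℂ := (starRingEnd ℂ) (w 0) * z 0 + (starRingEnd ℂ) (w 1) * z 1 with hip
  set wd : ℂ := w 0 * z 1 - w 1 * z 0 with hwd
  have hip' : ‖ip‖ ≤ ‖w‖ * ‖z‖ := by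
    have := wedge_le (!₂[(starRingEnd ℂ) (w 0), -(starRingEnd ℂ) (w 1)]) (!₂[z 1, z 0])
    have e1 : ‖(!₂[(starRingEnd ℂ) (w 0), -(starRingEnd ℂ) (w 1)] : Vec)‖ = ‖w‖ := by
      refine (sq_eq_sq₀ (norm_nonneg _) (norm_nonneg _)).mp ?_
      rw [vec_norm_sq, vec_norm_sq]; simp
    have e2 : ‖(!₂[z 1, z 0] : Vec)‖ = ‖z‖ := by
      refine (sq_eq_sq₀ (norm_nonneg _) (norm_nonneg _)).mp ?_
      rw [vec_norm_sq, vec_norm_sq]; simp; ring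
    rw [e1, e2] at this
    convert this using 2
    simp [hip]
  have hns : ((‖w‖ ^ 2 : ℝ) : ℂ) = (starRingEnd ℂ) (w 0) * w 0 + (starRingEnd ℂ) (w 1) * w 1 := by
    rw [vec_norm_sq]
    push_cast
    rw [Complex.conj_mul', Complex.conj_mul']
  have hdec : ((‖w‖ ^ 2 : ℝ) : ℂ) • z = ip • w + wd • wp := by
    rw [hns]
    ext i
    fin_cases i
    · simp [wp, hip, hwd]; ring
    · simp [wp, hip, hwd]; ring
  have h2 : ‖w‖ ^ 2 * ‖act A z‖ ≤ (‖w‖ * ‖z‖) * ‖act A w‖ + ‖wd‖ * (‖A‖ * ‖w‖) := by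
    have : ‖((‖w‖ ^ 2 : ℝ) : ℂ) • act A z‖ = ‖w‖ ^ 2 * ‖act A z‖ := by
      rw [norm_smul, Complex.norm_real, Real.norm_of_nonneg (by positivity)]
    rw [← this, ← act_smul, hdec, act_add, act_smul, act_smul]
    refine (norm_add_le _ _).trans ?_
    rw [norm_smul, norm_smul]
    gcongr
    rw [← hwp]; exact norm_act_le _ _
  have : ‖w‖ * (‖w‖ * ‖act A z‖) ≤ ‖w‖ * (‖z‖ * ‖act A w‖ + ‖A‖ * ‖wd‖) := by
    calc _ = ‖w‖ ^ 2 * ‖act A z‖ := by ring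
      _ ≤ _ := h2
      _ = _ := by ring
  exact le_of_mul_le_mul_left this hw'

lemma wedge_act (B : Mat) (hB : B.det = 1) (y v : Vec) :
    act B y 0 * act B v 1 - act B y 1 * act B v 0 = y 0 * v 1 - y 1 * v 0 := by
  rw [Matrix.det_fin_two] at hB
  simp only [act_apply]
  linear_combination (y 0 * v 1 - y 1 * v 0) * hB

lemma key_wedge (A B : Mat) (hB : B.det = 1) (y : Vec) :
    ‖act B y‖ * ‖A * B‖ ≤ ‖B‖ * ‖act A (act B y)‖ + ‖A‖ * ‖y‖ := by
  rcases (norm_nonneg (act B y)).eq_or_lt with h0 | h0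
  · rw [← h0]; simp; positivity
  rw [mul_comm, ← le_div_iff₀ h0]
  refine norm_le_of_act _ _ (by positivity) fun v => ?_
  rw [div_mul_eq_mul_div, le_div_iff₀ h0, mul_comm, act_mul]
  refine (wedge_decomp A (act B y) (act B v)).trans ?_
  rw [wedge_act B hB]
  have h1 := norm_act_le B v
  have h2 := wedge_le y v
  calc _ ≤ (‖B‖ * ‖v‖) * ‖act A (act B y)‖ + ‖A‖ * (‖y‖ * ‖v‖) := by gcongr
    _ = _ := by ring

lemma norm_entry_le (M : Mat) (i j : Fin 2) : ‖M i j‖ ≤ ‖M‖ := by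
  have h := (vec_coord_le _ i).trans (norm_act_le M (EuclideanSpace.single j 1))
  rw [act_apply] at h
  fin_cases j <;> simpa using h

lemma norm_le_entries (M : Mat) (m : ℝ) (h : ∀ i j, ‖M i j‖ ≤ m) : ‖M‖ ≤ 2 * m := by
  have hm : 0 ≤ m := (norm_nonneg _).trans (h 0 0)
  refine norm_le_of_act _ _ (by positivity) fun v => ?_
  have hb : ∀ i, ‖act M v i‖ ^ 2 ≤ 2 * m ^ 2 * ‖v‖ ^ 2 := by
    intro i
    rw [act_apply, vec_norm_sq]
    have : ‖M i 0 * v 0 + M i 1 * v 1‖ ≤ m * ‖v 0‖ + m * ‖v 1‖ := by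
      refine (norm_add_le _ _).trans ?_
      rw [norm_mul, norm_mul]
      gcongr <;> apply h
    calc _ ≤ (m * ‖v 0‖ + m * ‖v 1‖) ^ 2 := by gcongr
      _ ≤ _ := by nlinarith [sq_nonneg (m * ‖v 0‖ - m * ‖v 1‖)]
  refine (abs_le_of_sq_le_sq' ?_ (by positivity)).2
  rw [vec_norm_sq]
  nlinarith [hb 0, hb 1]

lemma one_le_norm (M : Mat) (hM : M.det = 1) : 1 ≤ ‖M‖ := by
  have h := wedge_act M hM (EuclideanSpace.single 0 1) (EuclideanSpace.single 1 1)
  have h1 := wedge_le (act M (EuclideanSpace.single 0 1)) (act M (EuclideanSpace.single 1 1))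
  rw [h] at h1
  have h2 := norm_act_le M (EuclideanSpace.single 0 1)
  have h3 := norm_act_le M (EuclideanSpace.single 1 1)
  simp at h1 h2 h3
  by_contra hc
  push Not at hc
  have : ‖act M (EuclideanSpace.single 0 1)‖ * ‖act M (EuclideanSpace.single 1 1)‖
      ≤ ‖M‖ * ‖M‖ := by gcongr
  nlinarith [norm_nonneg M]

lemma norm_one_mat : ‖(1 : Mat)‖ = 1 := by
  apply le_antisymm
  · exact norm_le_of_act _ _ zero_le_one (by simp [act_one])
  · exact one_le_norm _ (by simp)

lemma norm_trace_le (M : Mat) : ‖M.trace‖ ≤ 2 * ‖M‖ := by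
  rw [Matrix.trace_fin_two]
  refine (norm_add_le _ _).trans ?_
  linarith [norm_entry_le M 0 0, norm_entry_le M 1 1]

lemma cayley (T : Mat) (hT : T.det = 1) : T * T = T.trace • T - 1 := by
  rw [Matrix.det_fin_two] at hT
  ext i j
  fin_cases i <;> fin_cases j <;>
    simp [Matrix.mul_apply, Fin.sum_univ_two, Matrix.trace_fin_two] <;>
    first | ring1 | linear_combination -hT

lemma pow_trace_bound (T : Mat) (hT : T.det = 1) (k : ℕ) :
    ‖T ^ k‖ ≤ ‖T‖ * (‖T.trace‖ + 1) ^ k := by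
  have h1 := one_le_norm T hT
  have hs : 0 ≤ ‖T.trace‖ := norm_nonneg _
  induction k using Nat.strong_induction_on with
  | _ k ih =>
    match k, ih with
    | 0, _ => simpa [norm_one_mat] using h1
    | 1, _ =>
      simp
      nlinarith
    | k + 2, ih =>
      have e : T ^ (k + 2) = T.trace • T ^ (k + 1) - T ^ k := by
        rw [pow_add, pow_two, cayley T hT, mul_sub, mul_one, mul_smul_comm, ← pow_succ]
      rw [e]
      refine (norm_sub_le _ _).trans ?_
      rw [norm_smul]
      have h2 := ih (k + 1) (by omega)
      have h3 := ih k (by omega)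
      have hp : 0 ≤ ‖T‖ * (‖T.trace‖ + 1) ^ k := by positivity
      calc ‖T.trace‖ * ‖T ^ (k + 1)‖ + ‖T ^ k‖
          ≤ ‖T.trace‖ * (‖T‖ * (‖T.trace‖ + 1) ^ (k + 1)) + ‖T‖ * (‖T.trace‖ + 1) ^ k := by gcongr
        _ = (‖T‖ * (‖T.trace‖ + 1) ^ k) * (‖T.trace‖ * (‖T.trace‖ + 1) + 1) := by ring
        _ ≤ (‖T‖ * (‖T.trace‖ + 1) ^ k) * (‖T.trace‖ + 1) ^ 2 := by
            gcongr; nlinarith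
        _ = _ := by ring

/-- Ordered products `F (n-1) * ... * F 0`. -/
def Pr {R : Type*} [Monoid R] (F : ℕ → R) : ℕ → R
  | 0 => 1
  | n + 1 => F n * Pr F n

lemma Pr_add {R : Type*} [Monoid R] (F : ℕ → R) (m n : ℕ) :
    Pr F (m + n) = Pr (fun j => F (j + m)) n * Pr F m := by
  induction n with
  | zero => simp [Pr]
  | succ n ih => rw [← add_assoc, Pr, ih, Pr, mul_assoc, add_comm n m]

lemma Pr_det {F : ℕ → Mat} (h : ∀ j, (F j).det = 1) (n : ℕ) : (Pr F n).det = 1 := by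
  induction n with
  | zero => simp [Pr]
  | succ n ih => simp [Pr, Matrix.det_mul, ih, h]

lemma Pr_norm_le {F : ℕ → Mat} {C : ℝ} (h : ∀ j, ‖F j‖ ≤ C) (n : ℕ) : ‖Pr F n‖ ≤ C ^ n := by
  induction n with
  | zero => simp [Pr]
  | succ n ih =>
    have hC : 0 ≤ C := (norm_nonneg _).trans (h 0)
    rw [Pr, pow_succ']
    exact (norm_mul_le _ _).trans (mul_le_mul (h n) ih (norm_nonneg _) hC)

lemma Pr_periodic {R : Type*} [Monoid R] (F : ℕ → R) (m : ℕ) (h : ∀ j, F (j + m) = F j) (k : ℕ) :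
    Pr F (m * k) = Pr F m ^ k := by
  induction k with
  | zero => simp [Pr]
  | succ k ih =>
    have : (fun j => F (j + m)) = F := funext h
    rw [mul_add, mul_one, add_comm (m * k), Pr_add, this, ih, ← pow_succ]

/-- Exponential growth from the two-scale criterion. -/
lemma growth {F : ℕ → Mat} (h : ∀ j, (F j).det = 1) (n : ℕ) (Γ Λ κ : ℝ) (hΓ : 0 < Γ)
    (hκ : 1 < κ) (hΛ : 2 * Γ * κ ≤ Λ)
    (hup : ∀ m, ‖Pr (fun j => F (j + m)) n‖ ≤ Γ)
    (hlow : ∀ m, Λ ≤ ‖Pr (fun j => F (j + m)) (2 * n)‖) (N : ℕ) :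
    κ ^ N ≤ ‖Pr F (n * N)‖ := by
  set B : ℕ → Mat := fun m => Pr (fun j => F (j + m)) n with hBdef
  have hBdet : ∀ m, (B m).det = 1 := fun m => Pr_det (fun j => h _) n
  have hAB : ∀ m, Pr (fun j => F (j + m)) (2 * n) = B (m + n) * B m := by
    intro m
    rw [two_mul, Pr_add]
    simp only [hBdef]
    congr 2
    ext1 j
    congr 1
    ring
  have key : ∀ m (y : Vec), 2 * κ * ‖act (B m) y‖ ≤ ‖act (B (m + n)) (act (B m) y)‖ + ‖y‖ := by
    intro m y
    have h1 := key_wedge (B (m + n)) (B m) (hBdet m) y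
    rw [← hAB] at h1
    have h2 := hlow m
    have h3 : ‖act (B m) y‖ * (2 * Γ * κ) ≤ Γ * (‖act (B (m + n)) (act (B m) y)‖ + ‖y‖) := by
      calc _ ≤ ‖act (B m) y‖ * ‖Pr (fun j => F (j + m)) (2 * n)‖ := by
            gcongr; exact hΛ.trans h2
        _ ≤ _ := h1
        _ ≤ Γ * ‖act (B (m + n)) (act (B m) y)‖ + Γ * ‖y‖ := by
            gcongr <;> exact hup _
        _ = _ := by ring
    have h4 : Γ * (2 * κ * ‖act (B m) y‖) ≤ Γ * (‖act (B (m + n)) (act (B m) y)‖ + ‖y‖) := by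
      linarith
    exact le_of_mul_le_mul_left h4 hΓ
  -- initial vector
  have hinit : κ < ‖B 0‖ := by
    have h1 := hlow 0
    rw [hAB] at h1
    have h2 := norm_mul_le (B (0 + n)) (B 0)
    have h3 : 2 * Γ * κ ≤ Γ * ‖B 0‖ :=
      (hΛ.trans (h1.trans h2)).trans (mul_le_mul_of_nonneg_right (hup _) (norm_nonneg _))
    have : 2 * κ ≤ ‖B 0‖ := by nlinarith
    linarith
  obtain ⟨y, hy⟩ : ∃ y : Vec, κ * ‖y‖ < ‖act (B 0) y‖ := by
    by_contra hc
    push Not at hc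
    exact absurd (norm_le_of_act _ _ (by linarith) hc) (by linarith)
  set w : ℕ → Vec := fun k => act (Pr F (n * k)) y with hw
  have hstep : ∀ k, w (k + 1) = act (B (n * k)) (w k) := by
    intro k
    simp only [hw]
    rw [mul_add, mul_one, Pr_add, act_mul]
  have hgrow : ∀ k, κ * ‖w k‖ ≤ ‖w (k + 1)‖ := by
    intro k
    induction k with
    | zero =>
      rw [hstep]
      simpa [hw, Pr, act_one] using hy.le
    | succ k ih =>
      have h1 := key (n * k) (w k)
      rw [← hstep, show n * k + n = n * (k + 1) by ring, ← hstep] at h1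
      have : ‖w k‖ ≤ κ * ‖w (k + 1)‖ := by nlinarith [norm_nonneg (w k), norm_nonneg (w (k+1))]
      linarith
  have hall : ∀ k, κ ^ k * ‖y‖ ≤ ‖w k‖ := by
    intro k
    induction k with
    | zero => simp [hw, Pr, act_one]
    | succ k ih =>
      calc κ ^ (k + 1) * ‖y‖ = κ * (κ ^ k * ‖y‖) := by ring
        _ ≤ κ * ‖w k‖ := by gcongr
        _ ≤ _ := hgrow k
  have hy0 : 0 < ‖y‖ := by
    rcases (norm_nonneg y).eq_or_lt with h0 | h0
    · exfalso
      have := norm_act_le (B 0) y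
      rw [← h0] at this hy
      linarith
    · exact h0
  exact le_of_mul_le_mul_right ((hall N).trans (norm_act_le _ _)) hy0

end GAA


namespace GAA

/-- good rational approximations with large denominators -/
lemma exists_good_rat (b : ℝ) (hb : Irrational b) (D : ℕ) (η : ℝ) (hη : 0 < η) :
    ∃ r : ℚ, D < r.den ∧ |b - r| ≤ 1 / (r.den : ℝ) ^ 2 ∧ |b - r| < η := by
  have h1 := hb.eventually_forall_le_dist_cast_rat_of_den_le D
  have h2 : ∀ᶠ ε : ℝ in nhdsWithin 0 (Set.Ioi 0), ∀ r : ℚ, r.den ≤ D → ε ≤ dist b r :=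
    h1.filter_mono nhdsWithin_le_nhds
  obtain ⟨ε, hε, hε0⟩ := (h2.and self_mem_nhdsWithin).exists
  replace hε0 : 0 < ε := hε0
  obtain ⟨n, hn⟩ := exists_nat_gt (1 / (min ε η))
  have hm : 0 < min ε η := lt_min hε0 hη
  have hn0 : 0 < n := by
    have : (0:ℝ) < n := lt_trans (by positivity) hn
    exact_mod_cast this
  obtain ⟨r, hr, hden⟩ := Real.exists_rat_abs_sub_le_and_den_le b hn0
  have hd : (1:ℝ) ≤ r.den := by exact_mod_cast r.pos
  have hn' : (0:ℝ) < n := by exact_mod_cast hn0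
  have hsmall : |b - r| < min ε η := by
    refine hr.trans_lt ?_
    rw [div_lt_comm₀ (by positivity) hm]
    nlinarith
  refine ⟨r, ?_, ?_, hsmall.trans_le (min_le_right _ _)⟩
  · by_contra hc
    push Not at hc
    have := hε r hc
    rw [Real.dist_eq] at this
    exact absurd (hsmall.trans_le (min_le_left _ _)) (not_lt.mpr this)
  · refine hr.trans ?_
    apply one_div_le_one_div_of_le (by positivity)
    have : (r.den : ℝ) ≤ n := by exact_mod_cast hden
    nlinarith

lemma periodic_int {f : ℝ → ℝ} (hper : Function.Periodic f 1) (x : ℝ) (k : ℤ) :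
    f (x + k) = f x := by
  simpa using hper.int_mul k x

/-- reindexing of sums over residues -/
lemma sum_residue (r : ℚ) (G : ℤ → ℝ) (hG : ∀ i k : ℤ, G (i + k * r.den) = G i) :
    ∑ j ∈ Finset.range r.den, G (j * r.num) = ∑ j ∈ Finset.range r.den, G j := by
  have hd : 0 < r.den := r.pos
  have hdz : (0:ℤ) < r.den := by exact_mod_cast hd
  have hGm : ∀ i : ℤ, G (((i % r.den).toNat : ℕ) : ℤ) = G i := by
    intro i
    have h0 : 0 ≤ i % (r.den : ℤ) := Int.emod_nonneg _ hdz.ne'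
    rw [Int.toNat_of_nonneg h0]
    have := hG (i % r.den) (i / r.den)
    rw [← this]
    congr 1
    have := Int.emod_add_mul_ediv i r.den
    linarith
  have hlt : ∀ i : ℤ, (i % r.den).toNat < r.den := by
    intro i
    have h0 : 0 ≤ i % (r.den : ℤ) := Int.emod_nonneg _ hdz.ne'
    have h1 := Int.emod_lt_of_pos i hdz
    omega
  have hinj : Set.InjOn (fun j : ℕ => (((j : ℤ) * r.num) % r.den).toNat)
      (Finset.range r.den : Set ℕ) := by
    intro i hi j hj hij
    simp only [Finset.coe_range, Set.mem_Iio] at hi hj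
    simp only at hij
    have h0 : 0 ≤ ((i : ℤ) * r.num) % (r.den : ℤ) := Int.emod_nonneg _ hdz.ne'
    have h1 : 0 ≤ ((j : ℤ) * r.num) % (r.den : ℤ) := Int.emod_nonneg _ hdz.ne'
    have h2 : ((i : ℤ) * r.num) % (r.den : ℤ) = ((j : ℤ) * r.num) % (r.den : ℤ) := by omega
    have h3 : (r.den : ℤ) ∣ ((i : ℤ) - j) * r.num := by
      have := Int.emod_emod_of_dvd
      rw [sub_mul]
      exact Int.dvd_of_emod_eq_zero (Int.emod_eq_emod_iff_emod_sub_eq_zero.mp h2)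
    have hcop : IsCoprime (r.den : ℤ) r.num := by
      have := r.reduced
      rw [Int.isCoprime_iff_nat_coprime]
      simpa using this.symm
    have h4 := hcop.dvd_of_dvd_mul_right h3
    have h5 : |(i : ℤ) - j| < r.den := by
      rw [abs_lt]; omega
    have h6 := Int.eq_zero_of_abs_lt_dvd h4 h5
    omega
  have himg : (Finset.range r.den).image (fun j : ℕ => (((j : ℤ) * r.num) % r.den).toNat)
      = Finset.range r.den := by
    apply Finset.eq_of_subset_of_card_le
    · intro k hk
      simp only [Finset.mem_image] at hk
      obtain ⟨j, _, rfl⟩ := hk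
      exact Finset.mem_range.mpr (hlt _)
    · rw [Finset.card_image_of_injOn hinj]
  conv_rhs => rw [← himg]
  rw [Finset.sum_image hinj]
  exact Finset.sum_congr rfl fun j _ => (hGm _).symm

/-- Riemann sums along a rational approximation -/
lemma riemann_sum (f : ℝ → ℝ) (hper : Function.Periodic f 1) (hf : Continuous f) (b : ℝ) (r : ℚ)
    (hr : |b - r| ≤ 1 / (r.den : ℝ) ^ 2) (η : ℝ)
    (hη : ∀ s t : ℝ, |s - t| ≤ 2 / r.den → |f s - f t| ≤ η) (x : ℝ) :
    |∑ j ∈ Finset.range r.den, f (x + j * b) - r.den * ∫ y in (0:ℝ)..1, f y| ≤ r.den * η := by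
  have hd : (0:ℝ) < r.den := by exact_mod_cast r.pos
  set q := r.den with hq
  set I : ℤ → ℝ := fun i => ∫ s in (x + (i:ℝ)/q)..(x + ((i:ℝ)+1)/q), f s with hI
  have hIper : ∀ i k : ℤ, I (i + k * q) = I i := by
    intro i k
    simp only [hI]
    have e1 : x + ((i + k * q : ℤ) : ℝ) / q = (x + (i:ℝ)/q) + k := by
      push_cast; field_simp; ring
    have e2 : x + (((i + k * q : ℤ) : ℝ) + 1) / q = (x + ((i:ℝ)+1)/q) + k := by
      push_cast; field_simp; ring
    rw [e1, e2, ← intervalIntegral.integral_comp_add_right]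
    simp only [periodic_int hper]
  have hsum : ∑ j ∈ Finset.range q, I j = ∫ y in (0:ℝ)..1, f y := by
    have h1 : ∑ j ∈ Finset.range q, I j = ∫ s in (x + (0:ℕ)/q)..(x + (q:ℕ)/q), f s := by
      have := intervalIntegral.sum_integral_adjacent_intervals (μ := MeasureTheory.volume) (f := f)
        (a := fun k : ℕ => x + (k:ℝ)/q) (n := q) (fun k _ => hf.intervalIntegrable _ _)
      rw [← this]
      refine Finset.sum_congr rfl fun j _ => ?_
      simp [hI]
    rw [h1]
    have := hper.intervalIntegral_add_eq x 0
    simp only [zero_add] at this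
    rw [← this]
    congr 1
    · simp
    · field_simp
  have hterm : ∀ j ∈ Finset.range q, |f (x + j * b) - q * I (j * r.num)| ≤ η := by
    intro j hj
    have hjq : (j:ℝ) < q := by exact_mod_cast Finset.mem_range.mp hj
    have hrr : (r : ℝ) = r.num / q := by
      rw [hq]; exact_mod_cast (Rat.num_div_den r).symm
    have hclose : |(j:ℝ) * b - (j * r.num) / q| ≤ 1 / q := by
      have : (j:ℝ) * b - (j * r.num) / q = j * (b - r) := by rw [hrr]; ring
      rw [this, abs_mul, abs_of_nonneg (Nat.cast_nonneg j)]
      calc (j:ℝ) * |b - r| ≤ q * (1 / (q:ℝ) ^ 2) := by gcongr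
        _ = 1 / q := by field_simp
    have hconst : f (x + j * b) - q * I (j * r.num)
        = q * ∫ s in (x + ((j * r.num : ℤ):ℝ)/q)..(x + (((j * r.num : ℤ):ℝ)+1)/q),
            (f (x + j * b) - f s) := by
      rw [intervalIntegral.integral_sub (by simp) (hf.intervalIntegrable _ _),
        intervalIntegral.integral_const]
      simp only [hI, smul_eq_mul]
      field_simp
      ring
    rw [hconst, abs_mul, abs_of_pos hd]
    have hb := intervalIntegral.norm_integral_le_of_norm_le_const (f := fun s => f (x + j * b) - f s)
      (a := x + ((j * r.num : ℤ):ℝ)/q) (b := x + (((j * r.num : ℤ):ℝ)+1)/q) (C := η) ?_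
    · rw [Real.norm_eq_abs] at hb
      calc _ ≤ (q:ℝ) * (η * |x + (((j * r.num : ℤ):ℝ)+1)/q - (x + ((j * r.num : ℤ):ℝ)/q)|) := by
            gcongr
        _ = η := by
          have : x + (((j * r.num : ℤ):ℝ)+1)/q - (x + ((j * r.num : ℤ):ℝ)/q) = 1/q := by
            field_simp; ring
          rw [this, abs_of_pos (by positivity)]
          field_simp
    · intro s hs
      rw [Set.uIoc_of_le (by gcongr; linarith)] at hs
      rw [Real.norm_eq_abs]
      apply hη
      obtain ⟨h1, h2⟩ := hs
      push_cast at h1 h2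
      rw [abs_le] at hclose ⊢
      rw [add_div] at h2
      have : (2:ℝ)/q = 1/q + 1/q := by ring
      rw [this]
      constructor <;> linarith [hclose.1, hclose.2]
  have htot : ∑ j ∈ Finset.range q, f (x + j * b) - q * ∫ y in (0:ℝ)..1, f y
      = ∑ j ∈ Finset.range q, (f (x + j * b) - q * I (j * r.num)) := by
    rw [Finset.sum_sub_distrib, ← Finset.mul_sum, sum_residue r I hIper, hsum]
  rw [htot]
  refine (Finset.abs_sum_le_sum_abs _ _).trans ?_
  refine (Finset.sum_le_sum hterm).trans ?_
  simp

lemma periodic_uc (f : ℝ → ℝ) (hper : Function.Periodic f 1) (hf : Continuous f) (η : ℝ)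
    (hη : 0 < η) : ∃ δ > 0, ∀ s t : ℝ, |s - t| ≤ δ → |f s - f t| ≤ η := by
  have huc : UniformContinuousOn f (Set.Icc (-1) 2) :=
    isCompact_Icc.uniformContinuousOn_of_continuous hf.continuousOn
  rw [Metric.uniformContinuousOn_iff] at huc
  obtain ⟨δ, hδ, h⟩ := huc η hη
  refine ⟨min (δ/2) 1, by positivity, fun s t hst => ?_⟩
  have h1 := le_trans hst (min_le_left _ _)
  have h2 := le_trans hst (min_le_right _ _)
  have hs := periodic_int hper s (-⌊s⌋)
  have ht := periodic_int hper t (-⌊s⌋)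
  rw [← hs, ← ht]
  have f1 := Int.floor_le s
  have f2 := Int.lt_floor_add_one s
  rw [abs_le] at h2
  have := h (s + ((-⌊s⌋ : ℤ):ℝ)) ⟨by push_cast; linarith, by push_cast; linarith⟩
    (t + ((-⌊s⌋ : ℤ):ℝ)) ⟨by push_cast; linarith, by push_cast; linarith⟩
    (by rw [Real.dist_eq]; simp only [add_sub_add_right_eq_sub]; linarith)
  rw [Real.dist_eq] at this
  exact this.le

lemma periodic_bdd (f : ℝ → ℝ) (hper : Function.Periodic f 1) (hf : Continuous f) :
    ∃ C, ∀ x, |f x| ≤ C := by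
  obtain ⟨C, hC⟩ := isCompact_Icc.exists_bound_of_continuousOn (s := Set.Icc (0:ℝ) 1)
    hf.continuousOn
  refine ⟨C, fun x => ?_⟩
  rw [← periodic_int hper x (-⌊x⌋)]
  have f1 := Int.floor_le x
  have f2 := Int.lt_floor_add_one x
  exact hC _ ⟨by push_cast; linarith, by push_cast; linarith⟩

/-- Uniform Weyl equidistribution. -/
lemma weyl (f : ℝ → ℝ) (hper : Function.Periodic f 1) (hf : Continuous f) (b : ℝ)
    (hb : Irrational b) (η : ℝ) (hη : 0 < η) :
    ∃ n0 : ℕ, ∀ n ≥ n0, ∀ x,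
      |∑ j ∈ Finset.range n, f (x + j * b) - n * ∫ y in (0:ℝ)..1, f y| ≤ n * η := by
  obtain ⟨C, hC⟩ := periodic_bdd f hper hf
  obtain ⟨δ, hδ, hmod⟩ := periodic_uc f hper hf (η/2) (by positivity)
  obtain ⟨D, hD⟩ := exists_nat_gt (2/δ)
  obtain ⟨r, hrD, hr, -⟩ := exists_good_rat b hb D 1 one_pos
  have hd : (0:ℝ) < r.den := by exact_mod_cast r.pos
  have hblock := riemann_sum f hper hf b r hr (η/2) (by
    intro s t hst
    apply hmod
    refine hst.trans ?_
    have : (D:ℝ) < r.den := by exact_mod_cast hrD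
    rw [div_le_iff₀ hd]
    rw [div_lt_iff₀ hδ] at hD
    nlinarith)
  set q := r.den
  set m := ∫ y in (0:ℝ)..1, f y with hm
  have hmC : |m| ≤ C := by
    have := intervalIntegral.norm_integral_le_of_norm_le_const (f := f) (a := 0) (b := 1) (C := C)
      (fun x _ => hC x)
    simpa using this
  have hC0 : 0 ≤ C := (abs_nonneg _).trans hmC
  -- blocks
  have hblocks : ∀ k : ℕ, ∀ x, |∑ j ∈ Finset.range (q * k), f (x + j * b) - (q * k : ℕ) * m|
      ≤ (q * k : ℕ) * (η/2) := by
    intro k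
    induction k with
    | zero => simp
    | succ k ih =>
      intro x
      rw [mul_add, mul_one, Finset.sum_range_add]
      have h1 := ih x
      have h2 := hblock (x + (q * k : ℕ) * b)
      have e : ∑ j ∈ Finset.range q, f (x + ((q * k + j : ℕ):ℝ) * b)
          = ∑ j ∈ Finset.range q, f (x + (q * k : ℕ) * b + j * b) := by
        refine Finset.sum_congr rfl fun j _ => ?_
        congr 1
        push_cast
        ring
      rw [e]
      rw [abs_le] at h1 h2 ⊢
      push_cast at h1 h2 ⊢
      constructor <;> nlinarith [h1.1, h1.2, h2.1, h2.2]
  obtain ⟨n0, hn0⟩ := exists_nat_gt (2 * C * q / (η/2))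
  refine ⟨n0, fun n hn x => ?_⟩
  have hdiv := Nat.div_add_mod n q
  have hlt : n % q < q := Nat.mod_lt _ r.pos
  set k := n / q
  set l := n % q
  rw [← hdiv, Finset.sum_range_add]
  have h1 := hblocks k x
  have h2 : |∑ j ∈ Finset.range l, f (x + ((q * k + j : ℕ):ℝ) * b)| ≤ l * C := by
    refine (Finset.abs_sum_le_sum_abs _ _).trans ?_
    refine (Finset.sum_le_sum (fun j _ => hC _)).trans ?_
    simp
  have hlq : (l:ℝ) ≤ q := by exact_mod_cast hlt.le
  have h3 : |(l:ℝ) * m| ≤ q * C := by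
    rw [abs_mul, abs_of_nonneg (Nat.cast_nonneg l)]
    gcongr
  have h4 : (l:ℝ) * C ≤ q * C := by gcongr
  have hnn : (n0:ℝ) ≤ n := by exact_mod_cast hn
  have h5 : 2 * C * q ≤ n * (η/2) := by
    rw [div_lt_iff₀ (by positivity)] at hn0
    nlinarith
  have hn' : (n:ℝ) = q * k + l := by
    rw [← hdiv]; push_cast; ring
  rw [abs_le] at h1 h2 h3 ⊢
  push_cast at h1 h2 h3 ⊢
  have h6 : (0:ℝ) ≤ l * η := by positivity
  rw [hn'] at h5
  constructor <;> nlinarith [h1.1, h1.2, h2.1, h2.2, h3.1, h3.2]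

end GAA


namespace GAA
open scoped Matrix.Norms.L2Operator

/-- the point of the circle of radius `exp t` with angle `2 π x` -/
noncomputable def pt (t x : ℝ) : ℂ := Complex.exp ((t : ℂ) + 2 * Real.pi * Complex.I * (x : ℂ))

lemma pt_periodic (t x : ℝ) : pt t (x + 1) = pt t x := by
  unfold pt
  have : (t : ℂ) + 2 * Real.pi * Complex.I * ((x + 1 : ℝ) : ℂ)
      = ((t : ℂ) + 2 * Real.pi * Complex.I * (x : ℂ)) + 2 * Real.pi * Complex.I := by
    push_cast; ring
  rw [this, Complex.exp_periodic]

lemma pt_nat (t x : ℝ) (k : ℕ) : pt t (x + k) = pt t x := by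
  induction k with
  | zero => simp
  | succ k ih => rw [← ih, Nat.cast_succ, ← add_assoc, pt_periodic]

lemma norm_pt (t x : ℝ) : ‖pt t x‖ = Real.exp t := by
  unfold pt
  rw [Complex.norm_exp]
  congr 1
  simp

lemma pt_continuous (t : ℝ) : Continuous (pt t) := by
  unfold pt; fun_prop

lemma pt_add (t x y : ℝ) : pt t (x + y) = pt t x * pt 0 y := by
  unfold pt
  rw [← Complex.exp_add]
  congr 1
  push_cast; ring

lemma norm_pt_zero_sub_one (s : ℝ) : ‖pt 0 s - 1‖ = 2 * |Real.sin (Real.pi * s)| := by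
  have : pt 0 s = Complex.exp (Complex.I * ((2 * Real.pi * s : ℝ) : ℂ)) := by
    unfold pt; congr 1; push_cast; ring
  rw [this, Complex.norm_exp_I_mul_ofReal_sub_one]
  rw [norm_mul, Real.norm_eq_abs, Real.norm_eq_abs]
  norm_num
  congr 2
  ring

lemma norm_pt_sub (t x y : ℝ) :
    ‖pt t x - pt t y‖ = Real.exp t * (2 * |Real.sin (Real.pi * (x - y))|) := by
  have : pt t x = pt t y * pt 0 (x - y) := by rw [← pt_add]; congr 1; ring
  rw [this, ← norm_pt_zero_sub_one, ← norm_pt t y, ← norm_mul]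
  congr 1; ring

lemma norm_pt_sub_le (t x y : ℝ) : ‖pt t x - pt t y‖ ≤ Real.exp t * (2 * Real.pi * |x - y|) := by
  rw [norm_pt_sub]
  have := Real.abs_sin_le_abs (x := Real.pi * (x - y))
  rw [abs_mul, abs_of_pos Real.pi_pos] at this
  exact mul_le_mul_of_nonneg_left (by linarith) (Real.exp_pos t).le

/-- the sine bound -/
lemma abs_sin_ge (s : ℝ) (hs : |s| ≤ 1 / 2) : 2 * |s| ≤ |Real.sin (Real.pi * s)| := by
  wlog h : 0 ≤ s generalizing s
  · have := this (-s) (by rwa [abs_neg]) (by linarith)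
    rwa [abs_neg, mul_neg, Real.sin_neg, abs_neg] at this
  rw [abs_of_nonneg h] at hs ⊢
  have h1 := Real.mul_le_sin (x := Real.pi * s) (by positivity) (by nlinarith [Real.pi_pos])
  refine le_trans ?_ (le_abs_self _)
  calc 2 * s = 2 / Real.pi * (Real.pi * s) := by field_simp
    _ ≤ _ := h1

lemma norm_pt_sub_ge (t x y : ℝ) (h : |x - y| ≤ 1 / 2) :
    Real.exp t * (4 * |x - y|) ≤ ‖pt t x - pt t y‖ := by
  rw [norm_pt_sub]
  have := abs_sin_ge _ h
  exact mul_le_mul_of_nonneg_left (by linarith) (Real.exp_pos t).le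

/-- distance to the nearest integer version -/
lemma pt_close (t x y : ℝ) (ε : ℝ) (ht : 1 / 2 ≤ Real.exp t) (h : ‖pt t x - pt t y‖ < 2 * ε) :
    ∃ k : ℤ, |x - y - k| < ε := by
  refine ⟨round (x - y), ?_⟩
  have h1 : |x - y - round (x - y)| ≤ 1 / 2 := abs_sub_round _
  have h2 := abs_sin_ge _ h1
  have h3 : |Real.sin (Real.pi * (x - y - round (x - y)))| = |Real.sin (Real.pi * (x - y))| := by
    have : Real.pi * (x - y - round (x - y)) = Real.pi * (x - y) - (round (x - y) : ℤ) * Real.pi := by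
      ring
    rw [this, Real.sin_sub_int_mul_pi, abs_mul]
    have : |((-1 : ℝ)) ^ (round (x - y))| = 1 := by
      rw [abs_zpow]; simp
    rw [this, one_mul]
  rw [h3] at h2
  rw [norm_pt_sub] at h
  nlinarith [abs_nonneg (Real.sin (Real.pi * (x - y)))]

/-- difference of products -/
lemma Pr_sub_le {F G : ℕ → Mat} {C ε : ℝ} (n : ℕ) (hC : 1 ≤ C) (hF : ∀ j, ‖F j‖ ≤ C)
    (hG : ∀ j, ‖G j‖ ≤ C) (hFG : ∀ j < n, ‖F j - G j‖ ≤ ε) :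
    ‖Pr F n - Pr G n‖ ≤ n * C ^ n * ε := by
  induction n with
  | zero => simp [Pr]
  | succ n ih =>
    have h1 := ih (fun j hj => hFG j (by omega))
    have h2 := hFG n (by omega)
    have hε : 0 ≤ ε := (norm_nonneg _).trans h2
    have e : Pr F (n + 1) - Pr G (n + 1) = F n * (Pr F n - Pr G n) + (F n - G n) * Pr G n := by
      simp only [Pr]; noncomm_ring
    rw [e]
    calc _ ≤ ‖F n‖ * ‖Pr F n - Pr G n‖ + ‖F n - G n‖ * ‖Pr G n‖ :=
          (norm_add_le _ _).trans (add_le_add (norm_mul_le _ _) (norm_mul_le _ _))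
      _ ≤ C * (n * C ^ n * ε) + ε * C ^ n := by
          gcongr
          · exact hF n
          · exact Pr_norm_le hG n
      _ ≤ C * (n * C ^ n * ε) + ε * C ^ (n + 1) := by
          gcongr
          omega
      _ = _ := by push_cast; ring

lemma log_norm_mul_le {X Y : Mat} (hX : X.det = 1) (hY : Y.det = 1) :
    Real.log ‖X * Y‖ ≤ Real.log ‖X‖ + Real.log ‖Y‖ := by
  have h1 : 0 < ‖X‖ := lt_of_lt_of_le one_pos (one_le_norm X hX)
  have h2 : 0 < ‖Y‖ := lt_of_lt_of_le one_pos (one_le_norm Y hY)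
  have h3 : 0 < ‖X * Y‖ := lt_of_lt_of_le one_pos (one_le_norm _ (by
    rw [Matrix.det_mul, hX, hY, one_mul]))
  rw [← Real.log_mul h1.ne' h2.ne']
  exact Real.log_le_log h3 (norm_mul_le _ _)

/-- polynomial `p` -/
noncomputable def pfun (α : ℝ) (z : ℂ) : ℂ := z - (α / 2 : ℝ) * (z ^ 2 + 1)
/-- polynomial `e` -/
noncomputable def efun (E c : ℝ) (z : ℂ) : ℂ := E * z - (c / 2 : ℝ) * (z ^ 2 + 1)

/-- cocycle matrix -/
noncomputable def Amat (α E c : ℝ) (z : ℂ) : Mat := !![efun E c z / pfun α z, -1; 1, 0]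
/-- polynomial cocycle matrix -/
noncomputable def Dmat (α E c : ℝ) (z : ℂ) : Mat := !![efun E c z, -pfun α z; pfun α z, 0]

/-- The data of the model together with the constants. -/
structure Mod where
  (b α E c β T m C : ℝ)
  hb : Irrational b
  hβ : 0 < β
  hT : 0 < T
  hT2 : T ≤ Real.log 2
  hm : 0 < m
  hmp : ∀ t x, |t| ≤ T → m ≤ ‖pfun α (pt t x)‖
  hC1 : 1 ≤ C
  hCA : ∀ t x, |t| ≤ T → ‖Amat α E c (pt t x)‖ ≤ C
  hCL : ∀ t x y, |t| ≤ T → ‖Amat α E c (pt t x) - Amat α E c (pt t y)‖ ≤ C * |x - y|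
  hP : ∀ t, |t| ≤ T → ∫ x in (0:ℝ)..1, Real.log ‖pfun α (pt t x)‖ = Real.log β + t

namespace Mod
variable (M : Mod)

/-- iterates -/
noncomputable def An (a t x : ℝ) (n : ℕ) : Mat :=
  Pr (fun j => Amat M.α M.E M.c (pt t (x + j * a))) n
/-- polynomial iterates -/
noncomputable def Dn (a t x : ℝ) (n : ℕ) : Mat :=
  Pr (fun j => Dmat M.α M.E M.c (pt t (x + j * a))) n

lemma exp_ge (t : ℝ) (ht : |t| ≤ M.T) : 1 / 2 ≤ Real.exp t := by
  have h1 := M.hT2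
  have h2 := (abs_le.mp ht).1
  have : Real.exp (-Real.log 2) ≤ Real.exp t := Real.exp_le_exp.mpr (by linarith)
  rw [Real.exp_neg, Real.exp_log two_pos] at this
  linarith

lemma exp_le (t : ℝ) (ht : |t| ≤ M.T) : Real.exp t ≤ 2 := by
  have h1 := M.hT2
  have h2 := (abs_le.mp ht).2
  have : Real.exp t ≤ Real.exp (Real.log 2) := Real.exp_le_exp.mpr (by linarith)
  rwa [Real.exp_log two_pos] at this

lemma A_det (z : ℂ) : (Amat M.α M.E M.c z).det = 1 := by
  simp [Amat, Matrix.det_fin_two]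

lemma An_det (a t x : ℝ) (n : ℕ) : (M.An a t x n).det = 1 := Pr_det (fun _ => M.A_det _) n

lemma one_le_An (a t x : ℝ) (n : ℕ) : 1 ≤ ‖M.An a t x n‖ := one_le_norm _ (M.An_det a t x n)

lemma log_An_nonneg (a t x : ℝ) (n : ℕ) : 0 ≤ Real.log ‖M.An a t x n‖ :=
  Real.log_nonneg (M.one_le_An a t x n)

lemma An_shift (a t x : ℝ) (m n : ℕ) :
    Pr (fun j => Amat M.α M.E M.c (pt t (x + ((j + m : ℕ) : ℝ) * a))) n
      = M.An a t (x + m * a) n := by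
  unfold An
  congr 1
  ext1 j
  congr 2
  push_cast; ring

lemma An_add (a t x : ℝ) (m n : ℕ) :
    M.An a t x (m + n) = M.An a t (x + m * a) n * M.An a t x m := by
  rw [← An_shift, An, Pr_add]
  rfl

lemma An_periodic (a t x : ℝ) (n : ℕ) : M.An a t (x + 1) n = M.An a t x n := by
  unfold An
  congr 1
  ext1 j
  congr 1
  rw [← pt_periodic t (x + j * a)]
  congr 1; ring

lemma p_ne (t x : ℝ) (ht : |t| ≤ M.T) : pfun M.α (pt t x) ≠ 0 := by
  have := M.hmp t x ht
  have h2 := M.hm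
  intro h
  rw [h, norm_zero] at this
  linarith

lemma A_continuous (t : ℝ) (ht : |t| ≤ M.T) :
    Continuous (fun x => Amat M.α M.E M.c (pt t x)) := by
  rw [Metric.continuous_iff]
  intro x ε hε
  have hC := M.hC1
  refine ⟨ε / M.C, by positivity, fun y hy => ?_⟩
  rw [dist_eq_norm]
  refine (M.hCL t y x ht).trans_lt ?_
  rw [Real.dist_eq, lt_div_iff₀ (by positivity)] at hy
  linarith

lemma An_continuous (a t : ℝ) (ht : |t| ≤ M.T) (n : ℕ) :
    Continuous (fun x => M.An a t x n) := by
  induction n with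
  | zero => simp only [An, Pr]; exact continuous_const
  | succ n ih =>
    simp only [An, Pr] at ih ⊢
    refine Continuous.mul ?_ ih
    exact (M.A_continuous t ht).comp (by fun_prop)

lemma logAn_continuous (a t : ℝ) (ht : |t| ≤ M.T) (n : ℕ) :
    Continuous (fun x => Real.log ‖M.An a t x n‖) := by
  refine Continuous.log (M.An_continuous a t ht n).norm fun x => ?_
  have := M.one_le_An a t x n
  positivity

lemma An_norm_le (a t x : ℝ) (ht : |t| ≤ M.T) (n : ℕ) : ‖M.An a t x n‖ ≤ M.C ^ n :=
  Pr_norm_le (fun _ => M.hCA _ _ ht) n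

lemma An_lip (a t x y : ℝ) (ht : |t| ≤ M.T) (n : ℕ) :
    ‖M.An a t x n - M.An a t y n‖ ≤ n * M.C ^ n * (M.C * |x - y|) := by
  refine Pr_sub_le n M.hC1 (fun _ => M.hCA _ _ ht) (fun _ => M.hCA _ _ ht) fun j _ => ?_
  refine (M.hCL _ _ _ ht).trans_eq ?_
  congr 2; ring

lemma An_lip_freq (a a' t x : ℝ) (ht : |t| ≤ M.T) (n : ℕ) :
    ‖M.An a t x n - M.An a' t x n‖ ≤ n * M.C ^ n * (M.C * (n * |a - a'|)) := by
  have hC := M.hC1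
  refine Pr_sub_le n M.hC1 (fun _ => M.hCA _ _ ht) (fun _ => M.hCA _ _ ht) fun j hj => ?_
  refine (M.hCL _ _ _ ht).trans ?_
  have : x + j * a - (x + j * a') = j * (a - a') := by ring
  rw [this, abs_mul, abs_of_nonneg (Nat.cast_nonneg j)]
  gcongr

/-- integrals of the logarithm of the norm -/
noncomputable def I (t : ℝ) (n : ℕ) : ℝ := ∫ x in (0:ℝ)..1, Real.log ‖M.An M.b t x n‖

/-- Lyapunov exponent -/
noncomputable def L (t : ℝ) : ℝ := ⨅ n : ℕ+, ((n : ℕ) : ℝ)⁻¹ * M.I t n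

lemma I_nonneg (t : ℝ) (n : ℕ) : 0 ≤ M.I t n :=
  intervalIntegral.integral_nonneg zero_le_one fun _ _ => M.log_An_nonneg _ _ _ _

lemma L_bdd (t : ℝ) : BddBelow (Set.range fun n : ℕ+ => ((n : ℕ) : ℝ)⁻¹ * M.I t n) := by
  refine ⟨0, ?_⟩
  rintro _ ⟨n, rfl⟩
  have := M.I_nonneg t n
  positivity

lemma L_nonneg (t : ℝ) : 0 ≤ M.L t := by
  refine le_ciInf fun n => ?_
  have := M.I_nonneg t n
  positivity

lemma L_le_I (t : ℝ) (n : ℕ) : n * M.L t ≤ M.I t n := by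
  rcases Nat.eq_zero_or_pos n with rfl | hn
  · simpa using M.I_nonneg t 0
  · have := ciInf_le (M.L_bdd t) ⟨n, hn⟩
    have hn' : (0:ℝ) < n := by exact_mod_cast hn
    change M.L t ≤ (n:ℝ)⁻¹ * M.I t n at this
    rw [inv_mul_eq_div, le_div_iff₀ hn'] at this
    linarith

/-- Uniform upper bounds (S1). -/
lemma upper (t : ℝ) (ht : |t| ≤ M.T) (δ : ℝ) (hδ : 0 < δ) :
    ∃ n0 : ℕ, ∀ n ≥ n0, ∀ x, Real.log ‖M.An M.b t x n‖ ≤ n * (M.L t + δ) := by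
  have h1 : M.L t < M.L t + δ / 4 := by linarith
  obtain ⟨⟨m, hm⟩, hmL⟩ := exists_lt_of_ciInf_lt h1
  have hm' : (0:ℝ) < m := by exact_mod_cast hm
  change (m:ℝ)⁻¹ * M.I t m < M.L t + δ / 4 at hmL
  rw [inv_mul_eq_div, div_lt_iff₀ hm'] at hmL
  have hper : Function.Periodic (fun x => Real.log ‖M.An M.b t x m‖) 1 := fun x => by
    simp only [An_periodic]
  have hirr : Irrational (m * M.b) := M.hb.natCast_mul (by omega)
  obtain ⟨k0, hk0⟩ := weyl _ hper (M.logAn_continuous M.b t ht m) (m * M.b) hirr (m * δ / 4)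
    (by positivity)
  have hC := M.hC1
  have hblock : ∀ k x, Real.log ‖M.An M.b t x (m * k)‖ ≤
      ∑ j ∈ Finset.range k, Real.log ‖M.An M.b t (x + j * (m * M.b)) m‖ := by
    intro k
    induction k with
    | zero => intro x; simp [An, Pr]
    | succ k ih =>
      intro x
      rw [mul_add, mul_one, An_add, Finset.sum_range_succ]
      have e : x + ((m * k : ℕ):ℝ) * M.b = x + k * (m * M.b) := by push_cast; ring
      have h3 := log_norm_mul_le (M.An_det M.b t (x + ((m * k : ℕ):ℝ) * M.b) m)
        (M.An_det M.b t x (m * k))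
      have := ih x
      rw [← e]
      linarith
  obtain ⟨n1, hn1⟩ := exists_nat_gt (2 * (m * Real.log M.C) / δ)
  refine ⟨max (m * (k0 + 1)) n1, fun n hn x => ?_⟩
  have hd := Nat.div_add_mod n m
  have hl := Nat.mod_lt n hm
  set k := n / m with hk
  set l := n % m
  have hkk : k0 ≤ k := by
    rw [hk, Nat.le_div_iff_mul_le hm]
    have := (le_max_left _ _).trans hn
    nlinarith
  have h2 := hk0 k hkk x
  have h3 := hblock k x
  have h4 : Real.log ‖M.An M.b t x n‖ ≤ Real.log ‖M.An M.b t x (m * k)‖ + m * Real.log M.C := by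
    have h5 : ‖M.An M.b t x n‖ ≤ M.C ^ m * ‖M.An M.b t x (m * k)‖ := by
      rw [← hd, An_add]
      refine (norm_mul_le _ _).trans ?_
      gcongr
      refine (M.An_norm_le _ _ _ ht l).trans ?_
      exact pow_le_pow_right₀ hC hl.le
    have p2 : 0 < ‖M.An M.b t x (m * k)‖ := lt_of_lt_of_le one_pos (M.one_le_An M.b t x (m * k))
    have p3 : 0 < ‖M.An M.b t x n‖ := lt_of_lt_of_le one_pos (M.one_le_An M.b t x n)
    have p4 : M.C ^ m ≠ 0 := pow_ne_zero _ (by linarith)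
    have h6 := Real.log_le_log p3 h5
    rw [Real.log_mul p4 p2.ne', Real.log_pow] at h6
    linarith
  have h7 : 2 * (m * Real.log M.C) ≤ n * δ := by
    have : (n1:ℝ) ≤ n := by exact_mod_cast (le_max_right _ _).trans hn
    rw [div_lt_iff₀ hδ] at hn1
    nlinarith
  have hkn : (m:ℝ) * k ≤ n := by
    have : m * k ≤ n := by omega
    exact_mod_cast this
  have hI : ∫ y in (0:ℝ)..1, Real.log ‖M.An M.b t y m‖ = M.I t m := rfl
  rw [hI] at h2
  have hL := M.L_nonneg t
  have h8 : (k:ℝ) * M.I t m ≤ k * ((M.L t + δ / 4) * m) := by gcongr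
  have h9 : (m:ℝ) * k * (M.L t + δ / 2) ≤ n * (M.L t + δ / 2) := by gcongr
  have := (abs_le.mp h2).2
  nlinarith

end Mod
end GAA


namespace GAA
open scoped Matrix.Norms.L2Operator
open Polynomial MeasureTheory

/-- circle means of `log |g|` -/
noncomputable def J (g : ℂ[X]) (t : ℝ) : ℝ := ∫ x in (0:ℝ)..1, Real.log ‖g.eval (pt t x)‖

/-- scaled polynomial -/
noncomputable def scl (t : ℝ) (g : ℂ[X]) : ℂ[X] := g.comp (C ((Real.exp t : ℝ) : ℂ) * X)

lemma scl_eval (t : ℝ) (g : ℂ[X]) (x : ℝ) :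
    (scl t g).eval (circleMap 0 1 (2 * Real.pi * x)) = g.eval (pt t x) := by
  unfold scl
  rw [eval_comp]
  congr 1
  simp only [eval_mul, eval_C, eval_X, circleMap, pt]
  push_cast
  rw [Complex.exp_add]
  simp only [zero_add, one_mul]
  congr 2
  ring

lemma J_integrable (g : ℂ[X]) (t : ℝ) :
    IntervalIntegrable (fun x => Real.log ‖g.eval (pt t x)‖) volume 0 1 := by
  have h := (scl t g).intervalIntegrable_mahlerMeasure
  have h2 := h.comp_mul_left (c := 2 * Real.pi)
  have hpi := Real.pi_pos
  simp only [zero_div, div_self (by positivity : 2 * Real.pi ≠ 0)] at h2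
  simpa only [scl_eval] using h2

lemma J_eq_log (g : ℂ[X]) (t : ℝ) : J g t = (scl t g).logMahlerMeasure := by
  rw [logMahlerMeasure_def, Real.circleAverage_def, J]
  have hpi := Real.pi_pos
  have := intervalIntegral.integral_comp_mul_left (a := 0) (b := 1)
    (fun θ => Real.log ‖(scl t g).eval (circleMap 0 1 θ)‖) (c := 2 * Real.pi) (by positivity)
  simp only [scl_eval, mul_zero, mul_one] at this
  rw [this]

/-- the elementary Jensen functions -/
noncomputable def phi (w : ℂ) (t : ℝ) : ℝ := Real.log (max (Real.exp t) ‖w‖)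

lemma scl_X_sub_C (t : ℝ) (w : ℂ) : (scl t (X - C w)).mahlerMeasure = max (Real.exp t) ‖w‖ := by
  have h : scl t (X - C w) = C ((Real.exp t : ℝ) : ℂ) * X + C (-w) := by
    simp [scl, sub_eq_add_neg]
  rw [h, mahlerMeasure_C_mul_X_add_C]
  · simp
  · exact_mod_cast (Real.exp_pos t).ne'

lemma J_X_sub_C (t : ℝ) (w : ℂ) :
    ∫ x in (0:ℝ)..1, Real.log ‖pt t x - w‖ = phi w t := by
  have := J_eq_log (X - C w) t
  rw [logMahlerMeasure_eq_log_MahlerMeasure, scl_X_sub_C] at this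
  simpa [J, phi] using this

lemma scl_mahler (g : ℂ[X]) (t : ℝ) :
    (scl t g).mahlerMeasure = ‖g.leadingCoeff‖ * (g.roots.map fun w => max (Real.exp t) ‖w‖).prod := by
  have hg := (IsAlgClosed.splits g).eq_prod_roots
  have h1 : scl t g = C g.leadingCoeff * (g.roots.map fun w => scl t (X - C w)).prod := by
    conv_lhs => rw [hg]
    unfold scl
    rw [mul_comp, C_comp, multiset_prod_comp, Multiset.map_map]
    rfl
  rw [h1, mahlerMeasure_mul, mahlerMeasure_const, prod_mahlerMeasure_eq_mahlerMeasure_prod,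
    Multiset.map_map]
  congr 3
  ext1 w
  simp only [Function.comp]
  rw [scl_X_sub_C]

lemma log_multiset_prod (s : Multiset ℂ) (f : ℂ → ℝ) (hf : ∀ w ∈ s, 0 < f w) :
    Real.log (s.map f).prod = (s.map fun w => Real.log (f w)).sum := by
  induction s using Multiset.induction_on with
  | empty => simp
  | cons a s ih =>
    have hpos : 0 < (s.map f).prod := by
      apply Multiset.prod_pos
      intro y hy
      obtain ⟨w, hw, rfl⟩ := Multiset.mem_map.mp hy
      exact hf w (Multiset.mem_cons_of_mem hw)
    rw [Multiset.map_cons, Multiset.prod_cons, Multiset.map_cons, Multiset.sum_cons,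
      Real.log_mul (hf a (Multiset.mem_cons_self a s)).ne' hpos.ne',
      ih (fun w hw => hf w (Multiset.mem_cons_of_mem hw))]

/-- Jensen's formula -/
lemma J_formula (g : ℂ[X]) (hg : g ≠ 0) (t : ℝ) :
    J g t = Real.log ‖g.leadingCoeff‖ + (g.roots.map fun w => phi w t).sum := by
  rw [J_eq_log, logMahlerMeasure_eq_log_MahlerMeasure, scl_mahler]
  have h1 : ‖g.leadingCoeff‖ ≠ 0 := by simpa using hg
  have hpos : ∀ w ∈ g.roots, 0 < max (Real.exp t) ‖w‖ := fun w _ =>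
    lt_max_of_lt_left (Real.exp_pos t)
  have h2 : (g.roots.map fun w => max (Real.exp t) ‖w‖).prod ≠ 0 := by
    apply ne_of_gt
    apply Multiset.prod_pos
    intro y hy
    obtain ⟨w, hw, rfl⟩ := Multiset.mem_map.mp hy
    exact hpos w hw
  rw [Real.log_mul h1 h2, log_multiset_prod _ _ hpos]
  rfl

lemma phi_eq (w : ℂ) (hw : w ≠ 0) (t : ℝ) : phi w t = max t (Real.log ‖w‖) := by
  unfold phi
  have h : 0 < ‖w‖ := by simpa using hw
  rcases le_total (Real.exp t) ‖w‖ with h1 | h1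
  · rw [max_eq_right h1, max_eq_right]
    rwa [Real.le_log_iff_exp_le h]
  · rw [max_eq_left h1, Real.log_exp, max_eq_left]
    rwa [Real.log_le_iff_le_exp h]

lemma phi_zero (t : ℝ) : phi 0 t = t := by
  unfold phi
  rw [norm_zero, max_eq_left (Real.exp_pos t).le, Real.log_exp]

lemma phi_convex (w : ℂ) (s u a : ℝ) (ha : 0 ≤ a) (ha1 : a ≤ 1) :
    phi w ((1 - a) * s + a * u) ≤ (1 - a) * phi w s + a * phi w u := by
  by_cases hw : w = 0
  · subst hw; simp [phi_zero]
  · simp only [phi_eq w hw]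
    have h0 : 0 ≤ 1 - a := by linarith
    apply max_le
    · have := le_max_left s (Real.log ‖w‖)
      have := le_max_left u (Real.log ‖w‖)
      gcongr
    · have h1 := le_max_right s (Real.log ‖w‖)
      have h2 := le_max_right u (Real.log ‖w‖)
      nlinarith

lemma phi_mid (w : ℂ) (t h : ℝ) : 0 ≤ phi w (t + h) + phi w (t - h) - 2 * phi w t := by
  have := phi_convex w (t - h) (t + h) (1/2) (by norm_num) (by norm_num)
  have e : (1 - 1/2) * (t - h) + 1/2 * (t + h) = t := by ring
  rw [e] at this
  linarith

/-- near the circle of radius `exp t` -/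
def near (t h : ℝ) (w : ℂ) : Prop := Real.exp (t - h / 2) < ‖w‖ ∧ ‖w‖ < Real.exp (t + h / 2)

lemma phi_near (w : ℂ) (t h : ℝ) (hw : near t h w) :
    h / 2 ≤ phi w (t + h) + phi w (t - h) - 2 * phi w t := by
  obtain ⟨h1, h2⟩ := hw
  have h0 : 0 < ‖w‖ := lt_trans (Real.exp_pos _) h1
  have hw0 : w ≠ 0 := by simpa using h0
  rw [← Real.lt_log_iff_exp_lt h0] at h1
  rw [← Real.log_lt_iff_lt_exp h0] at h2
  simp only [phi_eq w hw0]
  have e1 := le_max_left (t + h) (Real.log ‖w‖)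
  have e2 := le_max_right (t - h) (Real.log ‖w‖)
  rcases max_cases t (Real.log ‖w‖) with ⟨h3, _⟩ | ⟨h3, _⟩ <;> rw [h3] <;> linarith

open Classical in
lemma sum_near (s : Multiset ℂ) (t h : ℝ) :
    (Multiset.card (s.filter (near t h)) : ℝ) * (h / 2) ≤ (s.map fun w => phi w (t + h)).sum
      + (s.map fun w => phi w (t - h)).sum - 2 * (s.map fun w => phi w t).sum := by
  induction s using Multiset.induction_on with
  | empty => simp
  | cons a s ih =>
    simp only [Multiset.map_cons, Multiset.sum_cons]
    by_cases ha : near t h a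
    · rw [Multiset.filter_cons_of_pos _ ha, Multiset.card_cons]
      have := phi_near a t h ha
      push_cast
      linarith
    · rw [Multiset.filter_cons_of_neg _ ha]
      have := phi_mid a t h
      linarith

open Classical in
lemma J_near (g : ℂ[X]) (hg : g ≠ 0) (t h : ℝ) :
    (Multiset.card (g.roots.filter (near t h)) : ℝ) * (h / 2) ≤
      J g (t + h) + J g (t - h) - 2 * J g t := by
  rw [J_formula g hg, J_formula g hg, J_formula g hg]
  have := sum_near g.roots t h
  linarith

lemma J_convex (g : ℂ[X]) (hg : g ≠ 0) (s u a : ℝ) (ha : 0 ≤ a) (ha1 : a ≤ 1) :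
    J g ((1 - a) * s + a * u) ≤ (1 - a) * J g s + a * J g u := by
  rw [J_formula g hg, J_formula g hg, J_formula g hg]
  have : (g.roots.map fun w => phi w ((1 - a) * s + a * u)).sum ≤
      (1 - a) * (g.roots.map fun w => phi w s).sum + a * (g.roots.map fun w => phi w u).sum := by
    induction g.roots using Multiset.induction_on with
    | empty => simp
    | cons b s' ih =>
      simp only [Multiset.map_cons, Multiset.sum_cons]
      have := phi_convex b s u a ha ha1
      linarith
  linarith

lemma J_coeff_zero (g : ℂ[X]) (h : g.coeff 0 ≠ 0) : Real.log ‖g.coeff 0‖ ≤ J g 0 := by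
  have e : scl 0 g = g := by simp [scl]
  rw [J_eq_log, logMahlerMeasure_eq_log_MahlerMeasure, e]
  apply Real.log_le_log (by simpa using h)
  simpa using norm_coeff_le_choose_mul_mahlerMeasure 0 g

/-- mean over the phase of a cubic -/
lemma cubic_mean (d : Fin 4 → ℂ) (i : Fin 4) (m : ℝ) (hm : 0 < m) (hi : m ≤ ‖d i‖) :
    Real.log m - Real.log 3 ≤ J (∑ j : Fin 4, C (d j) * X ^ (j : ℕ)) 0 := by
  set g : ℂ[X] := ∑ j : Fin 4, C (d j) * X ^ (j : ℕ) with hg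
  have e : scl 0 g = g := by simp [scl]
  have hdeg : g.natDegree ≤ 3 := by
    apply natDegree_sum_le_of_forall_le
    intro j _
    refine (natDegree_C_mul_X_pow_le _ _).trans ?_
    omega
  have hcoef : g.coeff (i : ℕ) = d i := by
    rw [hg, finsetSum_coeff]
    rw [Finset.sum_eq_single i]
    · simp
    · intro j _ hj
      rw [coeff_C_mul_X_pow, if_neg]
      intro h
      exact hj (Fin.ext h.symm)
    · simp
  have h1 := norm_coeff_le_choose_mul_mahlerMeasure (i : ℕ) g
  rw [hcoef] at h1
  have h2 : (g.natDegree.choose (i : ℕ) : ℝ) ≤ 3 := by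
    have h3 : g.natDegree.choose (i : ℕ) ≤ Nat.choose 3 i := Nat.choose_le_choose _ hdeg
    have h4 : Nat.choose 3 (i : ℕ) ≤ 3 := by fin_cases i <;> decide
    exact_mod_cast h3.trans h4
  have hmm := g.mahlerMeasure_nonneg
  have h5 : m ≤ 3 * g.mahlerMeasure := by nlinarith
  rw [J_eq_log, logMahlerMeasure_eq_log_MahlerMeasure, e]
  have h6 : 0 < g.mahlerMeasure := by linarith
  have := Real.log_le_log hm h5
  rw [Real.log_mul (by norm_num) h6.ne'] at this
  linarith

lemma pt_injOn : Set.InjOn (pt 0) (Set.Ioc 0 1) := by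
  intro x hx y hy hxy
  have h := norm_pt_sub 0 x y
  rw [hxy, sub_self, norm_zero, Real.exp_zero] at h
  have h1 : Real.sin (Real.pi * (x - y)) = 0 := by
    rw [← abs_eq_zero]; linarith
  obtain ⟨n, hn⟩ := Real.sin_eq_zero_iff.mp h1
  have h2 : (n:ℝ) = x - y := by
    have := Real.pi_pos
    have h3 : Real.pi * n = Real.pi * (x - y) := by linarith
    exact mul_left_cancel₀ this.ne' h3
  have h3 : n = 0 := by
    have a1 : (n:ℝ) < 1 := by linarith [hx.2, hy.1]
    have a2 : (-1:ℝ) < n := by linarith [hx.1, hy.2]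
    have a3 : n < 1 := by exact_mod_cast a1
    have a4 : -1 < n := by exact_mod_cast a2
    omega
  rw [h3] at h2
  push_cast at h2
  linarith

/-- the random linear combination -/
noncomputable def comb (d : Fin 4 → ℂ[X]) (w : ℂ) : ℂ[X] := ∑ j : Fin 4, C (w ^ (j : ℕ)) * d j

lemma comb_eval (d : Fin 4 → ℂ[X]) (w z : ℂ) :
    (comb d w).eval z = (∑ j : Fin 4, C ((d j).eval z) * X ^ (j : ℕ) : ℂ[X]).eval w := by
  simp only [comb, eval_finsetSum, eval_mul, eval_C, eval_pow, eval_X]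
  exact Finset.sum_congr rfl fun j _ => mul_comm _ _

lemma comb_norm_le (d : Fin 4 → ℂ[X]) (w z : ℂ) (hw : ‖w‖ = 1) (B : ℝ)
    (hB : ∀ j, ‖(d j).eval z‖ ≤ B) : ‖(comb d w).eval z‖ ≤ 4 * B := by
  simp only [comb, eval_finsetSum, eval_mul, eval_C]
  refine (norm_sum_le _ _).trans ?_
  have : ∀ j ∈ (Finset.univ : Finset (Fin 4)), ‖w ^ (j:ℕ) * (d j).eval z‖ ≤ B := by
    intro j _
    rw [norm_mul, norm_pow, hw, one_pow, one_mul]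
    exact hB j
  refine (Finset.sum_le_sum this).trans ?_
  simp

lemma choose_comb (d : Fin 4 → ℂ[X]) (t : ℝ) (m : ℝ → ℝ) (hmc : Continuous m) (hm0 : ∀ x, 0 < m x)
    (hm : ∀ x, ∃ i, m x ≤ ‖(d i).eval (pt t x)‖) :
    ∃ w : ℂ, ‖w‖ = 1 ∧ comb d w ≠ 0 ∧
      (∫ x in (0:ℝ)..1, Real.log (m x)) - Real.log 3 ≤ J (comb d w) t := by
  -- upper bound
  have hbd : ∃ B : ℝ, 1 ≤ B ∧ ∀ x ∈ Set.Icc (0:ℝ) 1, ∀ j, ‖(d j).eval (pt t x)‖ ≤ B := by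
    have : ∀ j, ∃ B, ∀ x ∈ Set.Icc (0:ℝ) 1, ‖(d j).eval (pt t x)‖ ≤ B := fun j =>
      isCompact_Icc.exists_bound_of_continuousOn
        (((d j).continuous.comp (pt_continuous t)).continuousOn)
    choose B hB using this
    refine ⟨1 + ∑ j, |B j|, ?_, fun x hx j => ?_⟩
    · have : 0 ≤ ∑ j, |B j| := Finset.sum_nonneg fun _ _ => abs_nonneg _
      linarith
    · have h1 := hB j x hx
      have h2 := Finset.single_le_sum (f := fun j => |B j|) (fun _ _ => abs_nonneg _)
        (Finset.mem_univ j)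
      have h3 := le_abs_self (B j)
      linarith
  obtain ⟨B, hB1, hB⟩ := hbd
  set K := Real.log (4 * B) with hK
  have hK0 : 0 ≤ K := Real.log_nonneg (by linarith)
  have hlogK : ∀ x ∈ Set.Icc (0:ℝ) 1, ∀ s,
      Real.log ‖(comb d (pt 0 s)).eval (pt t x)‖ ≤ K := by
    intro x hx s
    have h1 := comb_norm_le d (pt 0 s) (pt t x) (by rw [norm_pt, Real.exp_zero]) B (hB x hx)
    rcases (norm_nonneg ((comb d (pt 0 s)).eval (pt t x))).eq_or_lt with h | h
    · rw [← h, Real.log_zero]; exact hK0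
    · exact Real.log_le_log h h1
  set μ : Measure ℝ := volume.restrict (Set.Ioc (0:ℝ) 1) with hμ
  have : IsProbabilityMeasure μ := ⟨by simp [hμ]⟩
  have haeI : ∀ᵐ x ∂μ, x ∈ Set.Ioc (0:ℝ) 1 := ae_restrict_mem measurableSet_Ioc
  set F : ℝ → ℝ → ENNReal := fun s x =>
    ENNReal.ofReal (K - Real.log ‖(comb d (pt 0 s)).eval (pt t x)‖) with hF
  have hmeas : Measurable (Function.uncurry F) := by
    have hc : Continuous (fun p : ℝ × ℝ => (comb d (pt 0 p.1)).eval (pt t p.2)) := by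
      simp only [comb, eval_finsetSum, eval_mul, eval_C]
      refine continuous_finsetSum _ fun j _ => Continuous.mul ?_ ?_
      · exact ((pt_continuous 0).comp continuous_fst).pow _
      · exact (d j).continuous.comp ((pt_continuous t).comp continuous_snd)
    have h1 : Measurable (fun p : ℝ × ℝ => Real.log ‖(comb d (pt 0 p.1)).eval (pt t p.2)‖) :=
      Real.measurable_log.comp hc.norm.measurable
    exact (measurable_const.sub h1).ennreal_ofReal
  have hswap := lintegral_lintegral_swap (μ := μ) (ν := μ) (f := F) hmeas.aemeasurable
  -- inner integral
  have hlogm : Continuous (fun x => Real.log (m x)) := hmc.log fun x => (hm0 x).ne'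
  have hmK : ∀ x ∈ Set.Icc (0:ℝ) 1, 0 ≤ K - (Real.log (m x) - Real.log 3) := by
    intro x hx
    obtain ⟨i, hi⟩ := hm x
    have h1 : m x ≤ 4 * B := by
      have := hB x hx i
      linarith
    have := Real.log_le_log (hm0 x) h1
    have h3 : 0 ≤ Real.log 3 := Real.log_nonneg (by norm_num)
    linarith
  have hinner : ∀ x ∈ Set.Ioc (0:ℝ) 1, ∫⁻ s, F s x ∂μ ≤
      ENNReal.ofReal (K - (Real.log (m x) - Real.log 3)) := by
    intro x hx
    have hx' : x ∈ Set.Icc (0:ℝ) 1 := ⟨hx.1.le, hx.2⟩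
    set q : ℂ[X] := ∑ j : Fin 4, C ((d j).eval (pt t x)) * X ^ (j : ℕ) with hq
    have hIntg : Integrable (fun s => Real.log ‖q.eval (pt 0 s)‖) μ := by
      have := J_integrable q 0
      rwa [intervalIntegrable_iff_integrableOn_Ioc_of_le zero_le_one] at this
    have hF2 : ∀ s, F s x = ENNReal.ofReal (K - Real.log ‖q.eval (pt 0 s)‖) := by
      intro s; simp only [hF, comb_eval, hq]
    simp only [hF2]
    rw [← ofReal_integral_eq_lintegral_ofReal]
    · apply ENNReal.ofReal_le_ofReal
      rw [integral_sub (integrable_const _) hIntg]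
      obtain ⟨i, hi⟩ := hm x
      have h1 := cubic_mean (fun j => (d j).eval (pt t x)) i (m x) (hm0 x) hi
      have h2 : ∫ s, Real.log ‖q.eval (pt 0 s)‖ ∂μ = J q 0 := by
        rw [J, intervalIntegral.integral_of_le zero_le_one]
      rw [h2]
      simp only [integral_const, probReal_univ, one_smul]
      rw [← hq] at h1
      linarith
    · exact (integrable_const _).sub hIntg
    · refine Filter.Eventually.of_forall fun s => ?_
      have := hlogK x hx' s
      rw [comb_eval] at this
      simp only [Pi.zero_apply]
      linarith
  have hlogmInt : Integrable (fun x => Real.log (m x)) μ := by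
    have := hlogm.intervalIntegrable (μ := volume) 0 1
    rwa [intervalIntegrable_iff_integrableOn_Ioc_of_le zero_le_one] at this
  have hsplit : ∫ x in (0:ℝ)..1, (K - (Real.log (m x) - Real.log 3))
      = K - ((∫ x in (0:ℝ)..1, Real.log (m x)) - Real.log 3) := by
    have e : (fun x => K - (Real.log (m x) - Real.log 3))
        = fun x => (K + Real.log 3) - Real.log (m x) := by
      ext1 x; ring
    rw [e, intervalIntegral.integral_sub intervalIntegrable_const (hlogm.intervalIntegrable _ _),
      intervalIntegral.integral_const]
    simp only [sub_zero, one_smul]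
    ring
  have htotal : ∫⁻ s, ∫⁻ x, F s x ∂μ ∂μ ≤
      ENNReal.ofReal (K - ((∫ x in (0:ℝ)..1, Real.log (m x)) - Real.log 3)) := by
    rw [hswap]
    calc ∫⁻ x, ∫⁻ s, F s x ∂μ ∂μ
        ≤ ∫⁻ x, ENNReal.ofReal (K - (Real.log (m x) - Real.log 3)) ∂μ := by
          apply lintegral_mono_ae
          filter_upwards [haeI] with x hx using hinner x hx
      _ = ENNReal.ofReal (∫ x, (K - (Real.log (m x) - Real.log 3)) ∂μ) := by
          rw [ofReal_integral_eq_lintegral_ofReal]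
          · exact (integrable_const _).sub (hlogmInt.sub (integrable_const _))
          · filter_upwards [haeI] with x hx using hmK x ⟨hx.1.le, hx.2⟩
      _ = _ := by
          rw [← hsplit, intervalIntegral.integral_of_le zero_le_one]
  -- null set
  set q0 : ℂ[X] := ∑ j : Fin 4, C ((d j).eval (pt t 0)) * X ^ (j : ℕ) with hq0
  have hq0ne : q0 ≠ 0 := by
    intro h0
    obtain ⟨i, hi⟩ := hm 0
    have hcoef : q0.coeff (i : ℕ) = (d i).eval (pt t 0) := by
      rw [hq0, finsetSum_coeff, Finset.sum_eq_single i]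
      · simp
      · intro j _ hj
        rw [coeff_C_mul_X_pow, if_neg]
        intro h
        exact hj (Fin.ext h.symm)
      · simp
    rw [h0, coeff_zero] at hcoef
    rw [← hcoef, norm_zero] at hi
    linarith [hm0 0]
  set Nn : Set ℝ := (Set.Ioc (0:ℝ) 1 ∩ pt 0 ⁻¹' (q0.rootSet ℂ)) ∪ (Set.Ioc (0:ℝ) 1)ᶜ with hNn
  have hNnull : μ Nn = 0 := by
    apply measure_union_null
    · have hfin : (Set.Ioc (0:ℝ) 1 ∩ pt 0 ⁻¹' (q0.rootSet ℂ)).Finite := by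
        apply Set.Finite.of_finite_image (f := pt 0)
        · exact (q0.rootSet_finite ℂ).subset (by rintro _ ⟨x, hx, rfl⟩; exact hx.2)
        · exact pt_injOn.mono Set.inter_subset_left
      have h1 : volume (Set.Ioc (0:ℝ) 1 ∩ pt 0 ⁻¹' (q0.rootSet ℂ)) = 0 := hfin.measure_zero _
      exact Measure.absolutelyContinuous_of_le Measure.restrict_le_self h1
    · rw [hμ, Measure.restrict_apply measurableSet_Ioc.compl]
      simp
  obtain ⟨s, hs, hle⟩ := exists_notMem_null_le_lintegral (μ := μ) (f := fun s => ∫⁻ x, F s x ∂μ)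
    (hmeas.lintegral_prod_right').aemeasurable hNnull
  refine ⟨pt 0 s, by rw [norm_pt, Real.exp_zero], ?_, ?_⟩
  · intro h0
    apply hs
    by_cases hsI : s ∈ Set.Ioc (0:ℝ) 1
    · left
      refine ⟨hsI, ?_⟩
      rw [Set.mem_preimage, mem_rootSet]
      refine ⟨hq0ne, ?_⟩
      have := comb_eval d (pt 0 s) (pt t 0)
      rw [h0, eval_zero] at this
      rw [coe_aeval_eq_eval]
      exact this.symm
    · right; exact hsI
  · have h1 := hle.trans htotal
    simp only [hF] at h1
    have hIntg : Integrable (fun x => Real.log ‖(comb d (pt 0 s)).eval (pt t x)‖) μ := by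
      have := J_integrable (comb d (pt 0 s)) t
      rwa [intervalIntegrable_iff_integrableOn_Ioc_of_le zero_le_one] at this
    rw [← ofReal_integral_eq_lintegral_ofReal] at h1
    · rw [ENNReal.ofReal_le_ofReal_iff] at h1
      · rw [integral_sub (integrable_const _) hIntg] at h1
        have h2 : ∫ x, Real.log ‖(comb d (pt 0 s)).eval (pt t x)‖ ∂μ = J (comb d (pt 0 s)) t := by
          rw [J, intervalIntegral.integral_of_le zero_le_one]
        rw [h2] at h1
        simp only [integral_const, probReal_univ, one_smul] at h1
        linarith
      · have h2 : 0 ≤ ∫ x in (0:ℝ)..1, (K - (Real.log (m x) - Real.log 3)) :=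
          intervalIntegral.integral_nonneg zero_le_one hmK
        rwa [hsplit] at h2
    · exact (integrable_const _).sub hIntg
    · filter_upwards [haeI] with x hx
      have := hlogK x ⟨hx.1.le, hx.2⟩ s
      simp only [Pi.zero_apply]
      linarith

end GAA


namespace GAA
open scoped Matrix.Norms.L2Operator
open Polynomial MeasureTheory

lemma Pr_map {R S : Type*} [Monoid R] [Monoid S] (f : R →* S) (F : ℕ → R) (n : ℕ) :
    f (Pr F n) = Pr (fun j => f (F j)) n := by
  induction n with
  | zero => simp [Pr]
  | succ n ih => simp [Pr, ih]

lemma Pr_const {R : Type*} [Monoid R] (x : R) (n : ℕ) : Pr (fun _ => x) n = x ^ n := by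
  induction n with
  | zero => simp [Pr]
  | succ n ih => rw [Pr, ih, pow_succ']

lemma Pr_smul (a : ℕ → ℂ) (F : ℕ → Mat) (n : ℕ) :
    Pr (fun j => a j • F j) n = (∏ j ∈ Finset.range n, a j) • Pr F n := by
  induction n with
  | zero => simp [Pr]
  | succ n ih =>
    rw [Pr, ih, Pr, Finset.prod_range_succ, smul_mul_smul_comm, mul_comm (a n)]

/-- polynomial version of the one step matrix -/
noncomputable def PDm (α E c : ℝ) (ζ : ℂ) : Matrix (Fin 2) (Fin 2) ℂ[X] :=
  !![C (E * ζ) * X - C ((c / 2 : ℝ) : ℂ) * (C (ζ ^ 2) * X ^ 2 + 1),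
     -(C ζ * X - C ((α / 2 : ℝ) : ℂ) * (C (ζ ^ 2) * X ^ 2 + 1));
     C ζ * X - C ((α / 2 : ℝ) : ℂ) * (C (ζ ^ 2) * X ^ 2 + 1), 0]

lemma PDm_eval (α E c : ℝ) (ζ z : ℂ) :
    (evalRingHom z).mapMatrix (PDm α E c ζ) = Dmat α E c (ζ * z) := by
  ext i j
  fin_cases i <;> fin_cases j <;> simp only [PDm, Dmat, efun, pfun, Fin.zero_eta, Fin.isValue,
    Fin.mk_one, RingHom.mapMatrix_apply, Matrix.map_apply,
    Matrix.of_apply, Matrix.cons_val', Matrix.cons_val_zero, Matrix.cons_val_fin_one,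
    Matrix.cons_val_one, coe_evalRingHom, eval_neg, eval_zero, eval_sub, eval_mul, eval_add,
    eval_pow, eval_C, eval_X, eval_one] <;> ring

lemma natDegree_aux (a b d : ℂ) : (C a * X - C b * (C d * X ^ 2 + 1) : ℂ[X]).natDegree ≤ 2 := by
  compute_degree

lemma PDm_deg (α E c : ℝ) (ζ : ℂ) (i j : Fin 2) : (PDm α E c ζ i j).natDegree ≤ 2 := by
  fin_cases i <;> fin_cases j <;> simp only [PDm, Fin.zero_eta, Fin.isValue, Fin.mk_one,
    Matrix.of_apply, Matrix.cons_val', Matrix.cons_val_zero, Matrix.cons_val_fin_one,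
    Matrix.cons_val_one, natDegree_neg, natDegree_zero, Nat.zero_le]
  all_goals exact natDegree_aux _ _ _

lemma coeff_aux (a b d : ℂ) : (C a * X - C b * (C d * X ^ 2 + 1) : ℂ[X]).coeff 2 = - (b * d) := by
  simp [coeff_one]

lemma PDm_coeff (α E c : ℝ) (ζ : ℂ) :
    (PDm α E c ζ).map (fun p => p.coeff 2) = ζ ^ 2 • Dmat α E c 0 := by
  ext i j
  fin_cases i <;> fin_cases j <;> simp only [PDm, Dmat, efun, pfun, Fin.zero_eta, Fin.isValue,
    Fin.mk_one, Matrix.map_apply, Matrix.smul_apply,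
    Matrix.of_apply, Matrix.cons_val', Matrix.cons_val_zero, Matrix.cons_val_fin_one,
    Matrix.cons_val_one, coeff_neg, coeff_zero, coeff_aux, smul_eq_mul] <;> ring

lemma Pr_deg {F : ℕ → Matrix (Fin 2) (Fin 2) ℂ[X]} (hF : ∀ k i j, (F k i j).natDegree ≤ 2) (n : ℕ) :
    ∀ i j, (Pr F n i j).natDegree ≤ 2 * n := by
  induction n with
  | zero =>
    intro i j
    simp only [Pr, Matrix.one_apply]
    split_ifs <;> simp
  | succ n ih =>
    intro i j
    simp only [Pr, Matrix.mul_apply]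
    apply natDegree_sum_le_of_forall_le
    intro k _
    refine natDegree_mul_le.trans ?_
    have h1 := hF n i k
    have h2 := ih k j
    omega

lemma Pr_coeff {F : ℕ → Matrix (Fin 2) (Fin 2) ℂ[X]} (hF : ∀ k i j, (F k i j).natDegree ≤ 2) (n : ℕ) :
    (Pr F n).map (fun p => p.coeff (2 * n)) = Pr (fun k => (F k).map (fun p => p.coeff 2)) n := by
  induction n with
  | zero =>
    ext i j
    simp only [Pr, Matrix.one_apply, Matrix.map_apply]
    split_ifs <;> simp
  | succ n ih =>
    simp only [Pr]
    rw [← ih]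
    ext i j
    simp only [Matrix.map_apply, Matrix.mul_apply, finsetSum_coeff]
    refine Finset.sum_congr rfl fun k _ => ?_
    have := coeff_mul_add_eq_of_natDegree_le (hF n i k) (Pr_deg hF n k j)
    rw [← this]
    congr 1
    ring

namespace Mod
variable (M : Mod)

/-- polynomial iterates -/
noncomputable def PD (a : ℝ) (n : ℕ) : Matrix (Fin 2) (Fin 2) ℂ[X] :=
  Pr (fun j => PDm M.α M.E M.c (pt 0 (j * a))) n

lemma PD_eval (a t x : ℝ) (n : ℕ) (i j : Fin 2) :
    (M.PD a n i j).eval (pt t x) = M.Dn a t x n i j := by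
  have h := Pr_map ((evalRingHom (pt t x)).mapMatrix : Matrix (Fin 2) (Fin 2) ℂ[X] →+* Mat).toMonoidHom
    (fun j => PDm M.α M.E M.c (pt 0 (j * a))) n
  have h2 : ∀ k : ℕ, ((evalRingHom (pt t x)).mapMatrix : Matrix (Fin 2) (Fin 2) ℂ[X] →+* Mat).toMonoidHom
      (PDm M.α M.E M.c (pt 0 (k * a))) = Dmat M.α M.E M.c (pt t (x + k * a)) := by
    intro k
    rw [pt_add, mul_comm (pt t x)]
    exact PDm_eval _ _ _ _ _
  simp only [h2] at h
  have h3 := congrFun (congrFun h i) j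
  exact h3

lemma PD_deg (a : ℝ) (n : ℕ) (i j : Fin 2) : (M.PD a n i j).natDegree ≤ 2 * n :=
  Pr_deg (fun _ => PDm_deg _ _ _ _) n i j

lemma Dmat_eq (z : ℂ) (hz : pfun M.α z ≠ 0) :
    Dmat M.α M.E M.c z = pfun M.α z • Amat M.α M.E M.c z := by
  ext i j
  fin_cases i <;> fin_cases j <;> simp [Dmat, Amat]
  field_simp

lemma Dn_eq (a t x : ℝ) (ht : |t| ≤ M.T) (n : ℕ) :
    M.Dn a t x n = (∏ j ∈ Finset.range n, pfun M.α (pt t (x + j * a))) • M.An a t x n := by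
  unfold Dn An
  rw [← Pr_smul]
  congr 1
  ext1 j
  exact M.Dmat_eq _ (M.p_ne _ _ ht)

/-- logarithm of `|p|` -/
noncomputable def lp (t x : ℝ) : ℝ := Real.log ‖pfun M.α (pt t x)‖

lemma lp_periodic (t : ℝ) : Function.Periodic (M.lp t) 1 := fun x => by
  simp only [lp, pt_periodic]

lemma lp_continuous (t : ℝ) (ht : |t| ≤ M.T) : Continuous (M.lp t) := by
  unfold lp
  refine Continuous.log ?_ fun x => by simpa using M.p_ne t x ht
  have := pt_continuous t
  unfold pfun
  fun_prop

lemma lp_int (t : ℝ) (ht : |t| ≤ M.T) : ∫ x in (0:ℝ)..1, M.lp t x = Real.log M.β + t := M.hP t ht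

lemma log_Dn (a t x : ℝ) (ht : |t| ≤ M.T) (n : ℕ) :
    Real.log ‖M.Dn a t x n‖ = ∑ j ∈ Finset.range n, M.lp t (x + j * a)
      + Real.log ‖M.An a t x n‖ := by
  have h1 : ‖∏ j ∈ Finset.range n, pfun M.α (pt t (x + j * a))‖ ≠ 0 := by
    rw [norm_ne_zero_iff, Finset.prod_ne_zero_iff]
    exact fun j _ => M.p_ne _ _ ht
  have h2 : ‖M.An a t x n‖ ≠ 0 := (lt_of_lt_of_le one_pos (M.one_le_An a t x n)).ne'
  rw [M.Dn_eq a t x ht, norm_smul, Real.log_mul h1 h2, norm_prod, Real.log_prod]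
  · rfl
  · intro j _
    simpa using M.p_ne _ _ ht

lemma Dn_pos (a t x : ℝ) (ht : |t| ≤ M.T) (n : ℕ) : 0 < ‖M.Dn a t x n‖ := by
  have h1 : 0 < ‖∏ j ∈ Finset.range n, pfun M.α (pt t (x + j * a))‖ := by
    rw [norm_pos_iff, Finset.prod_ne_zero_iff]
    exact fun j _ => M.p_ne _ _ ht
  have h2 : 0 < ‖M.An a t x n‖ := lt_of_lt_of_le one_pos (M.one_le_An a t x n)
  rw [M.Dn_eq a t x ht, norm_smul]
  positivity

lemma Dn_continuous (a t : ℝ) (n : ℕ) : Continuous (fun x => M.Dn a t x n) := by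
  have : (fun x => M.Dn a t x n) = fun x => Matrix.of fun i j => (M.PD a n i j).eval (pt t x) := by
    ext x i j
    simp [PD_eval]
  rw [this]
  refine continuous_matrix fun i j => ?_
  exact (M.PD a n i j).continuous.comp (pt_continuous t)

lemma int_log_Dn (a t : ℝ) (ht : |t| ≤ M.T) (n : ℕ) :
    ∫ x in (0:ℝ)..1, Real.log ‖M.Dn a t x n‖ = n * (Real.log M.β + t)
      + ∫ x in (0:ℝ)..1, Real.log ‖M.An a t x n‖ := by
  simp only [M.log_Dn a t _ ht]
  have hc := M.lp_continuous t ht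
  rw [intervalIntegral.integral_add, intervalIntegral.integral_finsetSum]
  · congr 1
    have : ∀ j ∈ Finset.range n, ∫ x in (0:ℝ)..1, M.lp t (x + j * a) = Real.log M.β + t := by
      intro j _
      rw [intervalIntegral.integral_comp_add_right (fun x => M.lp t x), zero_add, ← M.lp_int t ht]
      have := (M.lp_periodic t).intervalIntegral_add_eq (j * a) 0
      rw [zero_add] at this
      rw [← this, add_comm]
    rw [Finset.sum_congr rfl this]
    simp
    ring
  · intro j _
    exact Continuous.intervalIntegrable (by fun_prop) _ _
  · exact Continuous.intervalIntegrable (by fun_prop) _ _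
  · exact (M.logAn_continuous a t ht n).intervalIntegrable _ _

/-- The auxiliary polynomial. -/
lemma exists_g (t : ℝ) (ht : |t| ≤ M.T) (N : ℕ) : ∃ g : ℂ[X], g ≠ 0 ∧ g.natDegree ≤ 2 * N ∧
    (∀ t x, ‖g.eval (pt t x)‖ ≤ 4 * ‖M.Dn M.b t x N‖) ∧
    M.I t N + N * (Real.log M.β + t) - Real.log 6 ≤ J g t := by
  set d : Fin 4 → ℂ[X] := ![M.PD M.b N 0 0, M.PD M.b N 0 1, M.PD M.b N 1 0, M.PD M.b N 1 1] with hd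
  have hdeg : ∀ i, (d i).natDegree ≤ 2 * N := by
    intro i
    fin_cases i <;> exact M.PD_deg _ _ _ _
  have hle : ∀ t x i, ‖(d i).eval (pt t x)‖ ≤ ‖M.Dn M.b t x N‖ := by
    intro t x i
    fin_cases i <;> simp only [hd, Fin.zero_eta, Fin.isValue, Fin.mk_one, Fin.reduceFinMk,
      Matrix.cons_val, PD_eval] <;> exact norm_entry_le _ _ _
  have hDpos := fun x => M.Dn_pos M.b t x ht N
  have hDc := (M.Dn_continuous M.b t N).norm
  obtain ⟨w, hw, hne, hJ⟩ := choose_comb d t (fun x => ‖M.Dn M.b t x N‖ / 2) (by fun_prop)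
    (fun x => by have := hDpos x; positivity) (by
      intro x
      by_contra hcon
      push Not at hcon
      set m := max (max ‖(d 0).eval (pt t x)‖ ‖(d 1).eval (pt t x)‖)
        (max ‖(d 2).eval (pt t x)‖ ‖(d 3).eval (pt t x)‖) with hm
      have hmlt : m < ‖M.Dn M.b t x N‖ / 2 :=
        max_lt (max_lt (hcon 0) (hcon 1)) (max_lt (hcon 2) (hcon 3))
      have := norm_le_entries (M.Dn M.b t x N) m (by
        intro i j
        rw [← PD_eval]
        fin_cases i <;> fin_cases j
        · exact (le_max_left _ _).trans (le_max_left _ _)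
        · exact (le_max_right _ _).trans (le_max_left _ _)
        · exact (le_max_left _ _).trans (le_max_right _ _)
        · exact (le_max_right _ _).trans (le_max_right _ _))
      linarith)
  refine ⟨comb d w, hne, ?_, fun t x => comb_norm_le d w _ hw _ (hle t x), ?_⟩
  · unfold comb
    apply natDegree_sum_le_of_forall_le
    intro j _
    exact (natDegree_C_mul_le _ _).trans (hdeg j)
  · refine le_trans ?_ hJ
    have hdiv : ∀ x, Real.log (‖M.Dn M.b t x N‖ / 2) = Real.log ‖M.Dn M.b t x N‖ - Real.log 2 :=
      fun x => Real.log_div (hDpos x).ne' (by norm_num)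
    simp only [hdiv]
    rw [intervalIntegral.integral_sub ((hDc.log fun x => (hDpos x).ne').intervalIntegrable _ _)
      intervalIntegrable_const, M.int_log_Dn M.b t ht, intervalIntegral.integral_const]
    have h6 : Real.log 6 = Real.log 2 + Real.log 3 := by
      rw [← Real.log_mul (by norm_num) (by norm_num)]; norm_num
    rw [h6]
    simp only [sub_zero, one_smul, I]
    linarith

lemma J_upper (g : ℂ[X]) (N : ℕ)
    (hg : ∀ t x, ‖g.eval (pt t x)‖ ≤ 4 * ‖M.Dn M.b t x N‖) (hg0 : g ≠ 0) (t : ℝ) (ht : |t| ≤ M.T) :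
    J g t ≤ Real.log 4 + M.I t N + N * (Real.log M.β + t) := by
  have hDpos := fun x => M.Dn_pos M.b t x ht N
  have hDc := (M.Dn_continuous M.b t N).norm
  have hDl : Continuous fun x => Real.log ‖M.Dn M.b t x N‖ := hDc.log fun x => (hDpos x).ne'
  have hIntg : IntervalIntegrable (fun x => Real.log 4 + Real.log ‖M.Dn M.b t x N‖) volume 0 1 :=
    (continuous_const.add hDl).intervalIntegrable _ _
  have hfin : {x ∈ Set.Ioc (0:ℝ) 1 | g.eval (pt t x) = 0}.Finite := by
    apply Set.Finite.of_finite_image (f := pt t)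
    · refine (g.rootSet_finite ℂ).subset ?_
      rintro _ ⟨x, hx, rfl⟩
      rw [mem_rootSet]
      exact ⟨hg0, by rw [coe_aeval_eq_eval]; exact hx.2⟩
    · intro x hx y hy hxy
      apply pt_injOn hx.1 hy.1
      have e : ∀ x, pt t x = pt t 0 * pt 0 x := fun x => by rw [← pt_add, zero_add]
      rw [e x, e y] at hxy
      refine mul_left_cancel₀ ?_ hxy
      rw [← norm_pos_iff, norm_pt]
      exact Real.exp_pos t
  have hmono : J g t ≤ ∫ x in (0:ℝ)..1, (Real.log 4 + Real.log ‖M.Dn M.b t x N‖) := by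
    unfold J
    apply intervalIntegral.integral_mono_ae_restrict zero_le_one (J_integrable g t) hIntg
    have h1 : ∀ᵐ x ∂(volume : Measure ℝ), x ∉ {x ∈ Set.Ioc (0:ℝ) 1 | g.eval (pt t x) = 0} :=
      measure_eq_zero_iff_ae_notMem.mp (hfin.measure_zero _)
    have h0 : ∀ᵐ x ∂(volume : Measure ℝ), x ≠ 0 := by simp [ae_iff]
    have h2 := ae_restrict_of_ae (s := Set.Icc (0:ℝ) 1) h1
    have h00 := ae_restrict_of_ae (s := Set.Icc (0:ℝ) 1) h0
    filter_upwards [h2, h00, ae_restrict_mem measurableSet_Icc] with x hx hx0 hxI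
    have hne : g.eval (pt t x) ≠ 0 := fun h => hx ⟨⟨lt_of_le_of_ne hxI.1 (Ne.symm hx0), hxI.2⟩, h⟩
    rw [← Real.log_mul (by norm_num) (hDpos x).ne']
    exact Real.log_le_log (by simpa using hne) (hg t x)
  rw [intervalIntegral.integral_add intervalIntegrable_const (hDl.intervalIntegrable _ _),
    M.int_log_Dn M.b t ht, intervalIntegral.integral_const] at hmono
  simp only [sub_zero, one_smul] at hmono
  unfold I
  linarith

lemma I_upper (t : ℝ) (ht : |t| ≤ M.T) (δ : ℝ) (hδ : 0 < δ) :
    ∃ n0 : ℕ, ∀ n ≥ n0, M.I t n ≤ n * (M.L t + δ) := by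
  obtain ⟨n0, h⟩ := M.upper t ht δ hδ
  refine ⟨n0, fun n hn => ?_⟩
  unfold I
  have := intervalIntegral.integral_mono_on (μ := volume) zero_le_one
    ((M.logAn_continuous M.b t ht n).intervalIntegrable 0 1)
    (g := fun _ => (n:ℝ) * (M.L t + δ)) intervalIntegrable_const (fun x _ => h n hn x)
  simpa using this

lemma L_convex (s u a : ℝ) (hs : |s| ≤ M.T) (hu : |u| ≤ M.T) (ha : 0 ≤ a) (ha1 : a ≤ 1) :
    M.L ((1 - a) * s + a * u) ≤ (1 - a) * M.L s + a * M.L u := by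
  set t := (1 - a) * s + a * u with htdef
  have ht : |t| ≤ M.T := by
    rw [abs_le] at hs hu ⊢
    constructor <;> nlinarith [hs.1, hs.2, hu.1, hu.2]
  apply le_of_forall_pos_le_add
  intro ε hε
  obtain ⟨n1, h1⟩ := M.I_upper s hs (ε/2) (by positivity)
  obtain ⟨n2, h2⟩ := M.I_upper u hu (ε/2) (by positivity)
  obtain ⟨n3, h3⟩ := exists_nat_gt ((Real.log 4 + Real.log 6) / (ε/2))
  set n := max (max n1 n2) (n3 + 1) with hn
  have hn0 : (0:ℝ) < n := by
    have : 0 < n := by omega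
    exact_mod_cast this
  have i1 := h1 n (by omega)
  have i2 := h2 n (by omega)
  obtain ⟨g, hg0, -, hgle, hgJ⟩ := M.exists_g t ht n
  have j1 := M.J_upper g n hgle hg0 s hs
  have j2 := M.J_upper g n hgle hg0 u hu
  have j3 := J_convex g hg0 s u a ha ha1
  rw [← htdef] at j3
  have j4 := M.L_le_I t n
  have hn3 : (Real.log 4 + Real.log 6) ≤ n * (ε/2) := by
    rw [div_lt_iff₀ (by positivity)] at h3
    have : (n3:ℝ) ≤ n := by exact_mod_cast (by omega : n3 ≤ n)
    nlinarith
  have h0 : 0 ≤ 1 - a := by linarith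
  have k1 := mul_le_mul_of_nonneg_left (j1.trans (add_le_add_left (add_le_add_right i1 _) _)) h0
  have k2 := mul_le_mul_of_nonneg_left (j2.trans (add_le_add_left (add_le_add_right i2 _) _)) ha
  have : n * M.L t ≤ n * ((1 - a) * M.L s + a * M.L u + ε) := by
    rw [htdef] at hgJ j4 ⊢
    nlinarith
  exact le_of_mul_le_mul_left this hn0

end Mod
end GAA


namespace GAA
open scoped Matrix.Norms.L2Operator
open Polynomial MeasureTheory

lemma pigeon (t b x0 s : ℝ) (R : Multiset ℂ) (q D : ℕ) (hR : Multiset.card R ≤ D) (hs : 0 < s)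
    (ht : 1 / 2 ≤ Real.exp t) (hsmall : (D * q : ℕ) * s ≤ 1 / 2) :
    ∃ i : ℕ, i ≤ D * q ∧ ∀ j < q, ∀ w ∈ R, s ≤ ‖pt t (x0 + i * s + j * b) - w‖ := by
  classical
  by_contra hcon
  push Not at hcon
  have hc : ∀ i : ℕ, ∃ jw : ℕ × ℂ, i ≤ D * q → jw.1 < q ∧ jw.2 ∈ R ∧
      ‖pt t (x0 + i * s + jw.1 * b) - jw.2‖ < s := by
    intro i
    by_cases hi : i ≤ D * q
    · obtain ⟨j, hj, w, hw, h⟩ := hcon i hi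
      exact ⟨(j, w), fun _ => ⟨hj, hw, h⟩⟩
    · exact ⟨(0, 0), fun h => absurd h hi⟩
  choose F hF using hc
  have hcard : (Finset.range q ×ˢ R.toFinset).card < (Finset.range (D * q + 1)).card := by
    rw [Finset.card_product, Finset.card_range, Finset.card_range]
    have h1 := Multiset.toFinset_card_le R
    have : q * R.toFinset.card ≤ q * D := Nat.mul_le_mul_left _ (h1.trans hR)
    rw [mul_comm D q]
    omega
  obtain ⟨i, hi, i', hi', hne, heq⟩ := Finset.exists_ne_map_eq_of_card_lt_of_maps_to hcard
    (f := F) (by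
      intro i hi
      have hi2 : i < D * q + 1 := by simpa using hi
      have := hF i (by omega)
      simp only [Finset.coe_product, Set.mem_prod, Finset.mem_coe, Finset.mem_range,
        Multiset.mem_toFinset]
      exact ⟨this.1, this.2.1⟩)
  have hi2 : i ≤ D * q := by have := Finset.mem_range.mp hi; omega
  have hi2' : i' ≤ D * q := by have := Finset.mem_range.mp hi'; omega
  have h1 := (hF i hi2).2.2
  have h2 := (hF i' hi2').2.2
  rw [← heq] at h2
  have h3 : ‖pt t (x0 + i * s + (F i).1 * b) - pt t (x0 + i' * s + (F i).1 * b)‖ < 2 * s := by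
    calc _ = ‖(pt t (x0 + i * s + (F i).1 * b) - (F i).2)
          - (pt t (x0 + i' * s + (F i).1 * b) - (F i).2)‖ := by congr 1; ring
      _ ≤ _ := norm_sub_le _ _
      _ < _ := by linarith
  have e : x0 + i * s + (F i).1 * b - (x0 + i' * s + (F i).1 * b) = ((i:ℝ) - i') * s := by ring
  have habs : |((i:ℝ) - i') * s| = |(i:ℝ) - i'| * s := by rw [abs_mul, abs_of_pos hs]
  have hub : |(i:ℝ) - i'| ≤ (D * q : ℕ) := by
    have a1 : (i:ℝ) ≤ (D * q : ℕ) := by exact_mod_cast hi2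
    have a2 : (i':ℝ) ≤ (D * q : ℕ) := by exact_mod_cast hi2'
    rw [abs_le]
    constructor <;> [skip; skip] <;> have := Nat.cast_nonneg (α := ℝ) i <;>
      have := Nat.cast_nonneg (α := ℝ) i' <;> linarith
  have hlb : 1 ≤ |(i:ℝ) - i'| := by
    have : (1:ℤ) ≤ |(i:ℤ) - i'| := Int.one_le_abs (by omega)
    exact_mod_cast this
  have h4 := norm_pt_sub_ge t (x0 + i * s + (F i).1 * b) (x0 + i' * s + (F i).1 * b) (by
    rw [e, habs]; nlinarith)
  rw [e, habs] at h4
  have h5 : s ≤ |(i:ℝ) - i'| * s := le_mul_of_one_le_left hs.le hlb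
  have h6 : 1 / 2 * (4 * (|(i:ℝ) - i'| * s)) ≤ Real.exp t * (4 * (|(i:ℝ) - i'| * s)) :=
    mul_le_mul_of_nonneg_right ht (by linarith)
  linarith

/-- pointwise comparison of logs -/
lemma log_sub_le {a b d ε : ℝ} (hd : 0 < d) (ha : d ≤ a) (hb : d ≤ b) (hab : |a - b| ≤ d * ε) :
    |Real.log a - Real.log b| ≤ ε := by
  have key : ∀ a b : ℝ, d ≤ a → d ≤ b → |a - b| ≤ d * ε → Real.log a - Real.log b ≤ ε := by
    intro a b ha hb hab
    have hb0 : 0 < b := by linarith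
    have ha0 : 0 < a := by linarith
    rw [← Real.log_div ha0.ne' hb0.ne']
    refine (Real.log_le_sub_one_of_pos (by positivity)).trans ?_
    rw [sub_le_iff_le_add, div_le_iff₀ hb0]
    have := (abs_le.mp hab).2
    have hε : 0 ≤ ε := by
      have := (abs_nonneg _).trans hab
      by_contra h
      nlinarith
    nlinarith
  rw [abs_le]
  have h1 := key a b ha hb hab
  have h2 := key b a hb ha (by rwa [abs_sub_comm])
  constructor <;> linarith

lemma pt_dist (t x y : ℝ) (w : ℂ) (q : ℕ) (ht : Real.exp t ≤ 2) (h : |x - y| ≤ 2 / q) :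
    |‖pt t x - w‖ - ‖pt t y - w‖| ≤ 26 / q := by
  have h1 : |‖pt t x - w‖ - ‖pt t y - w‖| ≤ ‖pt t x - pt t y‖ := by
    refine (abs_norm_sub_norm_le _ _).trans_eq ?_
    congr 1; ring
  have h2 := norm_pt_sub_le t x y
  refine h1.trans (h2.trans ?_)
  have hpi : Real.pi ≤ 3.15 := Real.pi_lt_d2.le
  have hp := Real.pi_pos
  have hq : (0:ℝ) ≤ 1 / q := by positivity
  have h' : |x - y| ≤ 2 * (1 / q) := by rw [mul_one_div]; exact h
  calc Real.exp t * (2 * Real.pi * |x - y|) ≤ 2 * (2 * 3.15 * (2 * (1 / q))) := by gcongr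
    _ ≤ 26 / q := by rw [div_eq_mul_one_div (26:ℝ)]; nlinarith

lemma far_root (t h b x : ℝ) (w : ℂ) (r : ℚ) (hr : |b - r| ≤ 1 / (r.den : ℝ) ^ 2)
    (ht : 1 / 2 ≤ Real.exp t) (ht2 : Real.exp t ≤ 2) (hh : 0 < h) (hw : ¬ near t h w) (η : ℝ)
    (hq : 52 / r.den ≤ (1 - Real.exp (-(h/2))) * η) :
    r.den * (phi w t - η) ≤ ∑ j ∈ Finset.range r.den, Real.log ‖pt t (x + j * b) - w‖ := by
  have he : Real.exp (-(h/2)) < 1 := by rw [Real.exp_lt_one_iff]; linarith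
  set d := (1 - Real.exp (-(h/2))) / 2 with hd
  have hd0 : 0 < d := by rw [hd]; linarith
  have hlow : ∀ y, d ≤ ‖pt t y - w‖ := by
    intro y
    have h1 := abs_norm_sub_norm_le (pt t y) w
    rw [norm_pt] at h1
    unfold near at hw
    rw [not_and_or, not_lt, not_lt] at hw
    rcases hw with hw | hw
    · rw [sub_eq_add_neg, Real.exp_add] at hw
      have := le_abs_self (Real.exp t - ‖w‖)
      nlinarith
    · rw [Real.exp_add] at hw
      have := neg_abs_le (Real.exp t - ‖w‖)
      have h2 : 1 - Real.exp (-(h/2)) ≤ Real.exp (h/2) - 1 := by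
        have := Real.add_one_le_exp (-(h/2))
        have := Real.add_one_le_exp (h/2)
        linarith
      nlinarith
  have hc : Continuous fun y => Real.log ‖pt t y - w‖ := by
    refine Continuous.log (((pt_continuous t).sub continuous_const).norm) fun y => ?_
    have := hlow y
    linarith
  have := riemann_sum (fun y => Real.log ‖pt t y - w‖) (fun y => by simp only [pt_periodic]) hc b r
    hr η (fun s u hsu => by
      refine log_sub_le hd0 (hlow s) (hlow u) ((pt_dist t s u w r.den ht2 hsu).trans ?_)
      rw [hd]
      have : (52:ℝ) / r.den = 2 * (26 / r.den) := by ring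
      linarith) x
  rw [J_X_sub_C] at this
  have := (abs_le.mp this).1
  linarith

lemma bad_card (t b x : ℝ) (w : ℂ) (r : ℚ) (hr : |b - r| ≤ 1 / (r.den : ℝ) ^ 2)
    (ht : 1 / 2 ≤ Real.exp t) :
    ((Finset.range r.den).filter fun j : ℕ => ‖pt t (x + j * b) - w‖ < 1 / r.den).card ≤ 3 := by
  classical
  have hd : (0:ℝ) < r.den := by exact_mod_cast r.pos
  set S := (Finset.range r.den).filter fun j : ℕ => ‖pt t (x + j * b) - w‖ < 1 / r.den with hS
  rcases S.eq_empty_or_nonempty with h0 | ⟨j0, hj0⟩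
  · rw [h0]; simp
  have key : ∀ j : ℕ, ∃ m : ℤ, j ∈ S → m ∈ Finset.Icc (-1:ℤ) 1 ∧
      ∃ k : ℤ, ((j:ℤ) - j0) * r.num - k * r.den = m := by
    intro j
    by_cases hj : j ∈ S
    · rw [hS, Finset.mem_filter, Finset.mem_range] at hj hj0
      have h3 : ‖pt t (x + j * b) - pt t (x + j0 * b)‖ < 2 * (1 / r.den) := by
        calc _ = ‖(pt t (x + j * b) - w) - (pt t (x + j0 * b) - w)‖ := by congr 1; ring
          _ ≤ _ := norm_sub_le _ _
          _ < _ := by linarith [hj.2, hj0.2]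
      obtain ⟨k, hk⟩ := pt_close t _ _ _ ht h3
      refine ⟨((j:ℤ) - j0) * r.num - k * r.den, fun _ => ⟨?_, k, rfl⟩⟩
      have hrr : (r:ℝ) = r.num / r.den := by exact_mod_cast (Rat.num_div_den r).symm
      have e1 : ((((j:ℤ) - j0) * r.num - k * r.den : ℤ) : ℝ)
          = r.den * ((x + j * b - (x + j0 * b) - k) - ((j:ℝ) - j0) * (b - r)) := by
        push_cast
        rw [hrr]
        field_simp
        ring
      have a1 : |(j:ℝ) - j0| ≤ r.den := by
        have b1 : (j:ℝ) ≤ r.den := by exact_mod_cast hj.1.le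
        have b2 : (j0:ℝ) ≤ r.den := by exact_mod_cast hj0.1.le
        have := Nat.cast_nonneg (α := ℝ) j
        have := Nat.cast_nonneg (α := ℝ) j0
        rw [abs_le]; constructor <;> linarith
      have a2 : |((j:ℝ) - j0) * (b - r)| ≤ 1 / r.den := by
        rw [abs_mul]
        calc _ ≤ (r.den:ℝ) * (1 / (r.den:ℝ)^2) := by gcongr
          _ = _ := by field_simp
      have a3 : |((((j:ℤ) - j0) * r.num - k * r.den : ℤ) : ℝ)| < 2 := by
        rw [e1, abs_mul, abs_of_pos hd]
        calc _ < (r.den:ℝ) * (2 / r.den) := by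
              gcongr
              refine (abs_sub _ _).trans_lt ?_
              have : (2:ℝ) / r.den = 1 / r.den + 1 / r.den := by ring
              linarith
          _ = 2 := by field_simp
      have a4 : |(((j:ℤ) - j0) * r.num - k * r.den : ℤ)| < 2 := by exact_mod_cast a3
      rw [abs_lt] at a4
      rw [Finset.mem_Icc]
      omega
    · exact ⟨0, fun h => absurd h hj⟩
  choose m hm using key
  have : S.card ≤ (Finset.Icc (-1:ℤ) 1).card := by
    apply Finset.card_le_card_of_injOn m
    · intro j hj; exact (hm j hj).1
    · intro j hj j' hj' heq
      obtain ⟨k, hk⟩ := (hm j hj).2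
      obtain ⟨k', hk'⟩ := (hm j' hj').2
      have h1 : ((j:ℤ) - j') * r.num = (k - k') * r.den := by
        rw [← heq] at hk'; linarith
      have h2 : (r.den:ℤ) ∣ ((j:ℤ) - j') * r.num := ⟨k - k', by rw [h1]; ring⟩
      have hcop : IsCoprime (r.den:ℤ) r.num := by
        rw [Int.isCoprime_iff_gcd_eq_one, Int.gcd_comm]
        exact r.reduced
      have h3 := hcop.dvd_of_dvd_mul_right h2
      rw [hS, Finset.mem_coe, Finset.mem_filter, Finset.mem_range] at hj hj'
      have h4 : (j:ℤ) - j' = 0 := Int.eq_zero_of_abs_lt_dvd h3 (by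
        rw [abs_lt]; omega)
      omega
  simpa using this

lemma near_root (t b x s : ℝ) (w : ℂ) (r : ℚ) (hr : |b - r| ≤ 1 / (r.den : ℝ) ^ 2)
    (ht : 1 / 2 ≤ Real.exp t) (ht2 : Real.exp t ≤ 2) (hs : 0 < s) (hs1 : s ≤ 1)
    (hsep : ∀ j < r.den, s ≤ ‖pt t (x + j * b) - w‖) :
    r.den * (phi w t - 26) + 3 * Real.log s
      ≤ ∑ j ∈ Finset.range r.den, Real.log ‖pt t (x + j * b) - w‖ := by
  classical
  have hd : (0:ℝ) < r.den := by exact_mod_cast r.pos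
  have hd1 : (1:ℝ) ≤ r.den := by exact_mod_cast r.pos
  have hq0 : (0:ℝ) < 1 / r.den := by positivity
  set f : ℝ → ℝ := fun y => Real.log (max ‖pt t y - w‖ (1 / r.den)) with hf
  have hcm : Continuous fun y => max ‖pt t y - w‖ (1 / (r.den:ℝ)) :=
    (((pt_continuous t).sub continuous_const).norm).max continuous_const
  have hc : Continuous f := hcm.log fun y => (lt_max_of_lt_right hq0).ne'
  have h1 := riemann_sum f (fun y => by simp only [hf, pt_periodic]) hc b r hr 26
    (fun u v huv => by
      refine log_sub_le hq0 (le_max_right _ _) (le_max_right _ _) ?_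
      refine (abs_max_sub_max_le_abs _ _ _).trans ?_
      refine (pt_dist t u v w r.den ht2 huv).trans_eq (by ring)) x
  have h2 : phi w t ≤ ∫ y in (0:ℝ)..1, f y := by
    rw [← J_X_sub_C]
    have hfin : {y ∈ Set.Ioc (0:ℝ) 1 | pt t y = w}.Subsingleton := by
      intro u hu v hv
      apply pt_injOn hu.1 hv.1
      have hxy : pt t u = pt t v := hu.2.trans hv.2.symm
      have e : ∀ x, pt t x = pt t 0 * pt 0 x := fun x => by rw [← pt_add, zero_add]
      rw [e u, e v] at hxy
      refine mul_left_cancel₀ ?_ hxy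
      rw [← norm_pos_iff, norm_pt]
      exact Real.exp_pos t
    have hIntg := J_integrable (X - C w) t
    simp only [eval_sub, eval_X, eval_C] at hIntg
    apply intervalIntegral.integral_mono_ae_restrict zero_le_one hIntg (hc.intervalIntegrable _ _)
    have h1 : ∀ᵐ x ∂(volume : Measure ℝ), x ∉ {y ∈ Set.Ioc (0:ℝ) 1 | pt t y = w} :=
      measure_eq_zero_iff_ae_notMem.mp (hfin.measure_zero _)
    have h0 : ∀ᵐ x ∂(volume : Measure ℝ), x ≠ 0 := by simp [ae_iff]
    have h2 := ae_restrict_of_ae (s := Set.Icc (0:ℝ) 1) h1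
    have h00 := ae_restrict_of_ae (s := Set.Icc (0:ℝ) 1) h0
    filter_upwards [h2, h00, ae_restrict_mem measurableSet_Icc] with x hx hx0 hxI
    have hne : pt t x - w ≠ 0 := fun h =>
      hx ⟨⟨lt_of_le_of_ne hxI.1 (Ne.symm hx0), hxI.2⟩, sub_eq_zero.mp h⟩
    exact Real.log_le_log (by simpa using hne) (le_max_left _ _)
  have h3 : ∀ j ∈ Finset.range r.den, f (x + j * b) +
      (if ‖pt t (x + j * b) - w‖ < 1 / r.den then Real.log s else 0)
      ≤ Real.log ‖pt t (x + j * b) - w‖ := by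
    intro j hj
    have hsj := hsep j (Finset.mem_range.mp hj)
    split_ifs with hif
    · have e : f (x + j * b) = Real.log (1 / r.den) := by
        simp only [hf]; rw [max_eq_right hif.le]
      have : f (x + j * b) ≤ 0 := by
        rw [e]
        apply Real.log_nonpos hq0.le
        rw [div_le_one hd]; exact hd1
      have := Real.log_le_log hs hsj
      linarith
    · have e : f (x + j * b) = Real.log ‖pt t (x + j * b) - w‖ := by
        simp only [hf]; rw [max_eq_left (not_lt.mp hif)]
      rw [e]; linarith
  have h4 := Finset.sum_le_sum h3
  rw [Finset.sum_add_distrib, ← Finset.sum_filter, Finset.sum_const, nsmul_eq_mul] at h4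
  have h5 := bad_card t b x w r hr ht
  have h6 : (((Finset.range r.den).filter
      fun j : ℕ => ‖pt t (x + j * b) - w‖ < 1 / r.den).card : ℝ) ≤ 3 := by exact_mod_cast h5
  have h7 : Real.log s ≤ 0 := Real.log_nonpos hs.le hs1
  have h8 := (abs_le.mp h1).1
  nlinarith

/-- sum over all roots -/
lemma roots_sum (g : ℂ[X]) (hg : g ≠ 0) (t h b x s : ℝ) (r : ℚ) (D : ℕ)
    (hD : g.natDegree ≤ D)
    (hr : |b - r| ≤ 1 / (r.den : ℝ) ^ 2)
    (ht : 1 / 2 ≤ Real.exp t) (ht2 : Real.exp t ≤ 2) (hh : 0 < h) (hs : 0 < s) (hs1 : s ≤ 1)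
    (η : ℝ) (hη : 0 ≤ η) (hq : 52 / r.den ≤ (1 - Real.exp (-(h/2))) * η)
    (hsep : ∀ j < r.den, ∀ w ∈ g.roots, s ≤ ‖pt t (x + j * b) - w‖) (k : ℝ)
    (hk : J g (t + h) + J g (t - h) - 2 * J g t ≤ k * (h / 2)) :
    r.den * (J g t - D * η) - k * (r.den * 26 - 3 * Real.log s)
      ≤ ∑ j ∈ Finset.range r.den, Real.log ‖g.eval (pt t (x + j * b))‖ := by
  classical
  have hlead : ‖g.leadingCoeff‖ ≠ 0 := by simpa using hg
  have hls : Real.log s ≤ 0 := Real.log_nonpos hs.le hs1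
  have e1 : ∀ j ∈ Finset.range r.den, Real.log ‖g.eval (pt t (x + j * b))‖ =
      Real.log ‖g.leadingCoeff‖ + (g.roots.map fun w => Real.log ‖pt t (x + j * b) - w‖).sum := by
    intro j hj
    have hpos : ∀ w ∈ g.roots, 0 < ‖pt t (x + j * b) - w‖ := fun w hw =>
      hs.trans_le (hsep j (Finset.mem_range.mp hj) w hw)
    have h1 : ‖g.eval (pt t (x + j * b))‖ = ‖g.leadingCoeff‖ *
        (g.roots.map fun w => ‖pt t (x + j * b) - w‖).prod := by
      conv_lhs => rw [(IsAlgClosed.splits g).eq_prod_roots]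
      rw [eval_mul, eval_C, norm_mul, eval_multiset_prod, Multiset.map_map]
      congr 1
      have := map_multiset_prod (normHom : ℂ →*₀ ℝ)
        (g.roots.map (eval (pt t (x + j * b)) ∘ fun a => X - C a))
      rw [Multiset.map_map] at this
      refine this.trans ?_
      congr 1
      apply Multiset.map_congr rfl
      intro w _
      simp
    have h2 : (g.roots.map fun w => ‖pt t (x + j * b) - w‖).prod ≠ 0 := by
      apply ne_of_gt
      apply Multiset.prod_pos
      intro a ha
      obtain ⟨w, hw, rfl⟩ := Multiset.mem_map.mp ha
      exact hpos w hw
    rw [h1, Real.log_mul hlead h2, log_multiset_prod _ _ hpos]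
  rw [Finset.sum_congr rfl e1, Finset.sum_add_distrib, Finset.sum_const, Finset.card_range,
    nsmul_eq_mul]
  have hcardk : (Multiset.card (g.roots.filter (near t h)) : ℝ) ≤ k := by
    have := (J_near g hg t h).trans hk
    exact le_of_mul_le_mul_right this (by positivity)
  have main : ∀ R : Multiset ℂ, (∀ w ∈ R, w ∈ g.roots) →
      r.den * ((R.map fun w => phi w t).sum - Multiset.card R * η)
        - Multiset.card (R.filter (near t h)) * (r.den * 26 - 3 * Real.log s) ≤
      ∑ j ∈ Finset.range r.den, (R.map fun w => Real.log ‖pt t (x + j * b) - w‖).sum := by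
    intro R
    induction R using Multiset.induction_on with
    | empty => simp
    | cons a R ih =>
      intro hR
      have ih' := ih (fun w hw => hR w (Multiset.mem_cons_of_mem hw))
      simp only [Multiset.map_cons, Multiset.sum_cons, Multiset.card_cons, Finset.sum_add_distrib]
      by_cases ha : near t h a
      · rw [Multiset.filter_cons_of_pos _ ha, Multiset.card_cons]
        have := near_root t b x s a r hr ht ht2 hs hs1
          (fun j hj => hsep j hj a (hR a (Multiset.mem_cons_self _ _)))
        push_cast
        have h0 : 0 ≤ (r.den:ℝ) * η := by positivity
        nlinarith
      · rw [Multiset.filter_cons_of_neg _ ha]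
        have := far_root t h b x a r hr ht ht2 hh ha η hq
        push_cast
        nlinarith
  have hm := main g.roots (fun w hw => hw)
  have hJ := J_formula g hg t
  have hcard : (Multiset.card g.roots : ℝ) ≤ D := by
    exact_mod_cast (card_roots' g).trans hD
  have hd : (0:ℝ) ≤ r.den := by positivity
  have k1 : (Multiset.card (g.roots.filter (near t h)) : ℝ) * (r.den * 26 - 3 * Real.log s)
      ≤ k * (r.den * 26 - 3 * Real.log s) := mul_le_mul_of_nonneg_right hcardk (by linarith)
  have k2 : (r.den:ℝ) * (Multiset.card g.roots * η) ≤ r.den * (D * η) := by gcongr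
  nlinarith

end GAA


namespace GAA
open scoped Matrix.Norms.L2Operator
open Polynomial MeasureTheory

lemma norm_adj_le (X : Mat) : ‖X.adjugate‖ ≤ 2 * ‖X‖ := by
  apply norm_le_entries
  intro i j
  rw [Matrix.adjugate_fin_two]
  fin_cases i <;> fin_cases j <;> simp only [Fin.zero_eta, Fin.isValue, Fin.mk_one,
    Matrix.of_apply, Matrix.cons_val', Matrix.cons_val_zero, Matrix.cons_val_fin_one,
    Matrix.cons_val_one, norm_neg] <;> exact norm_entry_le _ _ _

namespace Mod
variable (M : Mod)

lemma An_move (a t x : ℝ) (ht : |t| ≤ M.T) (N j : ℕ) :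
    ‖M.An a t (x + j * a) N‖ ≤ 2 * M.C ^ (2 * j) * ‖M.An a t x N‖ := by
  have h1 := M.An_add a t x j N
  have h2 := M.An_add a t x N j
  rw [add_comm N j, h1] at h2
  have h3 : M.An a t (x + j * a) N = M.An a t (x + N * a) j * M.An a t x N *
      (M.An a t x j).adjugate := by
    rw [← h2, mul_assoc, Matrix.mul_adjugate, M.An_det, one_smul, mul_one]
  have hC := M.hC1
  rw [h3]
  calc _ ≤ ‖M.An a t (x + N * a) j‖ * ‖M.An a t x N‖ * ‖(M.An a t x j).adjugate‖ :=
        (norm_mul_le _ _).trans (mul_le_mul_of_nonneg_right (norm_mul_le _ _) (norm_nonneg _))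
    _ ≤ M.C ^ j * ‖M.An a t x N‖ * (2 * M.C ^ j) := by
        gcongr
        · exact M.An_norm_le _ _ _ ht _
        · exact (norm_adj_le _).trans (by
            have := M.An_norm_le a t x ht j
            linarith)
    _ = _ := by ring

set_option maxHeartbeats 2000000 in
/-- uniform lower bounds (S2) -/
lemma lower (δ : ℝ) (hδ : 0 < δ) : ∃ τ > 0, ∀ t h : ℝ, 0 < h → |t| ≤ M.T → |t + h| ≤ M.T →
    |t - h| ≤ M.T → M.L (t + h) + M.L (t - h) - 2 * M.L t ≤ τ * h →
    ∀ n0 : ℕ, ∃ n ≥ n0, ∀ x, ((2 * n : ℕ) : ℝ) * (M.L t - δ) ≤ Real.log ‖M.An M.b t x (2 * n)‖ := by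
  have hC := M.hC1
  have hlC : 0 ≤ Real.log M.C := Real.log_nonneg hC
  obtain ⟨K, hK⟩ := exists_nat_gt (8 * Real.log M.C / δ + 1)
  have hK1 : (1:ℝ) ≤ K := by
    have : 0 ≤ 8 * Real.log M.C / δ := by positivity
    linarith
  have hKδ : 8 * Real.log M.C ≤ K * δ := by
    rw [← div_le_iff₀ hδ]; linarith
  set C3 := Real.log (16 * M.C ^ 2) with hC3
  have hC16 : 1 ≤ 16 * M.C ^ 2 := by nlinarith
  have hC30 : 0 ≤ C3 := Real.log_nonneg hC16
  set W := 26 + 6 * K * C3 with hW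
  have hW0 : 0 < W := by positivity
  refine ⟨δ / (32 * W), by positivity, ?_⟩
  set τ := δ / (32 * W) with hτ
  have hτ0 : 0 < τ := by positivity
  have hτW : τ * W = δ / 32 := by rw [hτ]; field_simp
  intro t h hh ht htp htm hL n0
  set δ' := δ / 16 with hδ'
  have hδ'0 : 0 < δ' := by positivity
  obtain ⟨n1, hn1⟩ := M.I_upper (t + h) htp (τ * h / 4) (by positivity)
  obtain ⟨n2, hn2⟩ := M.I_upper (t - h) htm (τ * h / 4) (by positivity)
  obtain ⟨n3, hn3⟩ := weyl _ (M.lp_periodic t) (M.lp_continuous t ht) M.b M.hb δ' hδ'0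
  have he : 0 < 1 - Real.exp (-(h/2)) := by
    have : Real.exp (-(h/2)) < 1 := by rw [Real.exp_lt_one_iff]; linarith
    linarith
  obtain ⟨n4, hn4⟩ := exists_nat_gt (52 / ((1 - Real.exp (-(h/2))) * δ'))
  obtain ⟨n5, hn5⟩ := exists_nat_gt (2 * (Real.log 4 + Real.log 6) / (τ * h / 2))
  obtain ⟨n6, hn6⟩ := exists_nat_gt (Real.log (4 * 6 * 2 * 2) / (δ / 16))
  obtain ⟨r, hrD, hr, -⟩ := exists_good_rat M.b M.hb (n0 + n1 + n2 + n3 + n4 + n5 + n6 + 1) 1 one_pos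
  set q := r.den with hq
  have hq0 : (0:ℝ) < q := by exact_mod_cast r.pos
  have hKn : 1 ≤ K := by exact_mod_cast hK1
  have hqKq : q ≤ K * q := Nat.le_mul_of_pos_left q hKn
  refine ⟨K * q, by omega, fun x0 => ?_⟩
  set N := 2 * (K * q) with hN
  have hNr : (N:ℝ) = 2 * (K * q) := by rw [hN]; push_cast; ring
  have hN0 : (0:ℝ) < N := by rw [hNr]; positivity
  clear_value N
  have hN1 : 1 ≤ N := by exact_mod_cast hN0
  have hbig : ∀ k : ℕ, k ≤ n0 + n1 + n2 + n3 + n4 + n5 + n6 → (k:ℝ) ≤ N := by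
    intro k hk
    exact_mod_cast (by omega : k ≤ N)
  by_contra hcon
  push Not at hcon
  obtain ⟨g, hg0, hgd, hgle, hgJ⟩ := M.exists_g t ht N
  have jp := M.J_upper g N hgle hg0 (t + h) htp
  have jm := M.J_upper g N hgle hg0 (t - h) htm
  have i1 := hn1 N (by omega)
  have i2 := hn2 N (by omega)
  have i0 := M.L_le_I t N
  -- number of near roots
  have hk : J g (t + h) + J g (t - h) - 2 * J g t ≤ (4 * τ * N) * (h / 2) := by
    have h5 : 2 * (Real.log 4 + Real.log 6) ≤ N * (τ * h / 2) := by
      rw [div_lt_iff₀ (by positivity)] at hn5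
      have := hbig n5 (by omega)
      have h6 : (n5:ℝ) * (τ * h / 2) ≤ N * (τ * h / 2) := by gcongr
      linarith
    have h7 : (N:ℝ) * (M.L (t + h) + M.L (t - h) - 2 * M.L t) ≤ N * (τ * h) := by gcongr
    clear_value τ
    linarith
  -- the perturbed base point
  obtain ⟨s, hs⟩ : ∃ s : ℝ, s = ((16 * M.C ^ 2)⁻¹) ^ N := ⟨_, rfl⟩
  have hs0 : 0 < s := by
    rw [hs]
    exact pow_pos (inv_pos.mpr (by linarith)) N
  have hinv1 : (16 * M.C ^ 2)⁻¹ ≤ 1 := inv_le_one_of_one_le₀ hC16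
  have hs1 : s ≤ 1 := hs ▸ pow_le_one₀ (by positivity) hinv1
  have hlogs : Real.log s = - (N * C3) := by
    rw [hs, Real.log_pow, Real.log_inv, hC3]; ring
  have hqN : q ≤ N := by omega
  have hmain : (N:ℝ) * M.C ^ N * (M.C * ((2 * N * q : ℕ) * s)) ≤ 1 := by
    have h2N : (N:ℝ) ≤ 2 ^ N := by exact_mod_cast Nat.lt_two_pow_self.le
    have hqN' : (q:ℝ) ≤ N := by exact_mod_cast hqN
    have hcpow : M.C ≤ M.C ^ N := by
      calc M.C = M.C ^ 1 := (pow_one _).symm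
        _ ≤ _ := pow_le_pow_right₀ hC hN1
    have h2pow : (2:ℝ) ≤ 2 ^ N := by
      calc (2:ℝ) = 2 ^ 1 := (pow_one _).symm
        _ ≤ _ := pow_le_pow_right₀ (by norm_num) hN1
    have hC0 : 0 < M.C := by linarith
    calc (N:ℝ) * M.C ^ N * (M.C * ((2 * N * q : ℕ) * s))
        = N * M.C ^ N * (M.C * ((2 * N * q) * s)) := by push_cast; ring
      _ ≤ 2 ^ N * M.C ^ N * (M.C ^ N * ((2 ^ N * 2 ^ N * 2 ^ N) * s)) := by
          gcongr
          exact hqN'.trans h2N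
      _ = (16 * M.C ^ 2) ^ N * s := by
          have : (16 * M.C ^ 2) = 2 * 2 * 2 * 2 * M.C * M.C := by ring
          rw [this]; simp only [mul_pow]; ring
      _ = 1 := by rw [hs, ← mul_pow, mul_inv_cancel₀ (by positivity), one_pow]
  have hsmall : ((2 * N * q : ℕ) : ℝ) * s ≤ 1 / 2 := by
    have hC0 : 0 < M.C := by linarith
    have hcN : 1 ≤ M.C ^ N := one_le_pow₀ hC
    have h2 : (2:ℝ) ≤ N := by
      have : 1 ≤ K * q := by have := r.pos; omega
      exact_mod_cast (by omega : 2 ≤ N)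
    have hy : 0 ≤ ((2 * N * q : ℕ) : ℝ) * s := by positivity
    have : 2 * 1 * (1 * (((2 * N * q : ℕ) : ℝ) * s)) ≤
      (N:ℝ) * M.C ^ N * (M.C * ((2 * N * q : ℕ) * s)) := by gcongr
    linarith
  obtain ⟨i, hi, hsep⟩ := pigeon t M.b x0 s g.roots q (2 * N) ((card_roots' g).trans hgd) hs0
    (M.exp_ge t ht) hsmall
  set x := x0 + i * s with hx
  have hAx : ‖M.An M.b t x N‖ ≤ 2 * ‖M.An M.b t x0 N‖ := by
    have h1 := M.An_lip M.b t x x0 ht N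
    have h2 : |x - x0| ≤ (2 * N * q : ℕ) * s := by
      have : x - x0 = i * s := by rw [hx]; ring
      rw [this, abs_of_nonneg (by positivity)]
      gcongr
    have h3 : (N:ℝ) * M.C ^ N * (M.C * |x - x0|) ≤ (N:ℝ) * M.C ^ N * (M.C * ((2 * N * q : ℕ) * s)) := by
      have hC0 : 0 < M.C := by linarith
      gcongr
    have h4 := M.one_le_An M.b t x0 N
    have h5 := norm_le_norm_add_norm_sub' (M.An M.b t x N) (M.An M.b t x0 N)
    linarith
  have hlow := roots_sum g hg0 t h M.b x s r (2 * N) hgd hr (M.exp_ge t ht) (M.exp_le t ht) hh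
    hs0 hs1 δ' hδ'0.le (by
      rw [← hq]
      have h1 : (n4:ℝ) ≤ q := by exact_mod_cast (by omega : n4 ≤ q)
      rw [div_lt_iff₀ (by positivity)] at hn4
      rw [div_le_iff₀ hq0]
      have : (n4:ℝ) * ((1 - Real.exp (-(h/2))) * δ') ≤ q * ((1 - Real.exp (-(h/2))) * δ') := by
        gcongr
      linarith) hsep (4 * τ * N) hk
  have hup : ∀ j ∈ Finset.range q, Real.log ‖g.eval (pt t (x + j * M.b))‖ ≤
      Real.log 4 + Real.log 2 + Real.log 2 + 2 * q * Real.log M.C + N * (M.L t - δ)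
        + N * (Real.log M.β + t) + N * δ' := by
    intro j hj
    have hj' := Finset.mem_range.mp hj
    have hgne : g.eval (pt t (x + j * M.b)) ≠ 0 := by
      intro h0
      have := hsep j hj' (pt t (x + j * M.b)) ((mem_roots hg0).mpr h0)
      rw [sub_self, norm_zero] at this
      linarith
    have h1 := Real.log_le_log (by simpa using hgne) (hgle t (x + j * M.b))
    rw [Real.log_mul (by norm_num) (M.Dn_pos M.b t _ ht N).ne', M.log_Dn M.b t _ ht] at h1
    have h2 := (abs_le.mp (hn3 N (by omega) (x + j * M.b))).2
    rw [M.lp_int t ht] at h2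
    have h3 : ‖M.An M.b t (x + j * M.b) N‖ ≤ 2 * M.C ^ (2 * q) * (2 * ‖M.An M.b t x0 N‖) := by
      refine (M.An_move M.b t x ht N j).trans ?_
      refine mul_le_mul (mul_le_mul_of_nonneg_left (pow_le_pow_right₀ hC (by omega)) two_pos.le)
        hAx (norm_nonneg _) (mul_nonneg two_pos.le (pow_nonneg (by linarith) _))
    have p1 : 0 < ‖M.An M.b t (x + j * M.b) N‖ := lt_of_lt_of_le one_pos (M.one_le_An _ _ _ _)
    have p2 : 0 < ‖M.An M.b t x0 N‖ := lt_of_lt_of_le one_pos (M.one_le_An _ _ _ _)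
    have p3 : 0 < M.C ^ (2 * q) := pow_pos (by linarith) _
    have h4 := Real.log_le_log p1 h3
    rw [Real.log_mul (mul_pos two_pos p3).ne' (mul_pos two_pos p2).ne', Real.log_mul (by norm_num) p3.ne',
      Real.log_mul (by norm_num) p2.ne', Real.log_pow] at h4
    push_cast at h4
    linarith
  have hup2 := Finset.sum_le_sum hup
  rw [Finset.sum_const, Finset.card_range, nsmul_eq_mul] at hup2
  have hfin := hlow.trans hup2
  rw [hlogs] at hfin
  have e2 : 4 * τ * N * ((q:ℝ) * 26 - 3 * -(N * C3)) = q * (N * (4 * (τ * W))) := by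
    rw [hW, hNr]; ring
  rw [e2, ← mul_sub, mul_le_mul_iff_right₀ hq0, hτW] at hfin
  have h96 : Real.log (4 * 6 * 2 * 2) = Real.log 4 + Real.log 6 + Real.log 2 + Real.log 2 := by
    rw [Real.log_mul (by norm_num) (by norm_num), Real.log_mul (by norm_num) (by norm_num),
      Real.log_mul (by norm_num) (by norm_num)]
  have h6 : Real.log (4 * 6 * 2 * 2) ≤ N * (δ / 16) := by
    rw [div_lt_iff₀ (by positivity)] at hn6
    have := hbig n6 (by omega)
    have : (n6:ℝ) * (δ / 16) ≤ N * (δ / 16) := by gcongr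
    linarith
  have hqC : 2 * q * Real.log M.C ≤ N * (δ / 8) := by
    rw [hNr]
    have := mul_le_mul_of_nonneg_left hKδ hq0.le
    clear_value q
    linarith
  have hNδ : 0 < N * δ := by positivity
  push_cast at hfin
  rw [hδ'] at hfin
  rw [h96] at h6
  clear_value δ' τ W C3
  clear hlow hup hup2 hsep hgle hbig hn1 hn2 hn3
  have e5 : (N:ℝ) * (M.L t - δ) = N * M.L t - N * δ := by ring
  linarith

end Mod
end GAA


namespace GAA
open scoped Matrix.Norms.L2Operator
open Polynomial MeasureTheory

lemma pt_int (t x : ℝ) (k : ℤ) : pt t (x + k) = pt t x := by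
  have h : Function.Periodic (pt t) 1 := fun x => pt_periodic t x
  simpa using h.int_mul k x

lemma pt_pow (x : ℝ) (k : ℕ) : pt 0 x ^ k = pt 0 (k * x) := by
  induction k with
  | zero => simp [pt]
  | succ k ih =>
    rw [pow_succ, ih, ← pt_add]
    congr 1
    push_cast; ring

lemma cayley2 (D : Mat) : D * D = D.trace • D - D.det • 1 := by
  ext i j
  fin_cases i <;> fin_cases j <;>
    simp [Matrix.mul_apply, Fin.sum_univ_two, Matrix.trace_fin_two, Matrix.det_fin_two] <;> ring

lemma tr_pow (D : Mat) (μ ν : ℂ) (h1 : D.trace = μ + ν) (h2 : D.det = μ * ν) (k : ℕ) :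
    (D ^ k).trace = μ ^ k + ν ^ k := by
  induction k using Nat.strong_induction_on with
  | _ k ih =>
    match k with
    | 0 => simp; norm_num
    | 1 => simpa using h1
    | k + 2 =>
      have e : D ^ (k + 2) = D.trace • D ^ (k + 1) - D.det • D ^ k := by
        calc D ^ (k + 2) = D ^ k * (D * D) := by rw [← sq, ← pow_add]
          _ = _ := by rw [cayley2 D, mul_sub, mul_smul_comm, mul_smul_comm, mul_one, ← pow_succ]
      rw [e, Matrix.trace_sub, Matrix.trace_smul, Matrix.trace_smul, ih (k + 1) (by omega),
        ih k (by omega), h1, h2, smul_eq_mul, smul_eq_mul]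
      ring

lemma Dmat0_trace (α E c : ℝ) : (Dmat α E c 0).trace = ((-(c / 2) : ℝ) : ℂ) := by
  simp [Dmat, efun, pfun, Matrix.trace_fin_two]

lemma Dmat0_det (α E c : ℝ) : (Dmat α E c 0).det = ((α ^ 2 / 4 : ℝ) : ℂ) := by
  simp [Dmat, efun, pfun, Matrix.det_fin_two]
  ring

lemma root_bound (α β T : ℝ) (hβ : 1 / 2 ≤ β) (hβ2 : β * (1 - β) = α ^ 2 / 4) (hT : |T| ≤ 1)
    (μ : ℂ) (hμ : μ ^ 2 - T * μ + ((α ^ 2 / 4 : ℝ) : ℂ) = 0) : ‖μ‖ ≤ β := by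
  have hre := congrArg Complex.re hμ
  have him := congrArg Complex.im hμ
  simp only [sq, Complex.add_re, Complex.sub_re, Complex.mul_re, Complex.ofReal_re,
    Complex.ofReal_im, Complex.zero_re, Complex.add_im, Complex.sub_im, Complex.mul_im,
    Complex.zero_im] at hre him
  have hn : ‖μ‖ ^ 2 = μ.re * μ.re + μ.im * μ.im := by
    rw [← Complex.normSq_eq_norm_sq, Complex.normSq_apply]
  have hnn := norm_nonneg μ
  by_cases hb : μ.im = 0
  · rw [hb] at hre hn
    have h1 : ‖μ‖ ^ 2 + α ^ 2 / 4 = T * μ.re := by linarith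
    have h2 : T * μ.re ≤ ‖μ‖ := by
      have h3 : |μ.re| = ‖μ‖ := by
        rw [← abs_of_nonneg hnn, ← sq_eq_sq_iff_abs_eq_abs]; linarith
      calc T * μ.re ≤ |T * μ.re| := le_abs_self _
        _ = |T| * ‖μ‖ := by rw [abs_mul, h3]
        _ ≤ 1 * ‖μ‖ := by gcongr
        _ = _ := one_mul _
    by_contra hcon
    push Not at hcon
    nlinarith
  · have h1 : 2 * μ.re = T := by
      have : (2 * μ.re - T) * μ.im = 0 := by linarith
      rcases mul_eq_zero.mp this with h | h
      · linarith
      · exact absurd h hb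
    have h2 : ‖μ‖ ^ 2 = α ^ 2 / 4 := by
      rw [hn]; rw [← h1] at hre; nlinarith
    refine (sq_le_sq₀ hnn (by linarith)).mp ?_
    rw [h2]; nlinarith

lemma tr_pow_le (α E c β : ℝ) (hβ : 1 / 2 ≤ β) (hβ2 : β * (1 - β) = α ^ 2 / 4) (hc : |c| ≤ 2)
    (k : ℕ) : ‖(Dmat α E c 0 ^ k).trace‖ ≤ 2 * β ^ k := by
  set T : ℝ := -(c / 2) with hT
  have hT1 : |T| ≤ 1 := by
    rw [hT, abs_neg, abs_div, abs_two]; linarith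
  obtain ⟨d, hd⟩ := IsAlgClosed.exists_pow_nat_eq (((T ^ 2 - α ^ 2 : ℝ) : ℂ)) (n := 2) (by norm_num)
  push_cast at hd
  have h := tr_pow (Dmat α E c 0) ((T + d) / 2) ((T - d) / 2)
    (by rw [Dmat0_trace]; ring) (by
      rw [Dmat0_det]
      push_cast
      linear_combination (1 / 4 : ℂ) * hd) k
  have b1 := root_bound α β T hβ hβ2 hT1 ((T + d) / 2) (by
    push_cast
    linear_combination (1 / 4 : ℂ) * hd)
  have b2 := root_bound α β T hβ hβ2 hT1 ((T - d) / 2) (by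
    push_cast
    linear_combination (1 / 4 : ℂ) * hd)
  rw [h]
  refine (norm_add_le _ _).trans ?_
  rw [norm_pow, norm_pow]
  have c1 := pow_le_pow_left₀ (norm_nonneg _) b1 k
  have c2 := pow_le_pow_left₀ (norm_nonneg _) b2 k
  linarith

namespace Mod
variable (M : Mod)

/-- the trace polynomial -/
noncomputable def TP (a : ℝ) (n : ℕ) : ℂ[X] := M.PD a n 0 0 + M.PD a n 1 1

lemma TP_eval (a t x : ℝ) (n : ℕ) : (M.TP a n).eval (pt t x) = (M.Dn a t x n).trace := by
  rw [TP, eval_add, PD_eval, PD_eval, Matrix.trace_fin_two]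

lemma TP_deg (a : ℝ) (n : ℕ) : (M.TP a n).natDegree ≤ 2 * n :=
  (natDegree_add_le _ _).trans (max_le (M.PD_deg _ _ _ _) (M.PD_deg _ _ _ _))

lemma TP_coeff0 (a : ℝ) (n : ℕ) : (M.TP a n).coeff 0 = (Dmat M.α M.E M.c 0 ^ n).trace := by
  have h := Pr_map ((evalRingHom (0:ℂ)).mapMatrix : Matrix (Fin 2) (Fin 2) ℂ[X] →+* Mat).toMonoidHom
    (fun j : ℕ => PDm M.α M.E M.c (pt 0 (j * a))) n
  have h2 : ∀ k : ℕ, ((evalRingHom (0:ℂ)).mapMatrix : Matrix (Fin 2) (Fin 2) ℂ[X] →+* Mat).toMonoidHom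
      (PDm M.α M.E M.c (pt 0 (k * a))) = Dmat M.α M.E M.c 0 := by
    intro k
    have := PDm_eval M.α M.E M.c (pt 0 (k * a)) 0
    rw [mul_zero] at this
    exact this
  simp only [h2] at h
  rw [Pr_const] at h
  rw [← h, Matrix.trace_fin_two, coeff_zero_eq_eval_zero, TP, eval_add]
  rfl

lemma TP_coeff_top (a : ℝ) (n : ℕ) :
    ‖(M.TP a n).coeff (2 * n)‖ = ‖(Dmat M.α M.E M.c 0 ^ n).trace‖ := by
  have h := Pr_coeff (F := fun j : ℕ => PDm M.α M.E M.c (pt 0 (j * a))) (fun _ => PDm_deg _ _ _ _) n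
  simp only [PDm_coeff] at h
  rw [Pr_smul, Pr_const] at h
  have h1 : (M.TP a n).coeff (2 * n) = ((M.PD a n).map fun p => p.coeff (2 * n)).trace := by
    rw [Matrix.trace_fin_two, TP, coeff_add]; rfl
  rw [h1, PD, h, Matrix.trace_smul, norm_smul, norm_prod]
  simp [norm_pt]

lemma Dn_shift (a t x : ℝ) (m n : ℕ) :
    Pr (fun j => Dmat M.α M.E M.c (pt t (x + ((j + m : ℕ) : ℝ) * a))) n
      = M.Dn a t (x + m * a) n := by
  unfold Dn
  congr 1
  ext1 j
  congr 2
  push_cast; ring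

lemma Dn_cyc (r : ℚ) (t x : ℝ) :
    (M.Dn r t (x + r) r.den).trace = (M.Dn r t x r.den).trace := by
  obtain ⟨m, hm⟩ : ∃ m, r.den = m + 1 := ⟨r.den - 1, by have := r.pos; omega⟩
  have hrr : (r.den : ℝ) * r = r.num := by
    have hd : (r.den:ℝ) ≠ 0 := by exact_mod_cast r.den_nz
    have : (r:ℝ) = r.num / r.den := by exact_mod_cast (Rat.num_div_den r).symm
    rw [this]; field_simp
  have e1 : M.Dn r t x r.den = M.Dn r t (x + r) m * Dmat M.α M.E M.c (pt t x) := by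
    have := Pr_add (fun j : ℕ => Dmat M.α M.E M.c (pt t (x + j * r))) 1 m
    rw [M.Dn_shift r t x 1 m] at this
    rw [hm, add_comm m 1, Dn, this]
    simp [Pr]
  have e2 : M.Dn r t (x + r) r.den = Dmat M.α M.E M.c (pt t x) * M.Dn r t (x + r) m := by
    rw [hm, Dn, Pr]
    have : x + r + m * r = x + r.num := by
      rw [← hrr, hm]; push_cast; ring
    rw [this, pt_int]
    rfl
  rw [e1, e2, Matrix.trace_mul_comm]

lemma pt_prim (r : ℚ) (k : ℕ) (h : pt 0 r ^ k = 1) : r.den ∣ k := by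
  have hd : (0:ℝ) < r.den := by exact_mod_cast r.pos
  rw [pt_pow] at h
  obtain ⟨m, hm⟩ := pt_close 0 (k * r) 0 (1 / r.den) (by simp; norm_num) (by
    rw [h]; simp [pt]; exact r.pos)
  have hrr : (r:ℝ) = r.num / r.den := by exact_mod_cast (Rat.num_div_den r).symm
  have e : (((k:ℤ) * r.num - m * r.den : ℤ) : ℝ) = r.den * (k * r - 0 - m) := by
    rw [hrr]; push_cast; field_simp; ring
  have h1 : |(((k:ℤ) * r.num - m * r.den : ℤ) : ℝ)| < 1 := by
    rw [e, abs_mul, abs_of_pos hd]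
    calc _ < (r.den:ℝ) * (1 / r.den) := by gcongr
      _ = 1 := by field_simp
  have h2 : |((k:ℤ) * r.num - m * r.den : ℤ)| < 1 := by exact_mod_cast h1
  rw [Int.abs_lt_one_iff] at h2
  have h3 : (r.den:ℤ) ∣ (k:ℤ) * r.num := ⟨m, by linarith⟩
  have hcop : IsCoprime (r.den:ℤ) r.num := by
    rw [Int.isCoprime_iff_gcd_eq_one, Int.gcd_comm]
    exact r.reduced
  exact_mod_cast hcop.dvd_of_dvd_mul_right h3

lemma TP_inv (r : ℚ) (k : ℕ) (hk : ¬ r.den ∣ k) : (M.TP r r.den).coeff k = 0 := by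
  have h : (M.TP r r.den).comp (Polynomial.C (pt 0 r) * X) = M.TP r r.den := by
    apply eq_of_infinite_eval_eq
    refine Set.Infinite.mono (s := pt 0 '' Set.Ioc 0 1) ?_
      ((Set.Ioc_infinite one_pos).image pt_injOn)
    rintro _ ⟨x, -, rfl⟩
    change eval _ _ = eval _ _
    rw [eval_comp, eval_mul, eval_C, eval_X, mul_comm, ← pt_add, TP_eval, TP_eval, Dn_cyc]
  have h2 := congrArg (fun p => p.coeff k) h
  simp only [comp_C_mul_X_coeff] at h2
  by_contra hne
  apply hk
  apply pt_prim r k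
  exact mul_left_cancel₀ hne (by rw [h2, mul_one])

lemma TP_form (r : ℚ) (z : ℂ) : (M.TP r r.den).eval z = (M.TP r r.den).coeff 0
    + (M.TP r r.den).coeff r.den * z ^ r.den + (M.TP r r.den).coeff (2 * r.den) * z ^ (2 * r.den) := by
  have hq := r.pos
  rw [eval_eq_sum_range' (n := 2 * r.den + 1) (by have := M.TP_deg r r.den; omega)]
  rw [← Finset.sum_subset (s₁ := {0, r.den, 2 * r.den})]
  · rw [Finset.sum_insert, Finset.sum_insert, Finset.sum_singleton]
    · ring
    · simp
    · simp; omega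
  · intro k hk
    simp only [Finset.mem_insert, Finset.mem_singleton] at hk
    rw [Finset.mem_range]
    omega
  · intro k hk hk2
    rw [Finset.mem_range] at hk
    simp only [Finset.mem_insert, Finset.mem_singleton, not_or] at hk2
    rw [M.TP_inv r k, zero_mul]
    rintro ⟨m, rfl⟩
    have h3 : m < 3 := by
      by_contra hm
      push Not at hm
      have := Nat.mul_le_mul_left r.den hm
      omega
    interval_cases m <;> omega

lemma TP_mid (r : ℚ) (S : ℝ) (hS : ∀ x, ‖M.Dn r 0 x r.den‖ ≤ S) :
    ‖(M.TP r r.den).coeff r.den‖ ≤ 2 * S := by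
  have hd : (r.den:ℝ) ≠ 0 := by exact_mod_cast r.den_nz
  have hb : ∀ x, ‖(M.TP r r.den).eval (pt 0 x)‖ ≤ 2 * S := by
    intro x
    rw [TP_eval]
    have := hS x
    have := norm_trace_le (M.Dn r 0 x r.den)
    linarith
  have h1 := hb 0
  have h2 := hb (1 / (2 * r.den))
  rw [TP_form] at h1 h2
  have e1 : pt 0 0 = 1 := by simp [pt]
  have e2 : pt 0 (1 / (2 * r.den)) ^ r.den = -1 := by
    rw [pt_pow]
    have : (r.den:ℝ) * (1 / (2 * r.den)) = 1 / 2 := by field_simp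
    rw [this, pt]
    rw [← Complex.exp_pi_mul_I]
    congr 1
    push_cast; ring
  rw [e1, one_pow, one_pow] at h1
  rw [mul_comm 2 r.den, pow_mul] at h2
  rw [mul_comm r.den 2, e2] at h2
  have e3 : (2:ℂ) * (M.TP r r.den).coeff r.den =
    ((M.TP r r.den).coeff 0 + (M.TP r r.den).coeff r.den * 1 + (M.TP r r.den).coeff (2 * r.den) * 1)
    - ((M.TP r r.den).coeff 0 + (M.TP r r.den).coeff r.den * -1
      + (M.TP r r.den).coeff (2 * r.den) * (-1) ^ 2) := by ring
  have h3 := norm_sub_le ((M.TP r r.den).coeff 0 + (M.TP r r.den).coeff r.den * 1 + (M.TP r r.den).coeff (2 * r.den) * 1)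
    ((M.TP r r.den).coeff 0 + (M.TP r r.den).coeff r.den * -1
      + (M.TP r r.den).coeff (2 * r.den) * (-1) ^ 2)
  rw [← e3, norm_mul] at h3
  simp only [Complex.norm_ofNat] at h3
  linarith

end Mod
end GAA

namespace GAA
open scoped Matrix.Norms.L2Operator
open Polynomial MeasureTheory

lemma le_of_pow_le {u v B : ℝ} (hv : 1 ≤ v) (h : ∀ k : ℕ, u ^ k ≤ B * v ^ k) : u ≤ v := by
  by_contra hc
  push Not at hc
  have hv0 : 0 < v := by linarith
  have h1 : 1 < u / v := by rwa [one_lt_div hv0]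
  obtain ⟨k, hk⟩ := pow_unbounded_of_one_lt B h1
  have := h k
  rw [div_pow, lt_div_iff₀ (pow_pos hv0 k)] at hk
  linarith

namespace Mod
variable (M : Mod)

lemma An_mul_block (a t x : ℝ) (n : ℕ) (s : ℝ)
    (hS : ∀ x, Real.log ‖M.An a t x n‖ ≤ s) (k : ℕ) :
    Real.log ‖M.An a t x (n * k)‖ ≤ k * s := by
  induction k with
  | zero => simp [An, Pr]
  | succ k ih =>
    rw [mul_add, mul_one, An_add]
    have h3 := log_norm_mul_le (M.An_det a t (x + ((n * k : ℕ):ℝ) * a) n)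
      (M.An_det a t x (n * k))
    have := hS (x + ((n * k : ℕ):ℝ) * a)
    push_cast at *
    linarith

lemma An_block (a t x : ℝ) (ht : |t| ≤ M.T) (n : ℕ) (hn : 0 < n) (s : ℝ) (hs : 0 ≤ s)
    (hS : ∀ x, Real.log ‖M.An a t x n‖ ≤ n * s) (q : ℕ) :
    Real.log ‖M.An a t x q‖ ≤ q * s + n * Real.log M.C := by
  have hd := Nat.div_add_mod q n
  have hl := Nat.mod_lt q hn
  have hC := M.hC1
  have hlC : 0 ≤ Real.log M.C := Real.log_nonneg hC
  have h1 := M.An_mul_block a t x n _ hS (q / n)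
  have h2 : Real.log ‖M.An a t x q‖ ≤ Real.log ‖M.An a t x (n * (q / n))‖
      + (q % n : ℕ) * Real.log M.C := by
    conv_lhs => rw [← hd]
    rw [An_add]
    have h3 := log_norm_mul_le (M.An_det a t (x + ((n * (q / n) : ℕ):ℝ) * a) (q % n))
      (M.An_det a t x (n * (q / n)))
    have h4 := Real.log_le_log (lt_of_lt_of_le one_pos (M.one_le_An _ _ _ _))
      (M.An_norm_le a t (x + ((n * (q / n) : ℕ):ℝ) * a) ht (q % n))
    rw [Real.log_pow] at h4
    linarith
  have h3 : ((q % n : ℕ):ℝ) * Real.log M.C ≤ n * Real.log M.C :=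
    mul_le_mul_of_nonneg_right (by exact_mod_cast hl.le) hlC
  have h4 : ((q / n : ℕ):ℝ) * (n * s) ≤ q * s := by
    rw [← mul_assoc]
    refine mul_le_mul_of_nonneg_right ?_ hs
    have : q / n * n ≤ q := Nat.div_mul_le_self q n
    exact_mod_cast this
  linarith

lemma trace_lower (r : ℚ) (t : ℝ) (n : ℕ) (hn : 0 < n) (Γ Λ s : ℝ) (hΓ : 0 < Γ) (hs : 0 < s)
    (hup : ∀ x, ‖M.An r t x n‖ ≤ Γ) (hlow : ∀ x, Λ ≤ ‖M.An r t x (2 * n)‖)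
    (hk : 2 * Γ * Real.exp (n * s) ≤ Λ) (x : ℝ) :
    Real.exp (r.den * s) ≤ ‖(M.An r t x r.den).trace‖ + 1 := by
  have hn' : (0:ℝ) < n := by exact_mod_cast hn
  have hκ : 1 < Real.exp (n * s) := Real.one_lt_exp_iff.mpr (mul_pos hn' hs)
  have hg := fun N => growth (F := fun j : ℕ => Amat M.α M.E M.c (pt t (x + j * (r:ℝ))))
    (fun _ => M.A_det _) n Γ Λ (Real.exp (n * s)) hΓ hκ hk
    (fun m => by rw [M.An_shift (r:ℝ) t x m n]; exact hup _)
    (fun m => by rw [M.An_shift (r:ℝ) t x m (2*n)]; exact hlow _) N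
  have hper : ∀ j : ℕ, Amat M.α M.E M.c (pt t (x + ((j + r.den : ℕ):ℝ) * (r:ℝ)))
      = Amat M.α M.E M.c (pt t (x + j * (r:ℝ))) := by
    intro j
    congr 1
    have : x + ((j + r.den : ℕ):ℝ) * (r:ℝ) = (x + j * (r:ℝ)) + (r.num : ℤ) := by
      have : (r.den:ℝ) * (r:ℝ) = r.num := by exact_mod_cast Rat.den_mul_eq_num r
      push_cast
      linear_combination this
    rw [this, pt_int]
  have hP := fun k => Pr_periodic (fun j : ℕ => Amat M.α M.E M.c (pt t (x + j * (r:ℝ)))) r.den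
    hper k
  set τ := ‖(M.An r t x r.den).trace‖ with hτ
  have hτ0 : 0 ≤ τ := norm_nonneg _
  have h1 : Real.exp (n * s) ^ r.den ≤ (τ + 1) ^ n := by
    refine le_of_pow_le (B := ‖M.An r t x r.den‖) (one_le_pow₀ (by linarith)) fun k => ?_
    have e : n * (r.den * k) = r.den * (n * k) := by ring
    have h := hg (r.den * k)
    rw [e, hP] at h
    have h2 := pow_trace_bound (M.An r t x r.den) (M.An_det _ _ _ _) (n * k)
    rw [← pow_mul, ← pow_mul]
    exact h.trans h2
  have h2 : Real.exp (r.den * s) ^ n ≤ (τ + 1) ^ n := by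
    refine le_trans (le_of_eq ?_) h1
    rw [← Real.exp_nat_mul, ← Real.exp_nat_mul]
    congr 1; ring
  exact (pow_le_pow_iff_left₀ (Real.exp_pos _).le (by linarith) hn.ne').mp h2

lemma trace_upper (hβ2 : 1 / 2 ≤ M.β) (hβα : M.β * (1 - M.β) = M.α ^ 2 / 4) (hc : |M.c| ≤ 2)
    (r : ℚ) (t : ℝ) (ht : |t| ≤ M.T) (δ s0 : ℝ)
    (hr : ∀ x, |∑ j ∈ Finset.range r.den, M.lp t (x + j * (r:ℝ)) - r.den * (Real.log M.β + t)|
      ≤ r.den * δ)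
    (hr0 : ∀ x, |∑ j ∈ Finset.range r.den, M.lp 0 (x + j * (r:ℝ)) - r.den * (Real.log M.β + 0)|
      ≤ r.den * δ)
    (hA : ∀ x, Real.log ‖M.An r 0 x r.den‖ ≤ r.den * s0) (x : ℝ) :
    ‖(M.An r t x r.den).trace‖ ≤ 6 * Real.exp (r.den * (max s0 |t| + 2 * δ)) := by
  have hβ := M.hβ
  have h0T : |(0:ℝ)| ≤ M.T := by rw [abs_zero]; exact M.hT.le
  have hqpos : (0:ℝ) < r.den := by exact_mod_cast r.den_pos
  have hδ : 0 ≤ δ := by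
    by_contra hh
    have := (abs_nonneg _).trans (hr 0)
    nlinarith
  set q := r.den with hq
  set S := Real.exp (q * (Real.log M.β + δ + s0)) with hS
  have hD0 : ∀ x, ‖M.Dn r 0 x q‖ ≤ S := by
    intro x
    rw [hS, ← Real.log_le_iff_le_exp (M.Dn_pos _ _ _ h0T _), M.log_Dn _ _ _ h0T]
    have := (abs_le.mp (hr0 x)).2
    have := hA x
    linarith
  have hmid := M.TP_mid r S hD0
  have hform := M.TP_form r (pt t x)
  rw [M.TP_eval, ← hq] at hform
  have hDP := congrArg (fun X : Mat => ‖X.trace‖) (M.Dn_eq r t x ht q)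
  simp only [Matrix.trace_smul, smul_eq_mul, norm_mul] at hDP
  have hprod : Real.exp (q * (Real.log M.β + t - δ))
      ≤ ‖∏ j ∈ Finset.range q, pfun M.α (pt t (x + j * (r:ℝ)))‖ := by
    have hne : ∀ j ∈ Finset.range q, ‖pfun M.α (pt t (x + j * (r:ℝ)))‖ ≠ 0 :=
      fun j _ => norm_ne_zero_iff.mpr (M.p_ne _ _ ht)
    have hpos : 0 < ‖∏ j ∈ Finset.range q, pfun M.α (pt t (x + j * (r:ℝ)))‖ := by
      rw [norm_prod]
      exact Finset.prod_pos fun j hj => lt_of_le_of_ne (norm_nonneg _) (hne j hj).symm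
    rw [← Real.le_log_iff_exp_le hpos, norm_prod, Real.log_prod hne]
    have h := (abs_le.mp (hr x)).1
    simp only [lp] at h
    linarith
  have hc0 : ‖(M.TP r q).coeff 0‖ ≤ 2 * Real.exp (q * Real.log M.β) := by
    rw [M.TP_coeff0]
    refine (tr_pow_le _ _ _ _ hβ2 hβα hc q).trans_eq ?_
    rw [Real.exp_nat_mul, Real.exp_log hβ]
  have hc2 : ‖(M.TP r q).coeff (2 * q)‖ ≤ 2 * Real.exp (q * Real.log M.β) := by
    rw [M.TP_coeff_top]
    refine (tr_pow_le _ _ _ _ hβ2 hβα hc q).trans_eq ?_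
    rw [Real.exp_nat_mul, Real.exp_log hβ]
  set X := Real.exp (q * (max s0 |t| + 2 * δ)) with hX
  set P := Real.exp (q * (Real.log M.β + t - δ)) with hPdef
  have hz : ‖pt t x‖ = Real.exp t := norm_pt t x
  have hm1 : s0 ≤ max s0 |t| := le_max_left _ _
  have hm2 : |t| ≤ max s0 |t| := le_max_right _ _
  have ha1 := neg_abs_le t
  have ha2 := le_abs_self t
  have b0 : Real.exp (q * Real.log M.β) ≤ P * X := by
    rw [hPdef, hX, ← Real.exp_add, Real.exp_le_exp, ← mul_add]
    exact mul_le_mul_of_nonneg_left (by linarith) hqpos.le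
  have b1 : S * ‖pt t x‖ ^ q ≤ P * X := by
    rw [hz, hS, hPdef, hX, ← Real.exp_add, ← Real.exp_nat_mul, ← Real.exp_add, Real.exp_le_exp,
      ← mul_add, ← mul_add]
    exact mul_le_mul_of_nonneg_left (by linarith) hqpos.le
  have b2 : Real.exp (q * Real.log M.β) * ‖pt t x‖ ^ (2 * q) ≤ P * X := by
    rw [hz, hPdef, hX, ← Real.exp_add, ← Real.exp_nat_mul, ← Real.exp_add, Real.exp_le_exp]
    have e : (q:ℝ) * Real.log M.β + ((2 * q : ℕ):ℝ) * t = q * (Real.log M.β + 2 * t) := by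
      push_cast; ring
    rw [e, ← mul_add]
    exact mul_le_mul_of_nonneg_left (by linarith) hqpos.le
  have hfin : ‖(M.Dn r t x q).trace‖ ≤ 6 * (P * X) := by
    rw [hform]
    refine (norm_add₃_le).trans ?_
    rw [norm_mul, norm_mul, norm_pow, norm_pow]
    have c1 := mul_le_mul_of_nonneg_right hmid (pow_nonneg (norm_nonneg (pt t x)) q)
    have c2 := mul_le_mul_of_nonneg_right hc2 (pow_nonneg (norm_nonneg (pt t x)) (2 * q))
    linarith
  rw [hDP] at hfin
  have hP0 : 0 < P := Real.exp_pos _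
  have hn0 := norm_nonneg (M.An r t x q).trace
  have h1 := (mul_le_mul_of_nonneg_right hprod hn0).trans hfin
  have h2 : P * ‖(M.An r t x q).trace‖ ≤ P * (6 * X) := by linarith
  exact le_of_mul_le_mul_left h2 hP0

end Mod
end GAA

namespace GAA
open scoped Matrix.Norms.L2Operator
open Polynomial MeasureTheory
namespace Mod
variable (M : Mod)

lemma freq_close (t : ℝ) (ht : |t| ≤ M.T) (n : ℕ) :
    ∃ η > 0, ∀ a : ℝ, |M.b - a| < η → ∀ x, ‖M.An M.b t x n - M.An a t x n‖ ≤ 1 := by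
  have hC := M.hC1
  have hK : 0 ≤ n * M.C ^ n * (M.C * n) :=
    mul_nonneg (mul_nonneg (Nat.cast_nonneg _) (pow_nonneg (by linarith) _))
      (mul_nonneg (by linarith) (Nat.cast_nonneg _))
  refine ⟨1 / (n * M.C ^ n * (M.C * n) + 1), by positivity, fun a ha x => ?_⟩
  refine (M.An_lip_freq M.b a t x ht n).trans ?_
  set K := n * M.C ^ n * (M.C * n) with hKd
  rw [lt_div_iff₀ (by linarith)] at ha
  have : n * M.C ^ n * (M.C * (n * |M.b - a|)) = K * |M.b - a| := by rw [hKd]; ring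
  rw [this]
  have := abs_nonneg (M.b - a)
  linarith

lemma lp_riemann (t : ℝ) (ht : |t| ≤ M.T) (δ : ℝ) (hδ : 0 < δ) :
    ∃ D : ℕ, ∀ r : ℚ, D < r.den → ∀ x,
      |∑ j ∈ Finset.range r.den, M.lp t (x + j * (r:ℝ)) - r.den * (Real.log M.β + t)|
      ≤ r.den * δ := by
  obtain ⟨d, hd, hu⟩ := periodic_uc _ (M.lp_periodic t) (M.lp_continuous t ht) δ hδ
  obtain ⟨D, hD⟩ := exists_nat_gt (2 / d)
  refine ⟨D, fun r hr x => ?_⟩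
  have hq : (0:ℝ) < r.den := by exact_mod_cast r.den_pos
  have hr' : (D:ℝ) < r.den := by exact_mod_cast hr
  have h2 : 2 / (r.den:ℝ) ≤ d := by
    rw [div_le_iff₀ hq]
    rw [div_lt_iff₀ hd] at hD
    nlinarith
  have := riemann_sum _ (M.lp_periodic t) (M.lp_continuous t ht) (r:ℝ) r
    (by rw [sub_self, abs_zero]; positivity) δ (fun s u hsu => hu s u (hsu.trans h2)) x
  rwa [M.lp_int t ht] at this

set_option maxHeartbeats 1000000 in
lemma S3 (hβ2 : 1 / 2 ≤ M.β) (hβα : M.β * (1 - M.β) = M.α ^ 2 / 4) (hc : |M.c| ≤ 2)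
    (t : ℝ) (ht : |t| ≤ M.T) (δ : ℝ) (hδ : 0 < δ)
    (hl : ∀ n0 : ℕ, ∃ n ≥ n0, ∀ x,
      ((2 * n : ℕ):ℝ) * (M.L t - δ) ≤ Real.log ‖M.An M.b t x (2 * n)‖) :
    M.L t ≤ max (M.L 0) |t| + 12 * δ := by
  by_contra hcon
  push Not at hcon
  have h0T : |(0:ℝ)| ≤ M.T := by rw [abs_zero]; exact M.hT.le
  have hL0 := M.L_nonneg 0
  have hm1 : M.L 0 ≤ max (M.L 0) |t| := le_max_left _ _
  have hm2 : |t| ≤ max (M.L 0) |t| := le_max_right _ _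
  obtain ⟨n1, hn1⟩ := M.upper t ht δ hδ
  obtain ⟨n2, hn2⟩ := M.upper 0 h0T δ hδ
  obtain ⟨n3, hn3⟩ := exists_nat_gt (1 / δ)
  obtain ⟨n, hn, hlow⟩ := hl (n1 + n2 + n3 + 1)
  replace hn1 := hn1 n (by omega)
  replace hn2 := hn2 n (by omega)
  have hnpos : 0 < n := by omega
  have hnR : (0:ℝ) < n := by exact_mod_cast hnpos
  have hnδ : 1 ≤ n * δ := by
    rw [div_lt_iff₀ hδ] at hn3
    have : (n3:ℝ) ≤ n := by exact_mod_cast (by omega : n3 ≤ n)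
    nlinarith
  have h2e : 2 ≤ Real.exp (n * δ) := by
    have := Real.add_one_le_exp (n * δ)
    linarith
  obtain ⟨η1, hη1, hf1⟩ := M.freq_close t ht n
  obtain ⟨η2, hη2, hf2⟩ := M.freq_close t ht (2 * n)
  obtain ⟨η3, hη3, hf3⟩ := M.freq_close 0 h0T n
  obtain ⟨D1, hD1⟩ := M.lp_riemann t ht δ hδ
  obtain ⟨D2, hD2⟩ := M.lp_riemann 0 h0T δ hδ
  obtain ⟨D3, hD3⟩ := exists_nat_gt ((n * Real.log M.C + 6) / δ)
  obtain ⟨r, hrD, -, hrη⟩ := exists_good_rat M.b M.hb (D1 + D2 + D3) (min η1 (min η2 η3))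
    (lt_min hη1 (lt_min hη2 hη3))
  replace hf1 := hf1 r (hrη.trans_le (min_le_left _ _))
  replace hf2 := hf2 r (hrη.trans_le ((min_le_right _ _).trans (min_le_left _ _)))
  replace hf3 := hf3 r (hrη.trans_le ((min_le_right _ _).trans (min_le_right _ _)))
  replace hD1 := hD1 r (by omega)
  replace hD2 := hD2 r (by omega)
  have hq : (n * Real.log M.C + 6) ≤ r.den * δ := by
    rw [div_lt_iff₀ hδ] at hD3
    have : (D3:ℝ) ≤ r.den := by exact_mod_cast (by omega : D3 ≤ r.den)
    nlinarith
  have hlC : 0 ≤ n * Real.log M.C := mul_nonneg hnR.le (Real.log_nonneg M.hC1)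
  -- bounds along the rational frequency
  have gen : ∀ (t' : ℝ) (l : ℝ), 0 ≤ l → (∀ x, Real.log ‖M.An M.b t' x n‖ ≤ n * l) →
      (∀ x, ‖M.An M.b t' x n - M.An r t' x n‖ ≤ 1) →
      ∀ x, ‖M.An r t' x n‖ ≤ Real.exp (n * (l + δ)) := by
    intro t' l hl0 h1 h2 x
    have e1 := (Real.log_le_iff_le_exp (lt_of_lt_of_le one_pos (M.one_le_An _ _ _ _))).mp (h1 x)
    have e2 := h2 x
    have e3 := norm_le_insert (M.An M.b t' x n) (M.An r t' x n)
    have e4 : 1 ≤ Real.exp (n * l) := Real.one_le_exp (mul_nonneg hnR.le hl0)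
    rw [mul_add, Real.exp_add]
    have e5 := mul_le_mul_of_nonneg_left h2e (Real.exp_pos (n * l)).le
    linarith
  have hLt : 0 ≤ M.L t := M.L_nonneg t
  have hup := gen t (M.L t + δ) (by linarith) hn1 hf1
  have hup0 := gen 0 (M.L 0 + δ) (by linarith) hn2 hf3
  have hlow' : ∀ x, Real.exp (n * (2 * M.L t - 3 * δ)) ≤ ‖M.An r t x (2 * n)‖ := by
    intro x
    have e1 := (Real.le_log_iff_exp_le (lt_of_lt_of_le one_pos (M.one_le_An _ _ _ _))).mp (hlow x)
    have e2 := hf2 x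
    have e3 := norm_le_insert' (M.An M.b t x (2 * n)) (M.An r t x (2 * n))
    have e4 : Real.exp (((2 * n : ℕ):ℝ) * (M.L t - δ))
        = Real.exp (n * (2 * M.L t - 3 * δ)) * Real.exp (n * δ) := by
      rw [← Real.exp_add]; congr 1; push_cast; ring
    have e5 : 1 ≤ Real.exp (n * (2 * M.L t - 3 * δ)) :=
      Real.one_le_exp (mul_nonneg hnR.le (by linarith [abs_nonneg t]))
    have e6 := mul_le_mul_of_nonneg_left h2e (Real.exp_pos (n * (2 * M.L t - 3 * δ))).le
    rw [e4] at e1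
    linarith
  have htl := M.trace_lower r t n hnpos _ _ (M.L t - 6 * δ) (Real.exp_pos _)
    (by linarith [abs_nonneg t]) hup hlow' (by
      have : Real.exp (n * (2 * M.L t - 3 * δ)) = Real.exp (n * δ) * Real.exp (n * (M.L t + δ + δ))
          * Real.exp (n * (M.L t - 6 * δ)) := by
        rw [← Real.exp_add, ← Real.exp_add]; congr 1; ring
      rw [this, mul_assoc, mul_assoc]
      exact mul_le_mul_of_nonneg_right h2e (mul_pos (Real.exp_pos _) (Real.exp_pos _)).le) 0
  have htu := M.trace_upper hβ2 hβα hc r t ht δ (M.L 0 + 3 * δ) hD1 hD2 (by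
    intro x
    have := M.An_block r 0 x h0T n hnpos (M.L 0 + δ + δ) (by linarith)
      (fun x => (Real.log_le_iff_le_exp (lt_of_lt_of_le one_pos (M.one_le_An _ _ _ _))).mpr
        (hup0 x)) r.den
    linarith) 0
  have hqR : (0:ℝ) < r.den := by exact_mod_cast r.den_pos
  have hmx : max (M.L 0 + 3 * δ) |t| ≤ max (M.L 0) |t| + 3 * δ :=
    max_le (by linarith) (by linarith)
  have hX1 : 1 ≤ Real.exp (r.den * (max (M.L 0) |t| + 5 * δ)) :=
    Real.one_le_exp (mul_nonneg hqR.le (by linarith))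
  have hX2 : Real.exp (r.den * (max (M.L 0 + 3 * δ) |t| + 2 * δ))
      ≤ Real.exp (r.den * (max (M.L 0) |t| + 5 * δ)) :=
    Real.exp_le_exp.mpr (mul_le_mul_of_nonneg_left (by linarith) hqR.le)
  have h7 : 7 ≤ Real.exp (r.den * δ) := by
    have := Real.add_one_le_exp (r.den * δ)
    linarith
  have h8 : Real.exp (r.den * (M.L t - 6 * δ)) ≤ Real.exp (r.den * (max (M.L 0) |t| + 6 * δ)) := by
    have e : Real.exp (r.den * (max (M.L 0) |t| + 6 * δ))
        = Real.exp (r.den * (max (M.L 0) |t| + 5 * δ)) * Real.exp (r.den * δ) := by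
      rw [← Real.exp_add]; congr 1; ring
    rw [e]
    have := mul_le_mul_of_nonneg_left h7 (Real.exp_pos (r.den * (max (M.L 0) |t| + 5 * δ))).le
    linarith
  rw [Real.exp_le_exp] at h8
  have := le_of_mul_le_mul_left h8 hqR
  linarith

end Mod
end GAA

namespace GAA
open scoped Matrix.Norms.L2Operator
open Polynomial MeasureTheory

lemma second_diff (f : ℝ → ℝ) (a h B τ : ℝ) (hh : 0 < h) (hτ : 0 < τ)
    (hf : ∀ s, 0 < s → s ≤ h → -(B * s) ≤ f (a + s) - f a) :
    ∃ t s, 0 < s ∧ a ≤ t - s ∧ t + s ≤ a + h ∧ f (t + s) + f (t - s) - 2 * f t ≤ τ * s := by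
  by_contra hcon
  push Not at hcon
  obtain ⟨K, hK⟩ := exists_nat_gt (2 * (f (a + h) - f a + B * h) / (τ * h))
  rw [div_lt_iff₀ (mul_pos hτ hh)] at hK
  obtain ⟨s, hs⟩ : ∃ s, s = h / ((K:ℝ) + 1) := ⟨_, rfl⟩
  have hK1 : (0:ℝ) < (K:ℝ) + 1 := by positivity
  have hs0 : 0 < s := hs ▸ div_pos hh hK1
  have hsh : ((K:ℝ) + 1) * s = h := by rw [hs]; field_simp
  have hd : ∀ i : ℕ, i ≤ K → -(B * s) + i * (τ * s) ≤ f (a + (i + 1) * s) - f (a + i * s) := by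
    intro i
    induction i with
    | zero =>
      intro _
      have := hf s hs0 (by nlinarith [Nat.cast_nonneg (α := ℝ) K])
      simpa using this
    | succ i ih =>
      intro hi
      have h1 := ih (by omega)
      have hiR : ((i:ℝ) + 1) ≤ K := by exact_mod_cast hi
      have h2 := hcon (a + (i + 1) * s) s hs0
        (by nlinarith [Nat.cast_nonneg (α := ℝ) i]) (by nlinarith)
      have e1 : a + ((i:ℝ) + 1) * s + s = a + ((i:ℝ) + 1 + 1) * s := by ring
      have e2 : a + ((i:ℝ) + 1) * s - s = a + i * s := by ring
      rw [e1, e2] at h2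
      push_cast
      linarith
  have hsum : ∀ i : ℕ, i ≤ K + 1 →
      -(B * (i * s)) + (i * ((i:ℝ) - 1) / 2) * (τ * s) ≤ f (a + i * s) - f a := by
    intro i
    induction i with
    | zero => intro _; simp
    | succ i ih =>
      intro hi
      have h1 := ih (by omega)
      have h2 := hd i (by omega)
      push_cast
      linarith
  have := hsum (K + 1) le_rfl
  push_cast at this
  rw [hsh] at this
  have e : ((K:ℝ) + 1) * (K + 1 - 1) / 2 * (τ * s) = K * (τ * h) / 2 := by
    rw [← hsh]; ring
  rw [e] at this
  linarith

namespace Mod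
variable (M : Mod)

lemma S4_aux (hβ2 : 1 / 2 ≤ M.β) (hβα : M.β * (1 - M.β) = M.α ^ 2 / 4) (hc : |M.c| ≤ 2)
    (h : ℝ) (hh : 0 < h) (hhT : 4 * h ≤ M.T) (hhL : 4 * h ≤ M.L 0) (σ : ℝ) (hσ : |σ| = 1) :
    M.L (σ * h) ≤ M.L 0 := by
  have h0T : |(0:ℝ)| ≤ M.T := by rw [abs_zero]; exact M.hT.le
  have hab : ∀ y, 0 ≤ y → |σ * y| = y := fun y hy => by
    rw [abs_mul, hσ, one_mul, abs_of_nonneg hy]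
  refine le_of_forall_pos_le_add fun ε hε => ?_
  obtain ⟨τ, hτ, hlow⟩ := M.lower (ε / 12) (by positivity)
  have hbT : ∀ y, 0 ≤ y → y ≤ 4 * h → |σ * y| ≤ M.T := fun y hy hy2 => by
    rw [hab y hy]; linarith
  obtain ⟨t, s, hs, h1, h2, h3⟩ := second_diff (fun y => M.L (σ * y)) h h (M.L 0 / h) τ hh hτ (by
    intro s hs hsh
    have hcv := M.L_convex 0 (σ * (h + s)) (h / (h + s)) h0T (hbT _ (by linarith) (by linarith))
      (by positivity) (by rw [div_le_one (by linarith)]; linarith)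
    have e : (1 - h / (h + s)) * 0 + h / (h + s) * (σ * (h + s)) = σ * h := by
      field_simp; ring
    rw [e] at hcv
    have e2 : 1 - h / (h + s) = s / (h + s) := by field_simp; ring
    rw [e2] at hcv
    have hL := M.L_nonneg (σ * (h + s))
    have hL0 := M.L_nonneg 0
    have hLh := M.L_nonneg (σ * h)
    have h5 : (h + s) * M.L (σ * h) ≤ s * M.L 0 + h * M.L (σ * (h + s)) := by
      have := mul_le_mul_of_nonneg_left hcv (by linarith : 0 ≤ h + s)
      refine this.trans_eq ?_
      field_simp
    have h6 : h * (-(M.L 0 / h * s)) ≤ h * (M.L (σ * (h + s)) - M.L (σ * h)) := by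
      have : h * (-(M.L 0 / h * s)) = -(M.L 0 * s) := by field_simp
      rw [this]
      nlinarith
    exact le_of_mul_le_mul_left h6 hh)
  have ht0 : 0 ≤ t := by linarith
  have key : M.L (σ * t + s) + M.L (σ * t - s) - 2 * M.L (σ * t) ≤ τ * s := by
    rcases eq_or_eq_neg_of_abs_eq hσ with rfl | rfl
    · simpa using h3
    · simp only [neg_mul, one_mul, neg_add, neg_sub] at h3 ⊢
      have e1 : -t + -s = -t - s := by ring
      have e2 : s - t = -t + s := by ring
      rw [e1, e2] at h3
      linarith
  have habs : ∀ y, |y| ≤ s → |σ * t + y| ≤ M.T := fun y hy => by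
    have := abs_add_le (σ * t) y
    rw [hab t ht0] at this
    linarith
  have hS := M.S3 hβ2 hβα hc (σ * t) (hbT _ ht0 (by linarith)) (ε / 12) (by positivity)
    (hlow (σ * t) s hs (hbT _ ht0 (by linarith)) (habs _ (by rw [abs_of_pos hs]))
      (by rw [sub_eq_add_neg]; exact habs _ (by rw [abs_neg, abs_of_pos hs])) key)
  rw [hab t ht0, max_eq_left (by linarith)] at hS
  have htp : 0 < t := by linarith
  have hcv := M.L_convex 0 (σ * t) (h / t) h0T (hbT _ (by linarith) (by linarith))
      (by positivity) (by rw [div_le_one htp]; linarith)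
  have e : (1 - h / t) * 0 + h / t * (σ * t) = σ * h := by
    field_simp; ring
  rw [e] at hcv
  have q0 : 0 ≤ h / t := by positivity
  have q1 : h / t ≤ 1 := by rw [div_le_one htp]; linarith
  nlinarith [mul_le_mul_of_nonneg_left hS q0, mul_nonneg (sub_nonneg.mpr q1) hε.le]

/-- If the Lyapunov exponent is positive in the regime `|c| ≤ 2`, then uniform growth. -/
lemma S5 (hβ2 : 1 / 2 ≤ M.β) (hβα : M.β * (1 - M.β) = M.α ^ 2 / 4) (hc : |M.c| ≤ 2)
    (hpos : 0 < M.L 0) :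
    ∃ n > 0, ∀ x y, 8 * ‖M.An M.b 0 x n‖ ≤ ‖M.An M.b 0 y (2 * n)‖ := by
  have h0T : |(0:ℝ)| ≤ M.T := by rw [abs_zero]; exact M.hT.le
  have hT := M.hT
  set γ := M.L 0 with hγ
  obtain ⟨h, hh, hhT, hhL⟩ : ∃ h, 0 < h ∧ 4 * h ≤ M.T ∧ 4 * h ≤ γ :=
    ⟨min M.T γ / 4, by positivity, by linarith [min_le_left M.T γ], by linarith [min_le_right M.T γ]⟩
  have l1 := M.S4_aux hβ2 hβα hc h hh hhT hhL 1 (by simp)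
  have l2 := M.S4_aux hβ2 hβα hc h hh hhT hhL (-1) (by simp)
  obtain ⟨τ, hτ, hlow⟩ := M.lower (γ / 8) (by positivity)
  obtain ⟨n1, hn1⟩ := M.upper 0 h0T (γ / 8) (by positivity)
  obtain ⟨n2, hn2⟩ := exists_nat_gt (8 / (γ / 2))
  have habs : |h| = h := abs_of_pos hh
  obtain ⟨n, hn, hx⟩ := hlow 0 h hh h0T (by rw [zero_add, habs]; linarith)
    (by rw [zero_sub, abs_neg, habs]; linarith) (by
      have e1 : (0:ℝ) + h = 1 * h := by ring
      have e2 : (0:ℝ) - h = -1 * h := by ring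
      rw [e1, e2]
      have := mul_pos hτ hh
      linarith) (n1 + n2 + 1)
  refine ⟨n, by omega, fun x y => ?_⟩
  have u := (Real.log_le_iff_le_exp (lt_of_lt_of_le one_pos (M.one_le_An _ _ _ _))).mp
    (hn1 n (by omega) x)
  have l := (Real.le_log_iff_exp_le (lt_of_lt_of_le one_pos (M.one_le_An _ _ _ _))).mp (hx y)
  refine le_trans ?_ l
  refine (mul_le_mul_of_nonneg_left u (by norm_num)).trans ?_
  have h8 : 8 ≤ Real.exp (n * (γ / 2)) := by
    have h9 := Real.add_one_le_exp (n * (γ / 2))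
    rw [div_lt_iff₀ (by positivity)] at hn2
    have : (n2:ℝ) ≤ n := by exact_mod_cast (by omega : n2 ≤ n)
    have := mul_le_mul_of_nonneg_right this (by positivity : 0 ≤ γ / 2)
    linarith
  have e : ((2 * n : ℕ):ℝ) * (M.L 0 - γ / 8) = n * (γ / 2) + n * (M.L 0 + γ / 8) + n * (γ/8) := by
    rw [← hγ]; push_cast; ring
  have hp : 0 ≤ n * (γ / 8) := by positivity
  calc 8 * Real.exp (n * (M.L 0 + γ / 8)) ≤ Real.exp (n * (γ / 2)) * Real.exp (n * (M.L 0 + γ / 8)) :=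
        mul_le_mul_of_nonneg_right h8 (Real.exp_pos _).le
    _ = Real.exp (n * (γ / 2) + n * (M.L 0 + γ / 8)) := (Real.exp_add _ _).symm
    _ ≤ _ := by rw [e]; exact Real.exp_le_exp.mpr (by linarith)

end Mod
end GAA

namespace GAA
open scoped Matrix.Norms.L2Operator
open Polynomial MeasureTheory

lemma lp_hasSum_sq (u : lp (fun _ : ℤ => ℂ) 2) : HasSum (fun i => ‖u i‖ ^ 2) (‖u‖ ^ 2) := by
  have := lp.hasSum_norm (p := 2) (by norm_num) u
  simpa using this

lemma hasSum_shift {g : ℤ → ℝ} {a : ℝ} (h : HasSum g a) (k : ℤ) :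
    HasSum (fun m => g (m + k)) a := by
  have := (Equiv.addRight k).hasSum_iff.mpr h
  simpa [Function.comp_def] using this

lemma hasSum_shiftC {g : ℤ → ℂ} {a : ℂ} (h : HasSum g a) (k : ℤ) :
    HasSum (fun m => g (m + k)) a := by
  have := (Equiv.addRight k).hasSum_iff.mpr h
  simpa [Function.comp_def] using this

lemma lp_shift_summable (u w : lp (fun _ : ℤ => ℂ) 2) (k : ℤ) :
    Summable (fun m : ℤ => inner ℂ (u (m + k)) (w m)) := by
  refine Summable.of_norm_bounded
    (g := fun m : ℤ => ‖u (m + k)‖ ^ 2 + ‖w m‖ ^ 2) ?_ fun m => ?_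
  · exact ((hasSum_shift (lp_hasSum_sq u) k).add (lp_hasSum_sq w)).summable
  · refine (norm_inner_le_norm _ _).trans ?_
    nlinarith [sq_nonneg (‖u (m + k)‖ - ‖w m‖), sq_nonneg (‖u (m + k)‖), sq_nonneg (‖w m‖)]

lemma schr_sa (V : ℝ → ℝ) (b θ : ℝ) (H : lp (fun _ : ℤ => ℂ) 2 →L[ℂ] lp (fun _ : ℤ => ℂ) 2)
    (hH : IsSchrodingerOp V b θ H) (u w : lp (fun _ : ℤ => ℂ) 2) :
    inner ℂ (H u) w = inner ℂ u (H w) := by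
  have s1 := lp_shift_summable u w 1
  have s2 := lp_shift_summable u w (-1)
  have s3 : Summable (fun m : ℤ => inner ℂ (u m) (w (m + 1))) := by
    have := hasSum_shiftC s2.hasSum 1
    simpa using this.summable
  have s4 : Summable (fun m : ℤ => inner ℂ (u m) (w (m + -1))) := by
    have := hasSum_shiftC s1.hasSum (-1)
    simpa using this.summable
  have e1 : ∑' m : ℤ, inner ℂ (u (m + 1)) (w m) = ∑' m : ℤ, inner ℂ (u m) (w (m + -1)) := by
    have := hasSum_shiftC s1.hasSum (-1)
    simpa using this.tsum_eq.symm
  have e2 : ∑' m : ℤ, inner ℂ (u (m + -1)) (w m) = ∑' m : ℤ, inner ℂ (u m) (w (m + 1)) := by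
    have := hasSum_shiftC s2.hasSum 1
    simpa using this.tsum_eq.symm
  have t1 := lp.hasSum_inner (𝕜 := ℂ) (H u) w
  have t2 := lp.hasSum_inner (𝕜 := ℂ) u (H w)
  have hd : ∀ m, inner ℂ (H u m) (w m) - inner ℂ (u m) (H w m)
      = (inner ℂ (u (m + 1)) (w m) + inner ℂ (u (m + -1)) (w m))
        - (inner ℂ (u m) (w (m + 1)) + inner ℂ (u m) (w (m + -1))) := by
    intro m
    rw [hH u m, hH w m]
    simp only [inner_add_left, inner_add_right, ← sub_eq_add_neg]
    have : inner ℂ ((V (m * b + θ) : ℂ) * u m) (w m) = inner ℂ (u m) ((V (m * b + θ) : ℂ) * w m) := by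
      simp only [RCLike.inner_apply, map_mul, Complex.conj_ofReal]
      ring
    rw [this]; ring
  have t3 := t1.sub t2
  simp_rw [hd] at t3
  have t4 := (s1.hasSum.add s2.hasSum).sub (s3.hasSum.add s4.hasSum)
  have := t3.unique t4
  rw [e1, e2] at this
  have h0 : inner ℂ (H u) w - inner ℂ u (H w) = 0 := by rw [this]; ring
  exact sub_eq_zero.mp h0

lemma not_spec (V : ℝ → ℝ) (b θ : ℝ) (H : lp (fun _ : ℤ => ℂ) 2 →L[ℂ] lp (fun _ : ℤ => ℂ) 2)
    (hH : IsSchrodingerOp V b θ H) (E K : ℝ) (hK : 0 < K)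
    (h : ∀ u, ‖u‖ ^ 2 ≤ K * ‖H u - (E : ℂ) • u‖ ^ 2) : (E : ℂ) ∉ spectrum ℂ H := by
  rw [spectrum.notMem_iff, IsUnit.sub_iff]
  set S := H - algebraMap ℂ _ (E : ℂ) with hS
  have hSu : ∀ u, S u = H u - (E : ℂ) • u := fun u => by
    rw [hS, sub_apply, Algebra.algebraMap_eq_smul_one]
    rfl
  have hsa : ∀ u w, inner ℂ (S u) w = inner ℂ u (S w) := by
    intro u w
    rw [hSu, hSu, inner_sub_left, inner_sub_right, schr_sa V b θ H hH, inner_smul_left,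
      inner_smul_right, Complex.conj_ofReal]
  rw [← isUnit_pow_iff (two_ne_zero)]
  refine ContinuousLinearMap.isUnit_of_forall_le_norm_inner_map _ (c := Real.toNNReal K⁻¹)
    (Real.toNNReal_pos.mpr (inv_pos.mpr hK)) fun u => ?_
  have : (S ^ 2) u = S (S u) := by rw [pow_two]; rfl
  rw [this, hsa, inner_self_eq_norm_sq_to_K]
  rw [norm_pow]
  simp only [Complex.coe_algebraMap, Complex.norm_real, norm_norm]
  have := h u
  rw [← hSu] at this
  rw [Real.coe_toNNReal _ (inv_pos.mpr hK).le]
  rw [← div_eq_mul_inv, div_le_iff₀ hK]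
  simpa [mul_comm] using this

section Seq
variable (F : ℤ → Mat) (u f e : ℤ → ℂ)

/-- transfer vectors -/
noncomputable def wv (m : ℤ) : Vec := !₂[u m, u (m - 1)]

lemma wv_sq (m : ℤ) : ‖wv u m‖ ^ 2 = ‖u m‖ ^ 2 + ‖u (m - 1)‖ ^ 2 := by
  rw [vec_norm_sq]; simp [wv]

lemma wv_step (hF : ∀ m, F m = !![e m, -1; 1, 0])
    (hu : ∀ m, f m = u (m + 1) + u (m - 1) - e m * u m) (m : ℤ) :
    wv u (m + 1) = act (F m) (wv u m) + !₂[f m, 0] := by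
  ext i
  fin_cases i
  · simp [act_apply, wv, hF, hu]; ring
  · simp [act_apply, wv, hF]

lemma wv_err (hF : ∀ m, F m = !![e m, -1; 1, 0])
    (hu : ∀ m, f m = u (m + 1) + u (m - 1) - e m * u m) (C : ℝ) (hC : 1 ≤ C)
    (hFC : ∀ m, ‖F m‖ ≤ C) (m : ℤ) (n : ℕ) :
    ‖act (Pr (fun j : ℕ => F (m + j)) n) (wv u m) - wv u (m + n)‖
      ≤ C ^ n * ∑ j ∈ Finset.range n, ‖f (m + j)‖ := by
  induction n with
  | zero => simp [Pr, act_one]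
  | succ n ih =>
    have e1 : m + ((n + 1 : ℕ) : ℤ) = (m + n) + 1 := by push_cast; ring
    rw [e1, wv_step F u f e hF hu, Pr, act_mul, Finset.sum_range_succ]
    have e2 : act (F (m + n)) (act (Pr (fun j : ℕ => F (m + j)) n) (wv u m))
        - (act (F (m + n)) (wv u (m + n)) + !₂[f (m + n), 0])
        = act (F (m + n)) (act (Pr (fun j : ℕ => F (m + j)) n) (wv u m) - wv u (m + n))
          - !₂[f (m + n), 0] := by
      simp only [act, map_sub]; abel
    rw [e2]
    refine (norm_sub_le _ _).trans ?_
    have h1 := (norm_act_le (F (m + n))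
      (act (Pr (fun j : ℕ => F (m + j)) n) (wv u m) - wv u (m + n))).trans
      (mul_le_mul (hFC (m + n)) ih (norm_nonneg _) (by linarith))
    have h2 : ‖(!₂[f (m + n), 0] : Vec)‖ = ‖f (m + n)‖ := by
      rw [← sq_eq_sq₀ (norm_nonneg _) (norm_nonneg _), vec_norm_sq]; simp
    have h3 : 1 ≤ C ^ (n + 1) := one_le_pow₀ hC
    have h4 := mul_le_mul_of_nonneg_right h3 (norm_nonneg (f (m + n)))
    rw [h2, mul_add]
    rw [← mul_assoc, ← pow_succ'] at h1
    linarith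

lemma hyp_bound (hF : ∀ m, F m = !![e m, -1; 1, 0])
    (hu : ∀ m, f m = u (m + 1) + u (m - 1) - e m * u m) (C : ℝ) (hC : 1 ≤ C)
    (hFC : ∀ m, ‖F m‖ ≤ C) (n : ℕ)
    (h8 : ∀ m m' : ℤ, 8 * ‖Pr (fun j : ℕ => F (m + j)) n‖ ≤ ‖Pr (fun j : ℕ => F (m' + j)) (2 * n)‖)
    (m : ℤ) : ‖wv u (m + n)‖ ≤ 1 / 8 * (‖wv u (m + (2 * n : ℕ))‖ + ‖wv u m‖)
      + 2 * C ^ (2 * n) * ∑ j ∈ Finset.range (2 * n), ‖f (m + j)‖ := by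
  have hdet : ∀ m, (F m).det = 1 := fun m => by rw [hF]; simp [Matrix.det_fin_two]
  set B := Pr (fun j : ℕ => F (m + j)) n with hB
  set A := Pr (fun j : ℕ => F ((m + n) + j)) n with hA
  have hAB : Pr (fun j : ℕ => F (m + j)) (2 * n) = A * B := by
    rw [two_mul, Pr_add, hA]
    congr 2
    ext1 j
    congr 1
    push_cast; ring
  have hBd : B.det = 1 := Pr_det (fun _ => hdet _) n
  have hAd : A.det = 1 := Pr_det (fun _ => hdet _) n
  have k := key_wedge A B hBd (wv u m)
  have a1 := h8 m m
  have a2 := h8 (m + n) m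
  rw [← hB, hAB] at a1
  rw [← hA, hAB] at a2
  have E1 := wv_err F u f e hF hu C hC hFC m n
  have E2 := wv_err F u f e hF hu C hC hFC m (2 * n)
  rw [← hB] at E1
  rw [hAB, act_mul] at E2
  have hN : 0 < ‖A * B‖ := lt_of_lt_of_le one_pos
    (one_le_norm _ (by rw [Matrix.det_mul, hAd, hBd, one_mul]))
  generalize ‖A * B‖ = N at *
  have k2 : ‖act B (wv u m)‖ ≤ 1 / 8 * (‖act A (act B (wv u m))‖ + ‖wv u m‖) := by
    have p1 := mul_le_mul_of_nonneg_right a1 (norm_nonneg (act A (act B (wv u m))))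
    have p2 := mul_le_mul_of_nonneg_right a2 (norm_nonneg (wv u m))
    have : N * ‖act B (wv u m)‖ ≤ N * (1 / 8 * (‖act A (act B (wv u m))‖ + ‖wv u m‖)) := by
      linarith
    exact le_of_mul_le_mul_left this hN
  have q1 := norm_le_insert (act B (wv u m)) (wv u (m + n))
  have q2 := norm_le_insert' (act A (act B (wv u m))) (wv u (m + (2 * n : ℕ)))
  have hS : ∑ j ∈ Finset.range n, ‖f (m + j)‖ ≤ ∑ j ∈ Finset.range (2 * n), ‖f (m + j)‖ :=
    Finset.sum_le_sum_of_subset_of_nonneg (Finset.range_mono (by omega))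
      fun _ _ _ => norm_nonneg _
  have hS0 : 0 ≤ ∑ j ∈ Finset.range n, ‖f (m + j)‖ := Finset.sum_nonneg fun _ _ => norm_nonneg _
  have hpw : C ^ n ≤ C ^ (2 * n) := pow_le_pow_right₀ hC (by omega)
  have hp := mul_le_mul hpw hS hS0 (pow_nonneg (by linarith) _)
  linarith [(norm_nonneg _).trans E2]

end Seq

lemma sq_ineq (w a b S : ℝ) (hw : 0 ≤ w) (h : w ≤ 1 / 8 * (a + b) + S) :
    w ^ 2 ≤ 1 / 16 * (a ^ 2 + b ^ 2) + 2 * S ^ 2 := by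
  have h1 : w ^ 2 ≤ (1 / 8 * (a + b) + S) ^ 2 := pow_le_pow_left₀ hw h 2
  nlinarith [sq_nonneg (1 / 8 * (a + b) - S), sq_nonneg (a - b)]

lemma hyp_spec (V : ℝ → ℝ) (b θ : ℝ) (H : lp (fun _ : ℤ => ℂ) 2 →L[ℂ] lp (fun _ : ℤ => ℂ) 2)
    (hH : IsSchrodingerOp V b θ H) (E : ℝ) (C : ℝ) (hC : 1 ≤ C)
    (hFC : ∀ x, ‖tMat V x E‖ ≤ C) (n : ℕ)
    (h8 : ∀ m m' : ℤ, 8 * ‖Pr (fun j : ℕ => tMat V (((m + j : ℤ) : ℝ) * b + θ) E) n‖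
      ≤ ‖Pr (fun j : ℕ => tMat V (((m' + j : ℤ) : ℝ) * b + θ) E) (2 * n)‖) :
    (E : ℂ) ∉ spectrum ℂ H := by
  set Q := 2 * (2 * C ^ (2 * n)) ^ 2 * (2 * n : ℕ) * (2 * n : ℕ) with hQ
  have hQ0 : 0 ≤ Q := by positivity
  refine not_spec V b θ H hH E (Q + 1) (by linarith) fun u => ?_
  set f := H u - (E : ℂ) • u with hf
  have hu : ∀ m : ℤ, f m = u (m + 1) + u (m - 1) - ((E : ℂ) - (V ((m : ℝ) * b + θ) : ℝ)) * u m := by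
    intro m
    have : f m = H u m - (E : ℂ) * u m := rfl
    rw [this, hH u m]; ring
  have hb := hyp_bound (fun m : ℤ => tMat V ((m : ℝ) * b + θ) E) u f
    (fun m => (E : ℂ) - (V ((m : ℝ) * b + θ) : ℝ)) (fun m => rfl) hu C hC (fun _ => hFC _) n h8
  have hsq : ∀ m : ℤ, ‖wv u (m + n)‖ ^ 2 ≤
      1 / 16 * (‖wv u (m + (2 * n : ℕ))‖ ^ 2 + ‖wv u m‖ ^ 2)
      + 2 * (2 * C ^ (2 * n)) ^ 2 * (2 * n : ℕ) * ∑ j ∈ Finset.range (2 * n), ‖f (m + j)‖ ^ 2 := by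
    intro m
    refine (sq_ineq _ _ _ _ (norm_nonneg _) (hb m)).trans ?_
    have h2 := sq_sum_le_card_mul_sum_sq (s := Finset.range (2 * n)) (f := fun j : ℕ => ‖f (m + j)‖)
    rw [Finset.card_range] at h2
    rw [mul_pow]
    have h3 := mul_le_mul_of_nonneg_left h2 (by positivity : 0 ≤ 2 * (2 * C ^ (2 * n)) ^ 2)
    linarith
  have su := lp_hasSum_sq u
  have sf := lp_hasSum_sq f
  have sw : HasSum (fun m => ‖wv u m‖ ^ 2) (‖u‖ ^ 2 + ‖u‖ ^ 2) := by
    simp_rw [wv_sq]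
    exact su.add (by simpa [sub_eq_add_neg] using hasSum_shift su (-1))
  have s1 := hasSum_shift sw n
  have s2 := hasSum_shift sw (2 * n : ℕ)
  have s3 : HasSum (fun m : ℤ => ∑ j ∈ Finset.range (2 * n), ‖f (m + j)‖ ^ 2)
      (∑ j ∈ Finset.range (2 * n), ‖f‖ ^ 2) :=
    hasSum_sum fun j _ => hasSum_shift sf j
  have := hasSum_le hsq s1 (((s2.add sw).mul_left (1 / 16)).add
    (s3.mul_left (2 * (2 * C ^ (2 * n)) ^ 2 * (2 * n : ℕ))))
  rw [Finset.sum_const, Finset.card_range, nsmul_eq_mul, ← mul_assoc, ← hQ] at this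
  nlinarith [sq_nonneg ‖u‖, sq_nonneg ‖f‖, mul_nonneg hQ0 (sq_nonneg ‖f‖)]

lemma big_spec (V : ℝ → ℝ) (b θ : ℝ) (H : lp (fun _ : ℤ => ℂ) 2 →L[ℂ] lp (fun _ : ℤ => ℂ) 2)
    (hH : IsSchrodingerOp V b θ H) (E η : ℝ) (hη : 0 < η) (hV : ∀ x, 2 + η ≤ |E - V x|) :
    (E : ℂ) ∉ spectrum ℂ H := by
  refine not_spec V b θ H hH E ((1 + 2 / η) / (2 * η)) (by positivity) fun u => ?_
  set f := H u - (E : ℂ) • u with hf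
  have hsq : ∀ m : ℤ, (2 + η) ^ 2 * ‖u m‖ ^ 2 ≤ (2 + η) * (‖u (m + 1)‖ ^ 2 + ‖u (m + -1)‖ ^ 2)
      + (1 + 2 / η) * ‖f m‖ ^ 2 := by
    intro m
    have h1 : ((E : ℂ) - (V ((m : ℝ) * b + θ) : ℝ)) * u m = u (m + 1) + u (m + -1) - f m := by
      have : f m = H u m - (E : ℂ) * u m := rfl
      rw [this, hH u m, ← sub_eq_add_neg]; ring
    have h2 : (2 + η) * ‖u m‖ ≤ ‖u (m + 1)‖ + ‖u (m + -1)‖ + ‖f m‖ := by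
      have h3 : ‖((E : ℂ) - (V ((m : ℝ) * b + θ) : ℝ)) * u m‖ ≤
          ‖u (m + 1)‖ + ‖u (m + -1)‖ + ‖f m‖ := by
        rw [h1]
        exact (norm_sub_le _ _).trans (by linarith [norm_add_le (u (m + 1)) (u (m + -1))])
      rw [norm_mul, ← Complex.ofReal_sub, Complex.norm_real, Real.norm_eq_abs] at h3
      exact (mul_le_mul_of_nonneg_right (hV _) (norm_nonneg _)).trans h3
    have hx0 : 0 ≤ ‖u m‖ := norm_nonneg _
    generalize ‖u m‖ = x at *
    have hx : 0 ≤ ‖u (m + 1)‖ := norm_nonneg _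
    generalize ‖u (m + 1)‖ = p at *
    have hy : 0 ≤ ‖u (m + -1)‖ := norm_nonneg _
    generalize ‖u (m + -1)‖ = q at *
    have hz : 0 ≤ ‖f m‖ := norm_nonneg _
    generalize ‖f m‖ = z at *
    have g1 := pow_le_pow_left₀ (by positivity : 0 ≤ (2 + η) * x) h2 2
    have g2 : 0 ≤ (2 / η) * (η / 2 * (p + q) - z) ^ 2 := by positivity
    have g3 : (2 / η) * (η / 2 * (p + q) - z) ^ 2
        = η / 2 * (p + q) ^ 2 - 2 * (p + q) * z + 2 / η * z ^ 2 := by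
      field_simp; ring
    have g4 : 0 ≤ (1 + η / 2) * (p - q) ^ 2 := by positivity
    nlinarith
  have su := lp_hasSum_sq u
  have sf := lp_hasSum_sq f
  have := hasSum_le hsq (su.mul_left _) ((((hasSum_shift su 1).add (hasSum_shift su (-1))).mul_left
    (2 + η)).add (sf.mul_left (1 + 2 / η)))
  rw [div_mul_eq_mul_div, le_div_iff₀ (by positivity)]
  nlinarith [sq_nonneg ‖u‖, sq_nonneg η, mul_nonneg (sq_nonneg η) (sq_nonneg ‖u‖)]

end GAA

namespace GAA
open scoped Matrix.Norms.L2Operator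
open Polynomial MeasureTheory

namespace Mod
variable (M : Mod)

/-- Positivity of the Lyapunov exponent for `c < -2`. -/
lemma part1 (hβ2 : 1 / 2 ≤ M.β) (hβα : M.β * (1 - M.β) = M.α ^ 2 / 4) (hc : M.c < -2) :
    0 < M.L 0 := by
  have h0T : |(0:ℝ)| ≤ M.T := by rw [abs_zero]; exact M.hT.le
  have hβ := M.hβ
  have hdisc : 0 ≤ M.c ^ 2 / 4 - M.α ^ 2 := by nlinarith [sq_nonneg (2 * M.β - 1)]
  set D := Real.sqrt (M.c ^ 2 / 4 - M.α ^ 2) with hD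
  have hDs : D ^ 2 = M.c ^ 2 / 4 - M.α ^ 2 := Real.sq_sqrt hdisc
  have hD0 : 0 ≤ D := Real.sqrt_nonneg _
  obtain ⟨μ, hμ⟩ : ∃ μ, μ = (-(M.c / 2) + D) / 2 := ⟨_, rfl⟩
  obtain ⟨ν, hν⟩ : ∃ ν, ν = (-(M.c / 2) - D) / 2 := ⟨_, rfl⟩
  have hsum : μ + ν = -(M.c / 2) := by rw [hμ, hν]; ring
  have hprod : μ * ν = M.α ^ 2 / 4 := by rw [hμ, hν]; linear_combination (-1 / 4) * hDs
  have hμν : ν ≤ μ := by rw [hμ, hν]; linarith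
  have hμpos : 0 < μ := by rw [hμ]; linarith
  have hν0 : 0 ≤ ν := by
    by_contra hh
    push Not at hh
    nlinarith [sq_nonneg M.α]
  have hlt : M.β < μ := by
    have : (M.β - μ) * (M.β - ν) < 0 := by nlinarith
    by_contra hh
    push Not at hh
    nlinarith
  have hlog : Real.log M.β < Real.log μ := Real.log_lt_log hβ hlt
  have hI : ∀ N : ℕ, N * Real.log μ ≤ Real.log 4 + M.I 0 N + N * (Real.log M.β + 0) := by
    intro N
    have hcoef : (M.TP M.b N).coeff 0 = ((μ ^ N + ν ^ N : ℝ) : ℂ) := by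
      rw [M.TP_coeff0, tr_pow _ (μ : ℂ) (ν : ℂ)]
      · push_cast; rfl
      · rw [Dmat0_trace, ← hsum]; push_cast; rfl
      · rw [Dmat0_det, ← hprod]; push_cast; rfl
    have hge : μ ^ N ≤ μ ^ N + ν ^ N := by linarith [pow_nonneg hν0 N]
    have hpw : 0 < μ ^ N := pow_pos hμpos N
    have hpos : 0 < μ ^ N + ν ^ N := hpw.trans_le hge
    have hne : (M.TP M.b N).coeff 0 ≠ 0 := by
      rw [hcoef]; exact_mod_cast hpos.ne'
    have h1 := J_coeff_zero _ hne
    have h2 := M.J_upper (M.TP M.b N) N (fun t x => by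
      rw [M.TP_eval]
      refine (norm_trace_le _).trans ?_
      linarith [norm_nonneg (M.Dn M.b t x N)]) (fun h => hne (by rw [h]; simp)) 0 h0T
    rw [hcoef, Complex.norm_real, Real.norm_eq_abs, abs_of_pos hpos] at h1
    have h3 := Real.log_le_log hpw hge
    rw [Real.log_pow] at h3
    linarith
  set κ := Real.log μ - Real.log M.β with hκ
  have hκ0 : 0 < κ := by linarith
  obtain ⟨n0, hn0⟩ := M.I_upper 0 h0T (κ / 4) (by positivity)
  obtain ⟨n1, hn1⟩ := exists_nat_gt (Real.log 4 / (κ / 4))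
  rw [div_lt_iff₀ (by positivity)] at hn1
  have h1 := hn0 (n0 + n1 + 1) (by omega)
  have h2 := hI (n0 + n1 + 1)
  push_cast at h1 h2
  have hn : (0:ℝ) < (n0:ℝ) + n1 + 1 := by positivity
  have h3 : ((n0:ℝ) + n1 + 1) * (κ / 4) ≥ n1 * (κ / 4) :=
    mul_le_mul_of_nonneg_right (by linarith [Nat.cast_nonneg (α := ℝ) n0]) (by positivity)
  have h4 : ((n0:ℝ) + n1 + 1) * (κ / 4) < ((n0:ℝ) + n1 + 1) * M.L 0 := by
    have e : ((n0:ℝ) + n1 + 1) * κ = (n0 + n1 + 1) * Real.log μ - (n0 + n1 + 1) * Real.log M.β := by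
      rw [hκ]; ring
    have : 0 < ((n0:ℝ) + n1 + 1) * (κ / 4) := by positivity
    nlinarith
  have := lt_of_mul_lt_mul_left h4 hn.le
  linarith

end Mod

lemma pfun_factor (α β : ℝ) (hβ : 0 < β) (hβα : β * (1 - β) = α ^ 2 / 4) (z : ℂ) :
    pfun α z = (β : ℂ) * ((z - ((α / (2 * β) : ℝ) : ℂ)) * (1 - ((α / (2 * β) : ℝ) : ℂ) * z)) := by
  have hb : (β : ℂ) ≠ 0 := by exact_mod_cast hβ.ne'
  have h : (β : ℂ) * (1 - β) = (α : ℂ) ^ 2 / 4 := by exact_mod_cast congrArg (fun x : ℝ => (x : ℂ)) hβα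
  unfold pfun
  push_cast
  field_simp
  linear_combination 4 * z * h

lemma exp_bound (ρ T t : ℝ) (h0 : 0 ≤ ρ) (h1 : ρ < 1) (hT : T ≤ (1 - ρ) / 2) (ht : |t| ≤ T) :
    ρ + (1 - ρ) / 2 ≤ Real.exp t ∧ ρ * Real.exp t ≤ 1 - (1 - ρ) / 2 := by
  have hl := (abs_le.mp ht).1
  have hr := (abs_le.mp ht).2
  constructor
  · have := Real.add_one_le_exp t
    linarith
  · have h2 := Real.add_one_le_exp (-t)
    have hp := Real.exp_pos t
    rw [Real.exp_neg] at h2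
    have h3 : (1 + ρ) / 2 ≤ (Real.exp t)⁻¹ := by linarith
    have h4 : (1 + ρ) / 2 * Real.exp t ≤ 1 := by
      have := mul_le_mul_of_nonneg_right h3 hp.le
      rwa [inv_mul_cancel₀ hp.ne'] at this
    have h5 : Real.exp t ≤ 2 / (1 + ρ) := by
      rw [le_div_iff₀ (by linarith)]; linarith
    have h6 : ρ * Real.exp t ≤ ρ * (2 / (1 + ρ)) := mul_le_mul_of_nonneg_left h5 h0
    have h7 : ρ * (2 / (1 + ρ)) ≤ 1 - (1 - ρ) / 2 := by
      rw [mul_div_assoc', div_le_iff₀ (by linarith)]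
      nlinarith [sq_nonneg (1 - ρ)]
    linarith

lemma int_log_one_sub (ρ t : ℝ) (h1 : |ρ| * Real.exp t < 1) :
    ∫ x in (0:ℝ)..1, Real.log ‖1 - (ρ : ℂ) * pt t x‖ = 0 := by
  rcases eq_or_ne ρ 0 with rfl | hρ
  · simp
  have hr : 0 < |ρ| := abs_pos.mpr hρ
  have hρC : (ρ : ℂ) ≠ 0 := by exact_mod_cast hρ
  have hw : ‖((ρ⁻¹ : ℝ) : ℂ)‖ = |ρ|⁻¹ := by rw [Complex.norm_real, Real.norm_eq_abs, abs_inv]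
  have hlt : Real.exp t < |ρ|⁻¹ := by
    rw [← one_div, lt_div_iff₀ hr]; linarith
  have hne : ∀ x, ‖pt t x - ((ρ⁻¹ : ℝ) : ℂ)‖ ≠ 0 := by
    intro x h
    rw [norm_eq_zero, sub_eq_zero] at h
    have := congrArg norm h
    rw [norm_pt, hw] at this
    linarith
  have h : ∀ x, Real.log ‖1 - (ρ : ℂ) * pt t x‖
      = Real.log |ρ| + Real.log ‖pt t x - ((ρ⁻¹ : ℝ) : ℂ)‖ := by
    intro x
    have e : 1 - (ρ : ℂ) * pt t x = -(ρ : ℂ) * (pt t x - ((ρ⁻¹ : ℝ) : ℂ)) := by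
      push_cast; field_simp; ring
    rw [e, norm_mul, norm_neg, Complex.norm_real, Real.norm_eq_abs, Real.log_mul hr.ne' (hne x)]
  simp only [h]
  rw [intervalIntegral.integral_add intervalIntegrable_const]
  · rw [J_X_sub_C, phi, hw, max_eq_right hlt.le, Real.log_inv]
    simp
  · exact (Continuous.log (by have := pt_continuous t; fun_prop) hne).intervalIntegrable _ _

lemma exists_mod (b α E c β : ℝ) (hb : Irrational b) (hα : |α| < 1) (hβ2 : 1 / 2 ≤ β)
    (hβα : β * (1 - β) = α ^ 2 / 4) :
    ∃ M : Mod, M.b = b ∧ M.α = α ∧ M.E = E ∧ M.c = c ∧ M.β = β := by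
  have hβ : 0 < β := by linarith
  obtain ⟨r0, hr0⟩ : ∃ r0, r0 = α / (2 * β) := ⟨_, rfl⟩
  obtain ⟨ρ, hρ⟩ : ∃ ρ, ρ = |r0| := ⟨_, rfl⟩
  have hρ0 : 0 ≤ ρ := hρ ▸ abs_nonneg _
  have hρ1 : ρ < 1 := by
    rw [hρ, hr0, abs_div, abs_of_pos (by linarith : 0 < 2 * β), div_lt_one (by linarith)]
    linarith
  have hnr : ‖(r0 : ℂ)‖ = ρ := by rw [Complex.norm_real, Real.norm_eq_abs, hρ]
  obtain ⟨T, hT⟩ : ∃ T, T = min (Real.log 2) ((1 - ρ) / 2) := ⟨_, rfl⟩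
  have hTpos : 0 < T := by
    rw [hT]; exact lt_min (Real.log_pos (by norm_num)) (by linarith)
  have hT2 : T ≤ Real.log 2 := hT ▸ min_le_left _ _
  have hT3 : T ≤ (1 - ρ) / 2 := hT ▸ min_le_right _ _
  have hexp : ∀ t, |t| ≤ T → Real.exp t ≤ 2 := fun t ht => by
    have h2 := (abs_le.mp ht).2
    have : Real.exp t ≤ Real.exp (Real.log 2) := Real.exp_le_exp.mpr (by linarith)
    rwa [Real.exp_log two_pos] at this
  have hf : ∀ z, pfun α z = (β : ℂ) * ((z - (r0 : ℂ)) * (1 - (r0 : ℂ) * z)) := fun z => by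
    rw [hr0]; exact pfun_factor α β hβ hβα z
  have g1 : ∀ t x, |t| ≤ T → (1 - ρ) / 2 ≤ ‖pt t x - (r0 : ℂ)‖ := fun t x ht => by
    have h := norm_sub_norm_le (pt t x) (r0 : ℂ)
    rw [norm_pt, hnr] at h
    linarith [(exp_bound ρ T t hρ0 hρ1 hT3 ht).1]
  have g2 : ∀ t x, |t| ≤ T → (1 - ρ) / 2 ≤ ‖1 - (r0 : ℂ) * pt t x‖ := fun t x ht => by
    have h := norm_sub_norm_le (1 : ℂ) ((r0 : ℂ) * pt t x)
    rw [norm_mul, norm_pt, hnr, norm_one] at h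
    linarith [(exp_bound ρ T t hρ0 hρ1 hT3 ht).2]
  have hhalf : 0 < (1 - ρ) / 2 := by linarith
  obtain ⟨m, hm⟩ : ∃ m, m = β * ((1 - ρ) / 2 * ((1 - ρ) / 2)) := ⟨_, rfl⟩
  have hm0 : 0 < m := hm ▸ mul_pos hβ (mul_pos hhalf hhalf)
  have hmp : ∀ t x, |t| ≤ T → m ≤ ‖pfun α (pt t x)‖ := fun t x ht => by
    rw [hf, norm_mul, norm_mul, Complex.norm_real, Real.norm_eq_abs, abs_of_pos hβ, hm]
    exact mul_le_mul_of_nonneg_left (mul_le_mul (g1 t x ht) (g2 t x ht) hhalf.le (norm_nonneg _))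
      hβ.le
  obtain ⟨k, hk⟩ : ∃ k, k = (|E| * 2 + |c / 2| * 5) / m := ⟨_, rfl⟩
  have hk0 : 0 ≤ k := by rw [hk]; positivity
  obtain ⟨l, hl⟩ : ∃ l, l = |(c - E * α) / 2| * 5 * (4 * Real.pi) / (m * m) := ⟨_, rfl⟩
  have hl0 : 0 ≤ l := by rw [hl]; have := Real.pi_pos; positivity
  have hz2 : ∀ t x, |t| ≤ T → ‖pt t x‖ ≤ 2 := fun t x ht => by rw [norm_pt]; exact hexp t ht
  have he : ∀ t x, |t| ≤ T → ‖efun E c (pt t x) / pfun α (pt t x)‖ ≤ k := fun t x ht => by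
    rw [norm_div, hk]
    have hz := hz2 t x ht
    have hz0 := norm_nonneg (pt t x)
    have h1 : ‖efun E c (pt t x)‖ ≤ |E| * 2 + |c / 2| * 5 := by
      unfold efun
      refine (norm_sub_le _ _).trans ?_
      rw [norm_mul, norm_mul, Complex.norm_real, Complex.norm_real, Real.norm_eq_abs,
        Real.norm_eq_abs]
      have h5 : ‖pt t x ^ 2 + 1‖ ≤ 5 := by
        refine (norm_add_le _ _).trans ?_
        rw [norm_pow, norm_one]
        nlinarith
      exact add_le_add (mul_le_mul_of_nonneg_left hz (abs_nonneg _))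
        (mul_le_mul_of_nonneg_left h5 (abs_nonneg _))
    exact div_le_div₀ (by positivity) h1 hm0 (hmp t x ht)
  refine ⟨⟨b, α, E, c, β, T, m, 2 * (1 + k) + 2 * l, hb, hβ, hTpos, hT2, hm0, hmp, by linarith,
    ?_, ?_, ?_⟩, rfl, rfl, rfl, rfl, rfl⟩
  · intro t x ht
    have := norm_le_entries (Amat α E c (pt t x)) (1 + k) (by
      intro i j
      fin_cases i <;> fin_cases j
      · simpa [Amat] using (he t x ht).trans (by linarith)
      · simp [Amat, hk0]
      · simp [Amat, hk0]
      · simp [Amat]; linarith)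
    linarith
  · intro t x y ht
    have hpx : pfun α (pt t x) ≠ 0 := fun h => by
      have := hmp t x ht; rw [h, norm_zero] at this; linarith
    have hpy : pfun α (pt t y) ≠ 0 := fun h => by
      have := hmp t y ht; rw [h, norm_zero] at this; linarith
    have key : ‖efun E c (pt t x) / pfun α (pt t x) - efun E c (pt t y) / pfun α (pt t y)‖
        ≤ l * |x - y| := by
      rw [div_sub_div _ _ hpx hpy]
      have e1 : efun E c (pt t x) * pfun α (pt t y) - pfun α (pt t x) * efun E c (pt t y)
          = (((c - E * α) / 2 : ℝ) : ℂ) * ((pt t x - pt t y) * (1 - pt t x * pt t y)) := by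
        unfold efun pfun; push_cast; ring
      rw [e1, norm_div, norm_mul, norm_mul, norm_mul, Complex.norm_real, Real.norm_eq_abs]
      have a1 : ‖pt t x - pt t y‖ ≤ 4 * Real.pi * |x - y| := by
        refine (norm_pt_sub_le t x y).trans ?_
        have := mul_le_mul_of_nonneg_right (hexp t ht)
          (mul_nonneg (mul_nonneg zero_le_two Real.pi_pos.le) (abs_nonneg (x - y)))
        linarith
      have a2 : ‖1 - pt t x * pt t y‖ ≤ 5 := by
        refine (norm_sub_le _ _).trans ?_
        rw [norm_one, norm_mul]
        have := mul_le_mul (hz2 t x ht) (hz2 t y ht) (norm_nonneg _) zero_le_two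
        linarith
      have a3 : m * m ≤ ‖pfun α (pt t x)‖ * ‖pfun α (pt t y)‖ :=
        mul_le_mul (hmp t x ht) (hmp t y ht) hm0.le (norm_nonneg _)
      have a4 : |(c - E * α) / 2| * (‖pt t x - pt t y‖ * ‖1 - pt t x * pt t y‖)
          ≤ |(c - E * α) / 2| * (4 * Real.pi * |x - y| * 5) :=
        mul_le_mul_of_nonneg_left (mul_le_mul a1 a2 (norm_nonneg _)
          (mul_nonneg (mul_nonneg (by norm_num) Real.pi_pos.le) (abs_nonneg _))) (abs_nonneg _)
      refine (div_le_div₀ ((mul_nonneg (abs_nonneg _)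
        (mul_nonneg (norm_nonneg _) (norm_nonneg _))).trans a4) a4 (mul_pos hm0 hm0) a3).trans_eq ?_
      rw [hl]; ring
    have hxy := abs_nonneg (x - y)
    have := norm_le_entries (Amat α E c (pt t x) - Amat α E c (pt t y)) (l * |x - y|) (by
      intro i j
      have hn : 0 ≤ l * |x - y| := mul_nonneg hl0 hxy
      fin_cases i <;> fin_cases j
      · simpa [Amat] using key
      · simpa [Amat] using hn
      · simpa [Amat] using hn
      · simpa [Amat] using hn)
    refine this.trans ?_
    nlinarith [mul_nonneg hk0 hxy]
  · intro t ht
    have n1 : ∀ x, ‖pt t x - (r0 : ℂ)‖ ≠ 0 := fun x => (hhalf.trans_le (g1 t x ht)).ne'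
    have n2 : ∀ x, ‖1 - (r0 : ℂ) * pt t x‖ ≠ 0 := fun x => (hhalf.trans_le (g2 t x ht)).ne'
    have h : ∀ x, Real.log ‖pfun α (pt t x)‖ = Real.log β
        + (Real.log ‖pt t x - (r0 : ℂ)‖ + Real.log ‖1 - (r0 : ℂ) * pt t x‖) := fun x => by
      rw [hf, norm_mul, norm_mul, Complex.norm_real, Real.norm_eq_abs, abs_of_pos hβ,
        Real.log_mul hβ.ne' (mul_ne_zero (n1 x) (n2 x)), Real.log_mul (n1 x) (n2 x)]
    have c0 := pt_continuous t
    have c1 : Continuous fun x => Real.log ‖pt t x - (r0 : ℂ)‖ :=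
      Continuous.log (by fun_prop) n1
    have c2 : Continuous fun x => Real.log ‖1 - (r0 : ℂ) * pt t x‖ :=
      Continuous.log (by fun_prop) n2
    have c3 : Continuous fun x => Real.log ‖pt t x - (r0 : ℂ)‖ + Real.log ‖1 - (r0 : ℂ) * pt t x‖ :=
      c1.add c2
    simp only [h]
    rw [intervalIntegral.integral_add intervalIntegrable_const
      (c3.intervalIntegrable _ _), intervalIntegral.integral_add
      (c1.intervalIntegrable _ _) (c2.intervalIntegrable _ _), J_X_sub_C,
      int_log_one_sub r0 t (by
        rw [← hρ]; linarith [(exp_bound ρ T t hρ0 hρ1 hT3 ht).2]), phi, hnr,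
      max_eq_left (by linarith [(exp_bound ρ T t hρ0 hρ1 hT3 ht).1]), Real.log_exp]
    simp

end GAA

namespace GAA
open scoped Matrix.Norms.L2Operator
open Polynomial MeasureTheory

lemma pt_zero_re (x : ℝ) : pt 0 x = (Real.cos (2 * Real.pi * x) : ℂ)
    + (Real.sin (2 * Real.pi * x) : ℂ) * Complex.I := by
  unfold pt
  have : ((0:ℝ) : ℂ) + 2 * Real.pi * Complex.I * (x : ℂ) = ((2 * Real.pi * x : ℝ) : ℂ) * Complex.I := by
    push_cast; ring
  rw [this, Complex.exp_mul_I, Complex.ofReal_cos, Complex.ofReal_sin]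

lemma pt_zero_sq (x : ℝ) : pt 0 x ^ 2 + 1 = 2 * (Real.cos (2 * Real.pi * x) : ℂ) * pt 0 x := by
  have h : (Real.sin (2 * Real.pi * x) : ℂ) ^ 2 + (Real.cos (2 * Real.pi * x) : ℂ) ^ 2 = 1 := by
    exact_mod_cast congrArg (fun y : ℝ => (y : ℂ)) (Real.sin_sq_add_cos_sq (2 * Real.pi * x))
  rw [pt_zero_re]
  linear_combination (-1) * h + (Real.sin (2 * Real.pi * x) : ℂ) ^ 2 * Complex.I_sq

lemma one_sub_pos (α k : ℝ) (hα : |α| < 1) (hk : |k| ≤ 1) : 0 < 1 - α * k := by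
  have h1 : |α * k| < 1 := by
    rw [abs_mul]
    nlinarith [abs_nonneg α, abs_nonneg k]
  linarith [le_abs_self (α * k)]

lemma Amat_eq (α lam E : ℝ) (hα : |α| < 1) (x : ℝ) :
    Amat α E (α * E + 2 * lam) (pt 0 x) = tMat (potV α lam) x E := by
  have hz : pt 0 x ≠ 0 := by
    rw [← norm_ne_zero_iff, norm_pt]; exact (Real.exp_pos _).ne'
  have hp := one_sub_pos α _ hα (Real.abs_cos_le_one (2 * Real.pi * x))
  have hpC : (1 : ℂ) - (α : ℂ) * (Real.cos (2 * Real.pi * x) : ℂ) ≠ 0 := by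
    exact_mod_cast hp.ne'
  have hs := pt_zero_sq x
  have e1 : pfun α (pt 0 x) = pt 0 x * (1 - (α : ℂ) * (Real.cos (2 * Real.pi * x) : ℂ)) := by
    unfold pfun; rw [hs]; push_cast; ring
  have e2 : efun E (α * E + 2 * lam) (pt 0 x) = pt 0 x *
      ((E : ℂ) - ((α : ℂ) * E + 2 * lam) * (Real.cos (2 * Real.pi * x) : ℂ)) := by
    unfold efun; rw [hs]; push_cast; ring
  unfold Amat tMat potV
  congr 1
  have : efun E (α * E + 2 * lam) (pt 0 x) / pfun α (pt 0 x) = (E : ℂ) -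
      ((2 * lam * Real.cos (2 * Real.pi * x) / (1 - α * Real.cos (2 * Real.pi * x)) : ℝ) : ℂ) := by
    rw [e1, e2, mul_div_mul_left _ _ hz]
    rw [Complex.ofReal_div, Complex.ofReal_sub, Complex.ofReal_mul, Complex.ofReal_mul,
      Complex.ofReal_mul, Complex.ofReal_one, Complex.ofReal_ofNat]
    rw [eq_sub_iff_add_eq, ← add_div, div_eq_iff hpC]
    ring
  rw [this]

lemma tProd_eq (V : ℝ → ℝ) (b : ℝ) (n : ℕ) (x : ℝ) (z : ℂ) :
    tProd V b n x z = Pr (fun j : ℕ => tMat V (x + j * b) z) n := by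
  induction n with
  | zero => simp [tProd, Pr]
  | succ n ih =>
    rw [Pr, ← ih]
    simp [tProd, List.range_succ]

lemma big_aux (α lam E : ℝ) (hα0 : 0 < α) (hα : α < 1) (hlam : lam < 0)
    (hc : 2 < α * E + 2 * lam) :
    ∃ η > 0, ∀ k : ℝ, |k| ≤ 1 → (2 + η) * (1 - α * k) ≤ E - (α * E + 2 * lam) * k := by
  have hE : 2 < E := by
    by_contra hh
    push Not at hh
    nlinarith
  obtain ⟨d, hd, h1, h2⟩ : ∃ d > 0, 2 * d ≤ (1 - α) * (E - 2) - 2 * lam ∧ 2 * d ≤ E - 2 :=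
    ⟨min (-lam) ((E - 2) / 2), lt_min (by linarith) (by linarith),
      by nlinarith [min_le_left (-lam) ((E - 2) / 2), mul_pos (sub_pos.mpr hα) (sub_pos.mpr hE)],
      by linarith [min_le_right (-lam) ((E - 2) / 2)]⟩
  refine ⟨d, hd, fun k hk => ?_⟩
  obtain ⟨hk1, hk2⟩ := abs_le.mp hk
  have a1 : α * -k ≤ 1 := by nlinarith
  have a2 : d * (1 - α * k) ≤ 2 * d := by nlinarith
  have p1 := mul_le_mul_of_nonneg_left h1 (by linarith : 0 ≤ (1 + k) / 2)
  have p2 := mul_le_mul_of_nonneg_left h2 (by linarith : 0 ≤ (1 - k) / 2)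
  have p3 : 0 ≤ (1 - k) / 2 * (α * E + 2 * lam - 2 * α) :=
    mul_nonneg (by linarith) (by linarith)
  nlinarith

lemma big_gap (α lam E : ℝ) (hα : |α| < 1) (hlam : lam < 0) (hc : 2 < α * E + 2 * lam) :
    ∃ η > 0, ∀ x, 2 + η ≤ |E - potV α lam x| := by
  have main : ∃ η > 0, ∀ k : ℝ, |k| ≤ 1 →
      (2 + η) * (1 - α * k) ≤ |E - (α * E + 2 * lam) * k| := by
    obtain ⟨hα1, hα2⟩ := abs_lt.mp hα
    rcases lt_trichotomy α 0 with h | h | h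
    · obtain ⟨η, hη, H⟩ := big_aux (-α) lam (-E) (by linarith) (by linarith) hlam (by linarith)
      refine ⟨η, hη, fun k hk => ?_⟩
      have := H (-k) (by rwa [abs_neg])
      have h2 := neg_le_abs (E - (α * E + 2 * lam) * k)
      linarith
    · subst h; linarith
    · obtain ⟨η, hη, H⟩ := big_aux α lam E h hα2 hlam hc
      exact ⟨η, hη, fun k hk => (H k hk).trans (le_abs_self _)⟩
  obtain ⟨η, hη, H⟩ := main
  refine ⟨η, hη, fun x => ?_⟩
  have hk := Real.abs_cos_le_one (2 * Real.pi * x)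
  have hp := one_sub_pos α _ hα hk
  have h := H _ hk
  unfold potV
  generalize Real.cos (2 * Real.pi * x) = k at *
  have e : E - 2 * lam * k / (1 - α * k) = (E - (α * E + 2 * lam) * k) / (1 - α * k) := by
    have hne := hp.ne'
    rw [eq_div_iff hne, sub_mul, div_mul_cancel₀ _ hne]; ring
  rw [e, abs_div, abs_of_pos hp, le_div_iff₀ hp]
  exact h

theorem main_aux (α lam b θ : ℝ) (hα : |α| < 1) (hb : Irrational b) (hlam : lam < 0)
    (H : lp (fun _ : ℤ => ℂ) 2 →L[ℂ] lp (fun _ : ℤ => ℂ) 2)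
    (hH : IsSchrodingerOp (potV α lam) b θ H) (E : ℝ) (hE : (E : ℂ) ∈ spectrum ℂ H) :
    0 ≤ lyap (potV α lam) b E ∧ (0 < lyap (potV α lam) b E ↔ α * E + 2 * lam < -2) := by
  have hα2 : α ^ 2 < 1 := by rw [← sq_abs]; nlinarith [abs_nonneg α]
  obtain ⟨β, hβ⟩ : ∃ β, β = (1 + Real.sqrt (1 - α ^ 2)) / 2 := ⟨_, rfl⟩
  have hs := Real.sq_sqrt (by linarith : 0 ≤ 1 - α ^ 2)
  have hs0 := Real.sqrt_nonneg (1 - α ^ 2)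
  have hβ2 : 1 / 2 ≤ β := by rw [hβ]; linarith
  have hβα : β * (1 - β) = α ^ 2 / 4 := by rw [hβ]; linear_combination (-1 / 4) * hs
  obtain ⟨M, h1, h2, h3, h4, h5⟩ := exists_mod b α E (α * E + 2 * lam) β hb hα hβ2 hβα
  have hAn : ∀ x n, M.An b 0 x n = tProd (potV α lam) b n x E := by
    intro x n
    rw [tProd_eq, Mod.An, h2, h3, h4]
    congr 1
    ext1 j
    exact Amat_eq α lam E hα _
  have hL : M.L 0 = lyap (potV α lam) b E := by
    unfold Mod.L Mod.I lyap
    rw [h1]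
    simp only [hAn]
    rfl
  rw [← hL]
  refine ⟨M.L_nonneg 0, fun hpos => ?_, fun hc => M.part1 (by rw [h5]; exact hβ2)
    (by rw [h5, h2]; exact hβα) (by rw [h4]; exact hc)⟩
  by_contra hc
  push Not at hc
  rcases lt_or_ge 2 (α * E + 2 * lam) with hc2 | hc2
  · obtain ⟨η, hη, hV⟩ := big_gap α lam E hα hlam hc2
    exact big_spec _ b θ H hH E η hη hV hE
  · obtain ⟨n, -, h8⟩ := M.S5 (by rw [h5]; exact hβ2) (by rw [h5, h2]; exact hβα)
      (by rw [h4, abs_le]; exact ⟨hc, hc2⟩) hpos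
    have h0T : |(0:ℝ)| ≤ M.T := by rw [abs_zero]; exact M.hT.le
    refine hyp_spec _ b θ H hH E M.C M.hC1 (fun x => ?_) n (fun m m' => ?_) hE
    · rw [← Amat_eq α lam E hα x, ← h2, ← h3]
      have := M.hCA 0 x h0T
      rw [h4, ← h2, ← h3] at this
      exact this
    · have hP : ∀ (m : ℤ) (N : ℕ),
          Pr (fun j : ℕ => tMat (potV α lam) (((m + j : ℤ) : ℝ) * b + θ) E) N
            = M.An b 0 (m * b + θ) N := by
        intro m N
        rw [hAn, tProd_eq]
        congr 1
        ext1 j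
        congr 1
        push_cast; ring
      rw [hP, hP]
      have := h8 (m * b + θ) (m' * b + θ)
      rw [h1] at this
      exact this

end GAA

/-- suppose `λ < 0`; then for every `θ` and every `E` in the spectrum of
`H_{α,θ,b}`: `L(E) > 0 ↔ αE < -2(1-|λ|)`, and `L(E) = 0 ↔ αE ≥ -2(1-|λ|)`. -/
theorem lyapunov_dichotomy_neg_coupling (α lam b θ : ℝ) (hα : α ∈ Set.Ioo (-1 : ℝ) 1)
    (hb : Irrational b) (hlam : lam < 0)
    (H : lp (fun _ : ℤ => ℂ) 2 →L[ℂ] lp (fun _ : ℤ => ℂ) 2)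
    (hH : IsSchrodingerOp (potV α lam) b θ H)
    (E : ℝ) (hE : (E : ℂ) ∈ spectrum ℂ H) :
    (0 < lyap (potV α lam) b (E : ℂ) ↔ α * E < -(2 * (1 - |lam|))) ∧
    (lyap (potV α lam) b (E : ℂ) = 0 ↔ -(2 * (1 - |lam|)) ≤ α * E) := by
  obtain ⟨h0, h1⟩ := GAA.main_aux α lam b θ (abs_lt.mpr ⟨hα.1, hα.2⟩) hb hlam H hH E hE
  rw [abs_of_neg hlam]
  refine ⟨?_, ?_⟩
  · rw [h1]
    constructor <;> intro h <;> linarith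
  · constructor
    · intro h
      by_contra hc
      have := h1.mpr (by linarith)
      linarith
    · intro h
      by_contra hc
      have := h1.mp (lt_of_le_of_ne h0 (Ne.symm hc))
      linarith
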